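/- arXiv:2509.12576 — 6 statements merged into one kernel-verified Lean document; each statement's English description precedes it below -/
import Mathlib

section
/- Let R be an analytically unramified one-dimensional Cohen–Macaulay local ring with infinite residue field, and let I be a regular ideal of R. Then the integral closure of I satisfies \bar{I} = I\bar{R} ∩ R, where \bar{R} is the integral closure of R in its total quotient ring. In particular, any regular ideal that is also an ideal of \bar{R} is integrally closed. -/
open IsLocalRing

noncomputable def traceIdeal (R : Type*) [CommRing R] (M : Type*) [AddCommGroup M]
    [Module R M] : Ideal R :=
  ⨆ f : M →ₗ[R] R, LinearMap.range f

def IsCohenMacaulayLocalRing (R : Type*) [CommRing R] [IsLocalRing R] : Prop :=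
  ∃ rs : List R, (∀ r ∈ rs, r ∈ maximalIdeal R) ∧ RingTheory.Sequence.IsRegular R rs ∧
    ringKrullDim R = rs.length

noncomputable def moduleLength (R M : Type*) [CommRing R] [AddCommGroup M] [Module R M] :
    WithBot ℕ∞ :=
  Order.krullDim (Submodule R M)

noncomputable def conductorIdeal (R : Type*) [CommRing R] : Ideal R :=
  Submodule.colon (1 : Submodule R (FractionRing R))
    (Subalgebra.toSubmodule (integralClosure R (FractionRing R)))

def idealIntegralClosure {R : Type*} [CommRing R] (I : Ideal R) : Set R :=
  {x | ∃ n : ℕ, 0 < n ∧ ∃ a : ℕ → R, (∀ i ∈ Finset.Icc 1 n, a i ∈ I ^ i) ∧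
    x ^ n + ∑ i ∈ Finset.Icc 1 n, a i * x ^ (n - i) = 0}

def HasMinimalMultiplicity (R : Type*) [CommRing R] [IsLocalRing R] : Prop :=
  ∃ x : R, (x ∈ maximalIdeal R ∧
      ∃ n : ℕ, maximalIdeal R ^ (n + 1) = Ideal.span {x} * maximalIdeal R ^ n) ∧
    maximalIdeal R ^ 2 = Ideal.span {x} * maximalIdeal R


lemma aux_length {R : Type*} [CommRing R] [IsLocalRing R]
    (y : R) (hy : y ∈ nonZeroDivisors R) (hym : y ∈ maximalIdeal R) (J : Ideal R)
    (hJ : Module.length R (R ⧸ J) ≠ ⊤) :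
    Module.length R (J ⧸ (maximalIdeal R • ⊤ : Submodule R J)) ≤
      Module.length R (R ⧸ Ideal.span {y}) := by
  have hB : Module.length R (R ⧸ (Ideal.span {y} * J)) =
      Module.length R (R ⧸ J) + Module.length R (R ⧸ Ideal.span {y}) := by
    have h1 : J ≤ Submodule.comap (LinearMap.lsmul R R y) (Ideal.span {y} * J) := by
      intro z hz
      simp only [Submodule.mem_comap, LinearMap.lsmul_apply, smul_eq_mul]
      exact Ideal.mul_mem_mul (Ideal.mem_span_singleton_self y) hz
    have h2 : (Ideal.span {y} * J) ≤ Submodule.comap LinearMap.id (Ideal.span {y}) :=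
      Ideal.mul_le_left
    refine Module.length_eq_add_of_exact (Submodule.mapQ _ _ (LinearMap.lsmul R R y) h1)
      (Submodule.mapQ _ _ LinearMap.id h2) ?_ ?_ ?_
    · rw [← LinearMap.ker_eq_bot, Submodule.eq_bot_iff]
      intro z hz
      obtain ⟨z, rfl⟩ := Submodule.Quotient.mk_surjective _ z
      rw [LinearMap.mem_ker, Submodule.mapQ_apply, Submodule.Quotient.mk_eq_zero] at hz
      rw [LinearMap.lsmul_apply, smul_eq_mul, Ideal.mem_span_singleton_mul] at hz
      obtain ⟨w, hw, e⟩ := hz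
      rw [Submodule.Quotient.mk_eq_zero]
      rw [mul_cancel_left_mem_nonZeroDivisors hy] at e
      exact e ▸ hw
    · intro z
      obtain ⟨z, rfl⟩ := Submodule.Quotient.mk_surjective _ z
      exact ⟨Submodule.Quotient.mk z, by simp⟩
    · intro z
      obtain ⟨z, rfl⟩ := Submodule.Quotient.mk_surjective _ z
      rw [Submodule.mapQ_apply, Submodule.Quotient.mk_eq_zero, LinearMap.id_apply,
        Ideal.mem_span_singleton]
      constructor
      · rintro ⟨w, rfl⟩
        exact ⟨Submodule.Quotient.mk w, rfl⟩
      · rintro ⟨w, hw⟩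
        obtain ⟨w, rfl⟩ := Submodule.Quotient.mk_surjective _ w
        rw [Submodule.mapQ_apply, Submodule.Quotient.eq, Ideal.mem_span_singleton_mul] at hw
        obtain ⟨v, -, e⟩ := hw
        refine ⟨w - v, ?_⟩
        simp only [LinearMap.lsmul_apply, smul_eq_mul] at e
        linear_combination e
  have hA : Module.length R (R ⧸ (maximalIdeal R * J)) =
      Module.length R (J ⧸ (maximalIdeal R • ⊤ : Submodule R J)) + Module.length R (R ⧸ J) := by
    have h0 : (maximalIdeal R • ⊤ : Submodule R J) =
        Submodule.comap J.subtype (maximalIdeal R * J) := by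
      have : (maximalIdeal R * J) = Submodule.map J.subtype (maximalIdeal R • ⊤ : Submodule R J) := by
        rw [Submodule.map_smul'', Submodule.map_top, Submodule.range_subtype, smul_eq_mul]
      rw [this, Submodule.comap_map_eq_of_injective (Submodule.subtype_injective _)]
    have h2 : (maximalIdeal R * J) ≤ Submodule.comap LinearMap.id J := Ideal.mul_le_right
    refine Module.length_eq_add_of_exact (Submodule.mapQ _ _ J.subtype h0.le)
      (Submodule.mapQ _ _ LinearMap.id h2) ?_ ?_ ?_
    · rw [← LinearMap.ker_eq_bot, Submodule.eq_bot_iff]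
      intro z hz
      obtain ⟨z, rfl⟩ := Submodule.Quotient.mk_surjective _ z
      rw [LinearMap.mem_ker, Submodule.mapQ_apply, Submodule.Quotient.mk_eq_zero] at hz
      rw [Submodule.Quotient.mk_eq_zero, h0]
      exact hz
    · intro z
      obtain ⟨z, rfl⟩ := Submodule.Quotient.mk_surjective _ z
      exact ⟨Submodule.Quotient.mk z, by simp⟩
    · intro z
      obtain ⟨z, rfl⟩ := Submodule.Quotient.mk_surjective _ z
      rw [Submodule.mapQ_apply, Submodule.Quotient.mk_eq_zero, LinearMap.id_apply]
      constructor
      · intro hz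
        exact ⟨Submodule.Quotient.mk ⟨z, hz⟩, by simp⟩
      · rintro ⟨w, hw⟩
        obtain ⟨w, rfl⟩ := Submodule.Quotient.mk_surjective _ w
        rw [Submodule.mapQ_apply, Submodule.Quotient.eq] at hw
        have := Ideal.mul_le_right hw
        simpa using (Submodule.sub_mem_iff_right _ w.2).1 this
  have hle : Ideal.span {y} * J ≤ maximalIdeal R * J :=
    Ideal.mul_mono_left ((Ideal.span_singleton_le_iff_mem _).2 hym)
  have hC : Module.length R (R ⧸ (maximalIdeal R * J)) ≤
      Module.length R (R ⧸ (Ideal.span {y} * J)) := by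
    refine Module.length_le_of_surjective (Submodule.factor hle) (Submodule.factor_surjective hle)
  rw [hA, hB, add_comm] at hC
  exact (ENat.add_le_add_iff_left hJ).1 hC

lemma aux_finite {R : Type*} [CommRing R] [IsNoetherianRing R]
    (hdim : ringKrullDim R = 1) (b : R) (hb : b ∈ nonZeroDivisors R) (J : Ideal R) (hJ : b ∈ J) :
    Module.length R (R ⧸ J) ≠ ⊤ := by
  have h1 := ringKrullDim_quotient_succ_le_of_nonZeroDivisor hb
  rw [hdim] at h1
  have h2 : ringKrullDim (R ⧸ Ideal.span {b}) ≤ 0 := by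
    generalize ringKrullDim (R ⧸ Ideal.span {b}) = d at h1
    induction d with
    | bot => simp
    | coe d =>
      induction d with
      | top => exact absurd h1 (by decide)
      | coe d =>
        norm_cast at h1 ⊢
        have : d = 0 := by
          have : d + 1 ≤ 1 := by exact_mod_cast h1
          omega
        subst this; simp
  have h3 : IsArtinianRing (R ⧸ Ideal.span {b}) := by
    rw [isArtinianRing_iff_krullDimLE_zero, Ring.KrullDimLE, Order.krullDimLE_iff]
    exact_mod_cast h2
  have h4 : IsArtinian R (R ⧸ Ideal.span {b}) :=
    isArtinian_of_surjective_algebraMap (R := R ⧸ Ideal.span {b}) Ideal.Quotient.mk_surjective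
  have hle : Ideal.span {b} ≤ J := (Ideal.span_singleton_le_iff_mem _).2 hJ
  have h5 : IsArtinian R (R ⧸ J) := 
    isArtinian_of_surjective _ (Submodule.factor hle) (Submodule.factor_surjective hle)
  exact Module.length_ne_top

lemma aux_relation {R : Type*} [CommRing R] [IsNoetherianRing R] [IsLocalRing R]
    (hdim : ringKrullDim R = 1)
    (y : R) (hy : y ∈ nonZeroDivisors R) (hym : y ∈ maximalIdeal R)
    (a b : R) (hb : b ∈ nonZeroDivisors R) :
    ∃ (n : ℕ) (c : Fin (n+1) → R), (∃ i, IsUnit (c i)) ∧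
      ∑ i, c i * (a ^ (i : ℕ) * b ^ (n - i)) = 0 := by
  have hfin := aux_finite hdim y hy _ (Ideal.mem_span_singleton_self y)
  obtain ⟨n, hn⟩ := ENat.ne_top_iff_exists.1 hfin
  let g : Fin (n+1) → R := fun i => a ^ (i : ℕ) * b ^ (n - i)
  let J : Ideal R := Ideal.span (Set.range g)
  have hgJ : ∀ i, g i ∈ J := fun i => Ideal.subset_span ⟨i, rfl⟩
  have hbJ : b ^ n ∈ J := by simpa [g] using hgJ 0
  have hlen := aux_length y hy hym J (aux_finite hdim _ (pow_mem hb n) _ hbJ)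
  let V := J ⧸ (maximalIdeal R • ⊤ : Submodule R J)
  let : Field (R ⧸ maximalIdeal R) := Ideal.Quotient.field _
  have : Module.Finite (R ⧸ maximalIdeal R) V := Module.Finite.of_restrictScalars_finite R _ _
  rw [← hn, Module.length_eq_of_surjective (R := R ⧸ maximalIdeal R) (M := V)
    Ideal.Quotient.mk_surjective, Module.length_eq_finrank] at hlen
  have hlen' : Module.finrank (R ⧸ maximalIdeal R) V ≤ n := by exact_mod_cast hlen
  let v : Fin (n+1) → V := fun i => Submodule.Quotient.mk ⟨g i, hgJ i⟩
  have hv : ¬ LinearIndependent (R ⧸ maximalIdeal R) v := by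
    intro h
    have := h.fintype_card_le_finrank
    simp at this
    omega
  obtain ⟨c, hc, i, hi⟩ := Fintype.not_linearIndependent_iff.1 hv
  choose d hd using fun i => Ideal.Quotient.mk_surjective (c i)
  have h1 : ∑ i, d i • (⟨g i, hgJ i⟩ : J) ∈ (maximalIdeal R • ⊤ : Submodule R J) := by
    rw [← Submodule.Quotient.mk_eq_zero, ← hc, ← Submodule.mkQ_apply, map_sum]
    refine Finset.sum_congr rfl fun i _ => ?_
    rw [map_smul, ← hd i]
    exact (algebraMap_smul (R ⧸ maximalIdeal R) (d i) (v i)).symm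
  have h2 : ∑ i, d i * g i ∈ maximalIdeal R * J := by
    have : (maximalIdeal R * J) = Submodule.map J.subtype (maximalIdeal R • ⊤ : Submodule R J) := by
        rw [Submodule.map_smul'', Submodule.map_top, Submodule.range_subtype, smul_eq_mul]
    rw [this]
    exact ⟨_, h1, by simp⟩
  rw [← smul_eq_mul (maximalIdeal R), Submodule.mem_ideal_smul_span_iff_exists_sum] at h2
  obtain ⟨e, he, hs⟩ := h2
  refine ⟨n, fun i => d i - e i, ⟨i, ?_⟩, ?_⟩
  · have hdi : IsUnit (d i) := by
      by_contra hcon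
      exact hi (by rw [← hd]; exact Ideal.Quotient.eq_zero_iff_mem.2 hcon)
    by_contra hcon
    have h3 : d i - e i ∈ maximalIdeal R := hcon
    exact (mem_maximalIdeal _).1 ((Submodule.sub_mem_iff_left _ (he i)).1 h3) hdi
  · rw [Finsupp.sum_fintype _ _ (by simp)] at hs
    simp only [sub_mul, Finset.sum_sub_distrib]
    rw [sub_eq_zero]
    exact hs.symm

open Polynomial in
lemma aux_inv {R K : Type*} [CommRing R] [Nontrivial R] [CommRing K] [Algebra R K]
    (g : R[X]) (h0 : IsUnit (g.coeff 0)) (v : K) (hv : aeval v g = 0) :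
    ∃ s : K, v * s = 1 ∧ IsIntegral R s := by
  obtain ⟨h, hh⟩ := X_dvd_sub_C (p := g)
  obtain ⟨w, hw⟩ := h0.exists_left_inv
  have e : v * aeval v h = - algebraMap R K (g.coeff 0) := by
    have := congrArg (aeval v) hh
    simp only [map_sub, hv, aeval_C, map_mul, aeval_X] at this
    rw [← this]; ring
  have hw' : algebraMap R K w * algebraMap R K (g.coeff 0) = 1 := by
    rw [← map_mul, hw, map_one]
  have hs : v * (- algebraMap R K w * aeval v h) = 1 := by
    linear_combination (- algebraMap R K w) * e + hw'
  refine ⟨_, hs, ?_⟩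
  generalize (- algebraMap R K w * aeval v h) = s at hs
  let : Invertible v := ⟨s, by rw [mul_comm, hs], hs⟩
  have hs' : ⅟ v = s := rfl
  have h1 : eval₂ (algebraMap R K) (⅟ v) g.reverse = 0 := 
    (eval₂_reverse_eq_zero_iff _ _ _).2 hv
  have h2 : g.reverse.leadingCoeff = g.coeff 0 := by
    rw [reverse_leadingCoeff, trailingCoeff_eq_coeff_zero h0.ne_zero]
  refine ⟨C w * g.reverse, ?_, ?_⟩
  · rw [Monic, leadingCoeff_C_mul_of_isUnit, h2, hw]
    exact IsUnit.of_mul_eq_one _ hw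
  · rw [eval₂_mul, ← hs', h1, mul_zero]

open Polynomial in
lemma aux_two {R K : Type*} [CommRing R] [IsNoetherianRing R] [IsLocalRing R]
    [CommRing K] [Algebra R K] [IsFractionRing R K]
    (hdim : ringKrullDim R = 1) (hk : Infinite (ResidueField R))
    (y : R) (hy : y ∈ nonZeroDivisors R) (hym : y ∈ maximalIdeal R)
    (a b : R) (hb : b ∈ nonZeroDivisors R) :
    ∃ u : R, (a - u * b) ∈ nonZeroDivisors R ∧
      (∃ w : K, IsIntegral R w ∧ algebraMap R K b = algebraMap R K (a - u * b) * w) ∧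
      (∃ w : K, IsIntegral R w ∧ algebraMap R K a = algebraMap R K (a - u * b) * w) := by
  obtain ⟨n, c, ⟨j, hj⟩, hc⟩ := aux_relation hdim y hy hym a b hb
  have hbu : IsUnit (algebraMap R K b) := IsLocalization.map_units K ⟨b, hb⟩
  obtain ⟨β, hβ⟩ := hbu.exists_right_inv
  set t : K := algebraMap R K a * β with ht
  let f : R[X] := ∑ i : Fin (n+1), C (c i) * X ^ (i : ℕ)
  have hcoeff : f.coeff j = c j := by
    simp only [f, finsetSum_coeff, coeff_C_mul, coeff_X_pow]
    rw [Finset.sum_eq_single j]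
    · simp
    · intro i _ hij
      rw [if_neg, mul_zero]
      exact fun h => hij (Fin.ext h.symm)
    · simp
  have hft : aeval t f = 0 := by
    have h1 := congrArg (fun z => algebraMap R K z * β ^ n) hc
    simp only [map_sum, map_zero, zero_mul, Finset.sum_mul] at h1
    simp only [f, map_sum, map_mul, aeval_C, map_pow, aeval_X]
    rw [← h1]
    refine Finset.sum_congr rfl fun i _ => ?_
    have hi : n = i + (n - i) := by have := i.2; omega
    have : (algebraMap R K b) ^ (n - (i:ℕ)) * β ^ (n - (i:ℕ)) = 1 := by
      rw [← mul_pow, hβ, one_pow]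
    have h3 : β ^ n = β ^ (i : ℕ) * β ^ (n - (i:ℕ)) := by rw [← pow_add, ← hi]
    rw [h3, ht, mul_pow]
    simp only [map_mul, map_pow]
    linear_combination (-(algebraMap R K (c i) * algebraMap R K a ^ (i:ℕ) * β ^ (i:ℕ))) * this
  have hf0 : f.map (residue R) ≠ 0 := by
    intro h
    have := congrArg (fun p => p.coeff j) h
    simp only [coeff_map, hcoeff, coeff_zero] at this
    exact (residue_ne_zero_iff_isUnit _).2 hj this
  obtain ⟨ū, hū⟩ : ∃ r, (f.map (residue R)).eval r ≠ 0 := by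
    by_contra! h
    exact hf0 (Polynomial.funext (by simpa using h))
  obtain ⟨u, rfl⟩ := residue_surjective ū
  have hfu : IsUnit (f.eval u) := by
    rw [← residue_ne_zero_iff_isUnit]
    rwa [eval_map, eval₂_hom] at hū
  obtain ⟨s, hs, hsi⟩ := aux_inv (K := K) (f.comp (X + C u))
    (by rw [coeff_zero_eq_eval_zero, eval_comp]; simpa using hfu) (t - algebraMap R K u)
    (by rw [aeval_comp]; simpa using hft)
  have hab : algebraMap R K (a - u * b) = algebraMap R K b * (t - algebraMap R K u) := by
    rw [map_sub, map_mul, ht]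
    linear_combination (-(algebraMap R K a)) * hβ
  refine ⟨u, ?_, ⟨s, hsi, ?_⟩, ⟨1 + algebraMap R K u * s,
    isIntegral_one.add (isIntegral_algebraMap.mul hsi), ?_⟩⟩
  · have hu : IsUnit (algebraMap R K (a - u * b)) := by
      rw [hab]; exact hbu.mul (IsUnit.of_mul_eq_one _ hs)
    refine mem_nonZeroDivisors_of_injective (IsFractionRing.injective R K) ?_
    exact hu.mem_nonZeroDivisors
  · rw [hab]; linear_combination (-(algebraMap R K b)) * hs
  · rw [hab]
    have : algebraMap R K a = algebraMap R K b * t := by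
      rw [ht]; linear_combination (-(algebraMap R K a)) * hβ
    rw [this]
    linear_combination (-(algebraMap R K b * algebraMap R K u)) * hs

lemma aux_fin {R K : Type*} [CommRing R] [IsNoetherianRing R] [IsLocalRing R]
    [CommRing K] [Algebra R K] [IsFractionRing R K]
    (hdim : ringKrullDim R = 1) (hk : Infinite (ResidueField R))
    (y : R) (hy : y ∈ nonZeroDivisors R) (hym : y ∈ maximalIdeal R)
    (I : Ideal R) (b : R) (hbI : b ∈ I) (hb : b ∈ nonZeroDivisors R) (s : Finset R)
    (hs : (s : Set R) ⊆ I) :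
    ∃ a ∈ I, a ∈ nonZeroDivisors R ∧
      ∀ z ∈ s, ∃ w : K, IsIntegral R w ∧ algebraMap R K z = algebraMap R K a * w := by
  classical
  induction s using Finset.induction_on with
  | empty => exact ⟨b, hbI, hb, by simp⟩
  | insert z s hz ih =>
    rw [Finset.coe_insert, Set.insert_subset_iff] at hs
    obtain ⟨a, haI, ha, h⟩ := ih hs.2
    obtain ⟨u, hu, ⟨w, hw, hwe⟩, hz'⟩ := aux_two (K := K) hdim hk y hy hym z a ha
    refine ⟨z - u * a, I.sub_mem hs.1 (I.mul_mem_left _ haI), hu, ?_⟩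
    intro x hx
    rcases Finset.mem_insert.1 hx with rfl | hx
    · exact hz'
    · obtain ⟨w', hw', e⟩ := h x hx
      exact ⟨w * w', hw.mul hw', by rw [e, hwe, mul_assoc]⟩

lemma aux_principal {R K : Type*} [CommRing R] [IsNoetherianRing R] [IsLocalRing R]
    [CommRing K] [Algebra R K] [IsFractionRing R K]
    (hdim : ringKrullDim R = 1) (hk : Infinite (ResidueField R))
    (y : R) (hy : y ∈ nonZeroDivisors R) (hym : y ∈ maximalIdeal R)
    (I : Ideal R) (b : R) (hbI : b ∈ I) (hb : b ∈ nonZeroDivisors R) :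
    ∃ a ∈ I, a ∈ nonZeroDivisors R ∧ ∀ i, ∀ z ∈ I ^ i, ∃ w : K, IsIntegral R w ∧
      algebraMap R K z = algebraMap R K a ^ i * w := by
  obtain ⟨s, hs⟩ := IsNoetherian.noetherian I
  obtain ⟨a, haI, ha, h⟩ := aux_fin (K := K) hdim hk y hy hym I b hbI hb s
    (hs ▸ Submodule.subset_span)
  have h1 : ∀ z ∈ I, ∃ w : K, IsIntegral R w ∧ algebraMap R K z = algebraMap R K a * w := by
    intro z hz
    rw [← hs] at hz
    induction hz using Submodule.span_induction with
    | mem x hx => exact h x hx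
    | zero => exact ⟨0, isIntegral_zero, by simp⟩
    | add x x' _ _ hx hx' =>
      obtain ⟨w, hw, e⟩ := hx
      obtain ⟨w', hw', e'⟩ := hx'
      exact ⟨w + w', hw.add hw', by rw [map_add, e, e', mul_add]⟩
    | smul r x _ hx =>
      obtain ⟨w, hw, e⟩ := hx
      exact ⟨algebraMap R K r * w, isIntegral_algebraMap.mul hw, by
        rw [smul_eq_mul, map_mul, e]; ring⟩
  refine ⟨a, haI, ha, fun i => ?_⟩
  induction i with
  | zero => exact fun z _ => ⟨algebraMap R K z, isIntegral_algebraMap, by simp⟩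
  | succ i ih =>
    intro z hz
    rw [pow_succ] at hz
    induction hz using Submodule.mul_induction_on' with
    | mem_mul_mem m hm n hn =>
      obtain ⟨w, hw, e⟩ := ih m hm
      obtain ⟨w', hw', e'⟩ := h1 n hn
      exact ⟨w * w', hw.mul hw', by rw [map_mul, e, e']; ring⟩
    | add x _ x' _ hx hx' =>
      obtain ⟨w, hw, e⟩ := hx
      obtain ⟨w', hw', e'⟩ := hx'
      exact ⟨w + w', hw.add hw', by rw [map_add, e, e', mul_add]⟩

open Polynomial in
lemma aux_integral {R K : Type*} [CommRing R] [CommRing K] [Algebra R K] (t : K)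
    (n : ℕ) (r : ℕ → K) (hr : ∀ i, IsIntegral R (r i))
    (h : t ^ n + ∑ i ∈ Finset.Icc 1 n, r i * t ^ (n - i) = 0) : IsIntegral R t := by
  refine isIntegral_trans (A := integralClosure R K) t ?_
  rcases Nat.eq_zero_or_pos n with rfl | hn
  · simp only [pow_zero, Finset.Icc_eq_empty_of_lt zero_lt_one, Finset.sum_empty, add_zero] at h
    have : Subsingleton K := subsingleton_of_zero_eq_one h.symm
    rw [Subsingleton.elim t 0]; exact isIntegral_zero
  refine ⟨X ^ n + ∑ i ∈ Finset.Icc 1 n, C (⟨r i, hr i⟩ : integralClosure R K) * X ^ (n - i),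
    monic_X_pow_add ?_, ?_⟩
  · rw [degree_lt_iff_coeff_zero]
    intro m hm
    rw [finsetSum_coeff]
    refine Finset.sum_eq_zero fun i hi => ?_
    rw [Finset.mem_Icc] at hi
    rw [coeff_C_mul_X_pow, if_neg (by omega)]
  · simp only [eval₂_add, eval₂_pow, eval₂_X, eval₂_finsetSum, eval₂_mul, eval₂_C]
    exact h

lemma aux_sub {R K : Type*} [CommRing R] [CommRing K] [Algebra R K] [IsFractionRing R K]
    (I : Ideal R) (a : R) (haI : a ∈ I) (ha : a ∈ nonZeroDivisors R)
    (h : ∀ i, ∀ z ∈ I ^ i, ∃ w : K, IsIntegral R w ∧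
      algebraMap R K z = algebraMap R K a ^ i * w)
    (x : R) (n : ℕ) (c : ℕ → R) (hc : ∀ i ∈ Finset.Icc 1 n, c i ∈ I ^ i)
    (hx : x ^ n + ∑ i ∈ Finset.Icc 1 n, c i * x ^ (n - i) = 0) :
    ∃ w : K, IsIntegral R w ∧ algebraMap R K x = algebraMap R K a * w := by
  have hau : IsUnit (algebraMap R K a) := IsLocalization.map_units K ⟨a, ha⟩
  obtain ⟨β, hβ⟩ := hau.exists_right_inv
  refine ⟨algebraMap R K x * β, ?_, by linear_combination (-(algebraMap R K x)) * hβ⟩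
  have h' : ∀ i, ∃ w : K, IsIntegral R w ∧ (i ∈ Finset.Icc 1 n →
      algebraMap R K (c i) = algebraMap R K a ^ i * w) := by
    intro i
    by_cases hi : i ∈ Finset.Icc 1 n
    · obtain ⟨w, hw, e⟩ := h i _ (hc i hi)
      exact ⟨w, hw, fun _ => e⟩
    · exact ⟨0, isIntegral_zero, fun h => absurd h hi⟩
  choose r hr hre using h'
  refine aux_integral _ n r hr ?_
  have h1 := congrArg (fun z => algebraMap R K z * β ^ n) hx
  simp only [map_add, map_sum, map_zero, zero_mul, add_mul, Finset.sum_mul, map_mul, map_pow] at h1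
  rw [← h1, mul_pow]
  congr 1
  refine Finset.sum_congr rfl fun i hi => ?_
  rw [hre i hi]
  have hi' : n = i + (n - i) := by have := (Finset.mem_Icc.1 hi).2; omega
  have h3 : β ^ n = β ^ (i : ℕ) * β ^ (n - (i:ℕ)) := by rw [← pow_add, ← hi']
  have h4 : algebraMap R K a ^ i * β ^ i = 1 := by rw [← mul_pow, hβ, one_pow]
  rw [h3, mul_pow]
  linear_combination (-(r i * algebraMap R K x ^ (n - i) * β ^ (n - i))) * h4

lemma aux_super {R K : Type*} [CommRing R] [Nontrivial R]
    [CommRing K] [Algebra R K] [IsFractionRing R K]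
    (I : Ideal R) (x : R)
    (hx : algebraMap R K x ∈ Submodule.map (Algebra.linearMap R K) I *
            Subalgebra.toSubmodule (integralClosure R K)) :
    ∃ n : ℕ, 0 < n ∧ ∃ a : ℕ → R, (∀ i ∈ Finset.Icc 1 n, a i ∈ I ^ i) ∧
    x ^ n + ∑ i ∈ Finset.Icc 1 n, a i * x ^ (n - i) = 0 := by
  have h1 : ∀ z ∈ Submodule.map (Algebra.linearMap R K) I *
            Subalgebra.toSubmodule (integralClosure R K),
      ∃ w ∈ I.map (algebraMap R (integralClosure R K)), (w : K) = z := by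
    intro z hz
    induction hz using Submodule.mul_induction_on' with
    | mem_mul_mem m hm n hn =>
      obtain ⟨m, hm, rfl⟩ := hm
      exact ⟨algebraMap R _ m * ⟨n, hn⟩,
        Ideal.mul_mem_right _ _ (Ideal.mem_map_of_mem _ hm), rfl⟩
    | add z _ z' _ hz hz' =>
      obtain ⟨w, hw, rfl⟩ := hz
      obtain ⟨w', hw', rfl⟩ := hz'
      exact ⟨w + w', add_mem hw hw', rfl⟩
  obtain ⟨w, hw, e⟩ := h1 _ hx
  obtain ⟨p, hp, hpw, hpc⟩ := Polynomial.exists_monic_aeval_eq_zero_forall_mem_pow_of_mem_map hw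
  have hw' : w = algebraMap R (integralClosure R K) x := Subtype.ext e
  have hpx : p.eval x = 0 := by
    apply IsFractionRing.injective R K
    rw [map_zero, ← Polynomial.aeval_algebraMap_apply_eq_algebraMap_eval, ← e]
    have := congrArg (integralClosure R K).val hpw
    rw [← Polynomial.aeval_algHom_apply] at this
    simpa using this
  have hd : 0 < p.natDegree := by
    rcases Nat.eq_zero_or_pos p.natDegree with h | h
    · rw [hp.natDegree_eq_zero.1 h] at hpx
      simp at hpx
    · exact h
  refine ⟨p.natDegree, hd, fun i => p.coeff (p.natDegree - i), ?_, ?_⟩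
  · intro i hi
    have := hpc (p.natDegree - i)
    rwa [Nat.sub_sub_self (Finset.mem_Icc.1 hi).2] at this
  · rw [Polynomial.eval_eq_sum_range, Finset.sum_range_succ, hp.coeff_natDegree, one_mul,
      add_comm] at hpx
    rw [← hpx]
    congr 1
    refine Finset.sum_bij' (fun i _ => p.natDegree - i) (fun i _ => p.natDegree - i) ?_ ?_ ?_ ?_ ?_
    · intro i hi; simp at hi ⊢; omega
    · intro i hi; simp at hi ⊢; omega
    · intro i hi; simp at hi ⊢; omega
    · intro i hi; simp at hi ⊢; omega
    · intro i hi; rfl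

set_option synthInstance.maxHeartbeats 800000 in
/-- Let `R` be an analytically unramified one-dimensional Cohen–Macaulay
local ring with infinite residue field, and `I` a regular ideal.  Then the integral closure
of `I` satisfies `Ī = I·R̄ ∩ R` (computed in the total quotient ring `Q`), where `R̄` is the
integral closure of `R` in `Q`.  In particular, any regular ideal that is also an ideal of
`R̄` (i.e. `I·R̄ = I·R` inside `Q`) is integrally closed. -/
theorem idealIntegralClosure_eq_inter
    (R : Type*) [CommRing R] [IsNoetherianRing R] [IsLocalRing R]
    (hur : IsReduced (AdicCompletion (maximalIdeal R) R))
    (hdim : ringKrullDim R = 1) (hCM : IsCohenMacaulayLocalRing R)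
    (hk : Infinite (ResidueField R))
    (I : Ideal R) (hreg : ∃ x ∈ I, x ∈ nonZeroDivisors R) :
    idealIntegralClosure I =
      algebraMap R (FractionRing R) ⁻¹'
        ((Submodule.map (Algebra.linearMap R (FractionRing R)) I *
            Subalgebra.toSubmodule (integralClosure R (FractionRing R)) :
          Submodule R (FractionRing R)) : Set (FractionRing R)) ∧
    ((Submodule.map (Algebra.linearMap R (FractionRing R)) I *
          Subalgebra.toSubmodule (integralClosure R (FractionRing R)) =
        Submodule.map (Algebra.linearMap R (FractionRing R)) I) →
      idealIntegralClosure I = (I : Set R)) := by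
  obtain ⟨b, hbI, hb⟩ := hreg
  obtain ⟨y, hym, hy⟩ : ∃ y ∈ maximalIdeal R, y ∈ nonZeroDivisors R := by
    obtain ⟨rs, hrm, hrs, hl⟩ := hCM
    rw [hdim] at hl
    have hl' : rs.length = 1 := by exact_mod_cast hl.symm
    obtain ⟨y, rfl⟩ := List.length_eq_one_iff.1 hl'
    refine ⟨y, hrm y (by simp), ?_⟩
    have h1 := hrs.toIsWeaklyRegular
    rw [RingTheory.Sequence.isWeaklyRegular_cons_iff] at h1
    have h2 : IsSMulRegular R y := h1.1
    rw [mem_nonZeroDivisors_iff_right]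
    intro z hz
    apply h2
    simp only [smul_eq_mul, mul_zero]
    rw [mul_comm, hz]
  have main : idealIntegralClosure I =
      algebraMap R (FractionRing R) ⁻¹'
        ((Submodule.map (Algebra.linearMap R (FractionRing R)) I *
            Subalgebra.toSubmodule (integralClosure R (FractionRing R)) :
          Submodule R (FractionRing R)) : Set (FractionRing R)) := by
    obtain ⟨a, haI, ha, h⟩ := aux_principal (K := FractionRing R) hdim hk y hy hym I b hbI hb
    ext x
    constructor
    · rintro ⟨n, -, c, hc, hx⟩
      obtain ⟨w, hw, e⟩ := aux_sub I a haI ha h x n c hc hx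
      rw [Set.mem_preimage, e]
      exact Submodule.mul_mem_mul ⟨a, haI, rfl⟩ hw
    · intro hx
      exact aux_super I x hx
  refine ⟨main, fun h => ?_⟩
  rw [main, h]
  ext x
  constructor
  · rintro ⟨z, hz, e⟩
    rw [← IsFractionRing.injective R (FractionRing R) e]
    exact hz
  · intro hx
    exact ⟨x, hx, rfl⟩
end

section
/- Let R be an analytically unramified one-dimensional Cohen–Macaulay local ring with conductor ideal C = R : \bar{R} and infinite residue field. Then every integrally closed ideal of R containing C is a reflexive trace ideal. -/
open IsLocalRing

open nonZeroDivisors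


lemma aux_saturate {S : Type*} [CommRing S] (x s : S)
    (hhaus : ∀ z : S, (∀ n : ℕ, x ^ n ∣ z) → z = 0)
    (hcomp : ∀ f : ℕ → S, (∀ n, x ^ n ∣ f (n + 1) - f n) → ∃ L, ∀ n, x ^ n ∣ L - f n)
    [IsArtinianRing (S ⧸ Ideal.span {x})] :
    ∃ m a : ℕ, s ^ (m + 1) ∣ x ^ a * s ^ m := by
  let A : ℕ → Ideal S := fun m =>
    { carrier := {u | ∃ a : ℕ, s ^ m ∣ x ^ a * u}
      add_mem' := by
        rintro u v ⟨a, ha⟩ ⟨b, hb⟩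
        refine ⟨a + b, ?_⟩
        have : x ^ (a + b) * (u + v) = x ^ b * (x ^ a * u) + x ^ a * (x ^ b * v) := by ring
        rw [this]
        exact dvd_add (ha.mul_left _) (hb.mul_left _)
      zero_mem' := ⟨0, by simp⟩
      smul_mem' := by
        rintro c u ⟨a, ha⟩
        refine ⟨a, ?_⟩
        have : x ^ a * (c • u) = c * (x ^ a * u) := by simp only [smul_eq_mul]; ring
        rw [this]
        exact ha.mul_left _ }
  have hA : ∀ m u, u ∈ A m ↔ ∃ a : ℕ, s ^ m ∣ x ^ a * u := fun m u => Iff.rfl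
  have hAanti : ∀ m n, m ≤ n → A n ≤ A m := by
    intro m n h u hu
    rw [hA] at hu ⊢
    obtain ⟨a, ha⟩ := hu
    exact ⟨a, (pow_dvd_pow s h).trans ha⟩
  let Q := S ⧸ Ideal.span {x}
  let q : S →+* Q := Ideal.Quotient.mk _
  have hq : Function.Surjective q := Ideal.Quotient.mk_surjective
  let F : ℕ →o (Submodule Q Q)ᵒᵈ :=
    ⟨fun m => OrderDual.toDual ((A m).map q), fun m n h => Ideal.map_mono (hAanti m n h)⟩
  obtain ⟨m, hm⟩ := IsArtinian.monotone_stabilizes F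
  have hm' : (A m).map q = (A (m + 1)).map q := OrderDual.toDual.injective (hm (m + 1) (by omega))
  obtain ⟨k, g, hg⟩ := Submodule.fg_iff_exists_fin_generating_family.mp
    (IsNoetherian.noetherian ((A (m + 1)).map q))
  have hg1 : ∀ i, ∃ u ∈ A (m + 1), q u = g i := by
    intro i
    apply (Ideal.mem_map_iff_of_surjective q hq).mp
    rw [← hg]
    exact Submodule.subset_span ⟨i, rfl⟩
  choose u hu hug using hg1
  have key : ∀ z : A m, ∃ c : Fin k → S, ∃ z' : A m, (z : S) = ∑ i, c i * u i + x * z' := by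
    intro z
    have h1 : q z ∈ (A (m + 1)).map q := hm' ▸ Ideal.mem_map_of_mem q z.2
    rw [← hg, Submodule.mem_span_range_iff_exists_fun] at h1
    obtain ⟨c, hc⟩ := h1
    choose c' hc' using fun i => hq (c i)
    have h2 : q (z - ∑ i, c' i * u i) = 0 := by
      rw [map_sub, map_sum, ← hc]
      simp [hc', hug]
    rw [Ideal.Quotient.eq_zero_iff_mem, Ideal.mem_span_singleton] at h2
    obtain ⟨z', hz'⟩ := h2
    have h3 : x * z' ∈ A m := by
      rw [← hz']
      exact (A m).sub_mem z.2 ((A m).sum_mem fun i _ => (A m).mul_mem_left _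
        (hAanti m (m + 1) (by omega) (hu i)))
    refine ⟨c', ⟨z', ?_⟩, ?_⟩
    · rw [hA] at h3 ⊢
      obtain ⟨a, ha⟩ := h3
      exact ⟨a + 1, by rwa [pow_succ, mul_assoc]⟩
    · simp only [← hz']; ring
  choose c z' hz using key
  have hs0 : s ^ m ∈ A m := (hA _ _).mpr ⟨0, by simp⟩
  let Z : ℕ → A m := fun n => Nat.rec ⟨s ^ m, hs0⟩ (fun _ z => z' z) n
  have hZ : ∀ n, Z (n + 1) = z' (Z n) := fun n => rfl
  let P : ℕ → Fin k → S := fun n i => ∑ l ∈ Finset.range n, x ^ l * c (Z l) i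
  have hP : ∀ n, s ^ m = ∑ i, P n i * u i + x ^ n * (Z n).1 := by
    intro n
    induction n with
    | zero => simp [P, Z]
    | succ n ih =>
      rw [ih, hZ]
      conv_lhs => rw [hz (Z n)]
      simp only [P, Finset.sum_range_succ, add_mul, Finset.sum_add_distrib, mul_add, Finset.mul_sum]
      rw [add_assoc]
      congr 1
      congr 1
      · exact Finset.sum_congr rfl fun i _ => by ring
      · ring
  have hL : ∀ i, ∃ L, ∀ n, x ^ n ∣ L - P n i := by
    intro i
    apply hcomp
    intro n
    simp only [P, Finset.sum_range_succ, add_sub_cancel_left]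
    exact dvd_mul_right _ _
  choose L hL using hL
  have hfin : s ^ m - ∑ i, L i * u i = 0 := by
    apply hhaus
    intro n
    have : s ^ m - ∑ i, L i * u i = x ^ n * (Z n).1 - ∑ i, (L i - P n i) * u i := by
      conv_lhs => rw [hP n]
      simp only [sub_mul, Finset.sum_sub_distrib]
      ring
    rw [this]
    exact dvd_sub (dvd_mul_right _ _) (Finset.dvd_sum fun i _ => (hL i n).mul_right _)
  have hmem : s ^ m ∈ A (m + 1) := by
    rw [sub_eq_zero.mp hfin]
    exact (A (m + 1)).sum_mem fun i _ => (A (m + 1)).mul_mem_left _ (hu i)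
  obtain ⟨a, ha⟩ := (hA _ _).mp hmem
  exact ⟨m, a, ha⟩

lemma aux_zero {S : Type*} [CommRing S] [IsReduced S] (x s : S)
    (hx : ∀ y, x * y = 0 → y = 0)
    (hhaus : ∀ z : S, (∀ n : ℕ, x ^ n ∣ z) → z = 0)
    (hcomp : ∀ f : ℕ → S, (∀ n, x ^ n ∣ f (n + 1) - f n) → ∃ L, ∀ n, x ^ n ∣ L - f n)
    [IsArtinianRing (S ⧸ Ideal.span {x})]
    (hs : ∀ n : ℕ, ∃ k : ℕ, ∀ r : ℕ, x ^ (n * r) ∣ x ^ k * s ^ r) : s = 0 := by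
  obtain ⟨m, a, b, hb⟩ := aux_saturate x s hhaus hcomp
  have hxn : ∀ (n : ℕ) y, x ^ n * y = 0 → y = 0 := by
    intro n
    induction n with
    | zero => simp
    | succ n ih => intro y hy; rw [pow_succ', mul_assoc] at hy; exact ih y (hx _ hy)
  have h1 : s * x ^ a = b * s ^ 2 := by
    have h0 : (s * (x ^ a - s * b)) ^ (m + 1) = 0 := by
      have : (s * (x ^ a - s * b)) ^ (m + 1) =
        s * (x ^ a - s * b) ^ m * (x ^ a * s ^ m - s ^ (m + 1) * b) := by
        rw [mul_pow]; ring
      rw [this, hb]; ring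
    have := pow_eq_zero_iff (by omega) |>.mp h0
    linear_combination this
  have h2 : ∀ r : ℕ, s * x ^ (a * r) = b ^ r * s ^ (r + 1) := by
    intro r
    induction r with
    | zero => simp
    | succ r ih =>
      have : s * x ^ (a * (r + 1)) = s * x ^ (a * r) * x ^ a := by ring
      rw [this, ih]
      linear_combination (b ^ r * s ^ r) * h1
  obtain ⟨k, hk⟩ := hs (a + 1)
  apply hhaus
  intro q
  obtain ⟨w, hw⟩ := hk (k + q + 1)
  have h3 : x ^ (k + a * (k + q)) * (s - x ^ q * (x ^ (a + 1) * b ^ (k + q) * w)) = 0 := by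
    have e1 : x ^ (k + a * (k + q)) * s = b ^ (k + q) * (x ^ k * s ^ (k + q + 1)) := by
      have := h2 (k + q)
      rw [pow_add]; linear_combination x ^ k * this
    rw [mul_sub, e1, hw]
    ring
  exact ⟨_, sub_eq_zero.mp (hxn _ _ h3)⟩

lemma aux_chevalley {R S : Type*} [CommRing R] [CommRing S] [Algebra R S] (x : R)
    (hcomp : ∀ f : ℕ → S, (∀ n, algebraMap R S x ^ n ∣ f (n + 1) - f n) →
      ∃ L, ∀ n, algebraMap R S x ^ n ∣ L - f n)
    (hart : ∀ n, IsArtinianRing (R ⧸ Ideal.span {x ^ n}))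
    (hinj : ∀ r : R, algebraMap R S x ∣ algebraMap R S r → x ∣ r)
    (J : ℕ → Ideal R) (hJ : Antitone J)
    (hne : ∀ n, ¬ J n ≤ Ideal.span {x}) :
    ∃ s : S, ¬ algebraMap R S x ∣ s ∧
      ∀ n, ∃ a ∈ J n, algebraMap R S x ^ n ∣ s - algebraMap R S a := by
  -- stabilization
  have hstab : ∀ k, ∃ N, ∀ n ≥ N, ∀ a ∈ J N, ∃ b ∈ J n, x ^ k ∣ b - a := by
    intro k
    have := hart k
    let Q := R ⧸ Ideal.span {x ^ k}
    let q : R →+* Q := Ideal.Quotient.mk _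
    have hq : Function.Surjective q := Ideal.Quotient.mk_surjective
    let F : ℕ →o (Submodule Q Q)ᵒᵈ :=
      ⟨fun m => OrderDual.toDual ((J m).map q), fun m n h => Ideal.map_mono (hJ h)⟩
    obtain ⟨N, hN⟩ := IsArtinian.monotone_stabilizes F
    refine ⟨N, fun n hn a ha => ?_⟩
    have h1 : (J N).map q = (J n).map q := OrderDual.toDual.injective (hN n hn)
    have h2 : q a ∈ (J n).map q := h1 ▸ Ideal.mem_map_of_mem q ha
    obtain ⟨b, hb, hba⟩ := (Ideal.mem_map_iff_of_surjective q hq).mp h2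
    refine ⟨b, hb, ?_⟩
    rw [← Ideal.mem_span_singleton, ← Ideal.Quotient.eq_zero_iff_mem]
    exact (map_sub q b a).trans (sub_eq_zero.mpr hba)
  choose N hN using hstab
  -- M k : index big
  let M : ℕ → ℕ := fun k => ∑ i ∈ Finset.range (k + 1), N i + k
  have hMN : ∀ k, N k ≤ M k := fun k => by
    have := Finset.single_le_sum (f := N) (fun i _ => Nat.zero_le _) (Finset.self_mem_range_succ k)
    simp only [M]; omega
  have hMM : ∀ k, M k ≤ M (k + 1) := fun k => by
    simp only [M, Finset.sum_range_succ]; omega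
  have hMk : ∀ k, k ≤ M k := fun k => by simp only [M]; omega
  have hstep : ∀ k (a : J (M k)), ∃ b : J (M (k + 1)), x ^ k ∣ (b : R) - a := by
    intro k a
    obtain ⟨b, hb, h⟩ := hN k (M (k + 1)) ((hMN k).trans (hMM k)) a (hJ (hMN k) a.2)
    exact ⟨⟨b, hb⟩, h⟩
  choose g hg using hstep
  obtain ⟨a0, ha0, ha0x⟩ := SetLike.not_le_iff_exists.mp (hne (M 1))
  let s : (k : ℕ) → J (M (k + 1)) := fun k =>
    Nat.rec (motive := fun k => J (M (k + 1))) ⟨a0, ha0⟩ (fun k a => g (k + 1) a) k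
  have hs : ∀ k, x ^ (k + 1) ∣ (s (k + 1) : R) - s k := fun k => hg (k + 1) (s k)
  have hs1 : ∀ k, x ∣ (s k : R) - a0 := by
    intro k
    induction k with
    | zero => simp [s]
    | succ k ih =>
      have : (s (k + 1) : R) - a0 = (s (k + 1) - s k) + (s k - a0) := by ring
      rw [this]
      exact dvd_add ((dvd_pow_self x (by omega)).trans (hs k)) ih
  obtain ⟨L, hL⟩ := hcomp (fun k => algebraMap R S (s k)) (fun n => by
    rw [← map_pow, ← map_sub]
    exact map_dvd _ ((pow_dvd_pow x (by omega)).trans (hs n)))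
  refine ⟨L, ?_, fun n => ⟨s n, hJ ((hMk n).trans (hMM n)) (s n).2, hL n⟩⟩
  intro hd
  apply ha0x
  rw [Ideal.mem_span_singleton]
  have h1 : x ∣ (s 1 : R) := by
    apply hinj
    have h2 := hL 1
    rw [pow_one] at h2
    have := dvd_sub hd h2
    simpa using this
  have := dvd_sub h1 (hs1 1)
  simpa using this

lemma aux_art {R : Type*} [CommRing R] [IsNoetherianRing R] (hdim : ringKrullDim R = 1)
    (d : R) (hd : d ∈ R⁰) : IsArtinianRing (R ⧸ Ideal.span {d}) := by
  have h := ringKrullDim_quotient_succ_le_of_nonZeroDivisor hd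
  rw [hdim] at h
  have h0 : ringKrullDim (R ⧸ Ideal.span {d}) ≤ 0 := by
    have : ringKrullDim (R ⧸ Ideal.span {d}) + 1 ≤ 0 + 1 := by simpa using h
    exact ENat.WithBot.add_le_add_one_right_iff.mp this
  have : Ring.KrullDimLE 0 (R ⧸ Ideal.span {d}) := (Ring.krullDimLE_iff).mpr (by simpa using h0)
  exact isArtinianRing_iff_isNoetherianRing_krullDimLE_zero.mpr ⟨inferInstance, this⟩

lemma aux_max {R : Type*} [CommRing R] [IsNoetherianRing R]
    (hdim : ringKrullDim R = 1) (d : R) (hd : d ∈ R⁰) (p : Ideal R) (hp : p.IsPrime)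
    (hdp : d ∈ p) : p.IsMaximal := by
  have := aux_art hdim d hd
  have hp1 : Ideal.span {d} ≤ p := by simpa [Ideal.span_le] using hdp
  have hp' : (p.map (Ideal.Quotient.mk (Ideal.span {d}))).IsPrime :=
    Ideal.map_isPrime_of_surjective Ideal.Quotient.mk_surjective (by simpa using hp1)
  have hmax : (p.map (Ideal.Quotient.mk (Ideal.span {d}))).IsMaximal := Ideal.IsPrime.isMaximal' hp'
  have := Ideal.comap_isMaximal_of_surjective (Ideal.Quotient.mk (Ideal.span {d}))
    Ideal.Quotient.mk_surjective (K := p.map (Ideal.Quotient.mk (Ideal.span {d})))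
  rwa [Ideal.comap_map_of_surjective _ Ideal.Quotient.mk_surjective,
    ← RingHom.ker_eq_comap_bot, Ideal.mk_ker, sup_eq_left.mpr hp1] at this

lemma aux_pow {R : Type*} [CommRing R] [IsNoetherianRing R] [IsLocalRing R]
    (hdim : ringKrullDim R = 1) (d : R) (hd : d ∈ R⁰) :
    ∃ N, maximalIdeal R ^ N ≤ Ideal.span {d} := by
  apply Ideal.exists_pow_le_of_le_radical_of_fg _ (maximalIdeal R).fg_of_isNoetherianRing
  rw [Ideal.radical_eq_sInf]
  refine le_sInf ?_
  rintro p ⟨hp1, hp⟩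
  have h1 : p.IsMaximal := aux_max hdim d hd p hp (hp1 (Ideal.mem_span_singleton_self d))
  exact (IsLocalRing.eq_maximalIdeal h1).ge

section
variable {R : Type*} [CommRing R] [IsNoetherianRing R] [IsLocalRing R]

local notation "Rhat" => AdicCompletion (maximalIdeal R) R

lemma aux_smul_top (x : R) (N n : ℕ) (hN : maximalIdeal R ^ N ≤ Ideal.span {x})
    (z : Rhat) (hz : z ∈ (maximalIdeal R ^ (N * n) • ⊤ : Submodule R Rhat)) :
    algebraMap R Rhat x ^ n ∣ z := by
  have h : maximalIdeal R ^ (N * n) ≤ Ideal.span {x ^ n} := by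
    rw [pow_mul, ← Ideal.span_singleton_pow]
    exact Ideal.pow_right_mono hN n
  refine Submodule.smul_induction_on hz ?_ ?_
  · intro r hr w _
    obtain ⟨c, rfl⟩ := Ideal.mem_span_singleton.mp (h hr)
    rw [Algebra.smul_def, map_mul, map_pow, mul_assoc]
    exact dvd_mul_right _ _
  · intro a b; exact dvd_add

lemma aux_smul_top' (x : R) (hx : x ∈ maximalIdeal R) (n : ℕ) (z : Rhat)
    (h : algebraMap R Rhat x ^ n ∣ z) :
    z ∈ (maximalIdeal R ^ n • ⊤ : Submodule R Rhat) := by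
  obtain ⟨w, rfl⟩ := h
  rw [← map_pow, ← Algebra.smul_def]
  exact Submodule.smul_mem_smul (Ideal.pow_mem_pow hx n) trivial

lemma aux_reg (x : R) (hx : x ∈ R⁰) (y : Rhat) (h : algebraMap R Rhat x * y = 0) : y = 0 := by
  have h1 : IsSMulRegular R x := by
    rw [isSMulRegular_iff_right_eq_zero_of_smul]
    intro m hm
    exact (mem_nonZeroDivisors_iff.mp hx).1 m hm
  have := IsSMulRegular.of_flat (S := Rhat) h1
  rw [isSMulRegular_iff_right_eq_zero_of_smul] at this
  exact this y h

lemma aux_haus (x : R) (hx : x ∈ maximalIdeal R) (z : Rhat)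
    (h : ∀ n, algebraMap R Rhat x ^ n ∣ z) : z = 0 := by
  have hc : IsAdicComplete (maximalIdeal R) Rhat :=
    AdicCompletion.isAdicComplete (maximalIdeal R).fg_of_isNoetherianRing
  refine hc.toIsHausdorff.haus z fun n => ?_
  rw [SModEq.zero]
  exact aux_smul_top' x hx n z (h n)

lemma aux_comp (x : R) (hx : x ∈ maximalIdeal R) (N : ℕ)
    (hN : maximalIdeal R ^ N ≤ Ideal.span {x}) (f : ℕ → Rhat)
    (hf : ∀ n, algebraMap R Rhat x ^ n ∣ f (n + 1) - f n) :
    ∃ L, ∀ n, algebraMap R Rhat x ^ n ∣ L - f n := by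
  have hc : IsAdicComplete (maximalIdeal R) Rhat :=
    AdicCompletion.isAdicComplete (maximalIdeal R).fg_of_isNoetherianRing
  have hN' : maximalIdeal R ^ (N + 1) ≤ Ideal.span {x} := (Ideal.pow_le_pow_right (by omega)).trans hN
  have hf2 : ∀ m k, algebraMap R Rhat x ^ m ∣ f (m + k) - f m := by
    intro m k
    induction k with
    | zero => simp
    | succ k ih =>
      have : f (m + (k + 1)) - f m = (f (m + k + 1) - f (m + k)) + (f (m + k) - f m) := by
        rw [← add_assoc]; ring
      rw [this]
      exact dvd_add ((pow_dvd_pow _ (by omega)).trans (hf _)) ih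
  obtain ⟨L, hL⟩ := hc.toIsPrecomplete.prec (f := f) (fun {m n} h => by
    obtain ⟨k, rfl⟩ := Nat.exists_eq_add_of_le h
    refine SModEq.symm ?_
    rw [SModEq.sub_mem]
    exact aux_smul_top' x hx m _ (hf2 m k))
  refine ⟨L, fun n => ?_⟩
  have h1 := (hL ((N + 1) * n)).symm
  rw [SModEq.sub_mem] at h1
  have h2 := aux_smul_top x (N + 1) n hN' _ h1
  have h3 := hf2 n (N * n)
  have : L - f n = (L - f ((N + 1) * n)) + (f (n + N * n) - f n) := by
    rw [show (N + 1) * n = n + N * n by ring]; ring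
  rw [this]
  exact dvd_add h2 h3

lemma aux_inj (x : R) (N : ℕ)
    (hN : maximalIdeal R ^ N ≤ Ideal.span {x}) (r : R)
    (h : algebraMap R Rhat x ∣ algebraMap R Rhat r) : x ∣ r := by
  obtain ⟨w, hw⟩ := h
  have h1 := congrArg (AdicCompletion.evalₐ (maximalIdeal R) N) hw
  rw [map_mul, AlgHom.commutes, AlgHom.commutes] at h1
  obtain ⟨v, hv⟩ := Ideal.Quotient.mk_surjective (AdicCompletion.evalₐ (maximalIdeal R) N w)
  rw [← hv] at h1
  have h2 : r - x * v ∈ maximalIdeal R ^ N := by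
    rw [← Ideal.Quotient.eq_zero_iff_mem, map_sub, map_mul, sub_eq_zero]
    exact h1
  have h3 := Ideal.mem_span_singleton.mp (hN h2)
  have := dvd_add h3 (dvd_mul_right x v)
  simpa using this

lemma aux_arthat (hdim : ringKrullDim R = 1) (x : R) (hx : x ∈ R⁰) :
    IsArtinianRing (Rhat ⧸ Ideal.span {algebraMap R Rhat x}) := by
  obtain ⟨N, hN⟩ := aux_pow hdim x hx
  have := aux_art hdim x hx
  let φ : R ⧸ Ideal.span {x} →+* Rhat ⧸ Ideal.span {algebraMap R Rhat x} :=
    Ideal.quotientMap _ (algebraMap R Rhat) (by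
      rw [Ideal.span_le, Set.singleton_subset_iff]
      exact Ideal.mem_span_singleton_self _)
  have hφ : Function.Surjective φ := by
    intro z
    obtain ⟨z, rfl⟩ := Ideal.Quotient.mk_surjective z
    obtain ⟨v, hv⟩ := Submodule.mkQ_surjective _ (AdicCompletion.eval (maximalIdeal R) R N z)
    refine ⟨Ideal.Quotient.mk _ v, ?_⟩
    have h2 : algebraMap R Rhat x ^ 1 ∣ algebraMap R Rhat v - z := by
      apply aux_smul_top x N 1 hN
      rw [mul_one, AdicCompletion.pow_smul_top_eq_ker_eval (maximalIdeal R).fg_of_isNoetherianRing,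
        LinearMap.mem_ker, map_sub, sub_eq_zero, ← hv]
      rfl
    rw [pow_one, ← Ideal.mem_span_singleton] at h2
    exact Ideal.Quotient.eq.mpr h2
  exact hφ.isArtinianRing

end

/-- A minimal prime of a principal ideal is an associated prime. -/
lemma aux_assoc {S : Type*} [CommRing S] [IsNoetherianRing S] (d : S) (n : Ideal S)
    (hmin : n ∈ (Ideal.span {d}).minimalPrimes) :
    ∃ z : S, (∀ b ∈ n, d ∣ b * z) ∧ ¬ d ∣ z := by
  have hn : n.IsPrime := hmin.1.1
  rw [← Ideal.annihilator_quotient (I := Ideal.span {d})] at hmin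
  have hass := Module.associatedPrimes.minimalPrimes_annihilator_subset_associatedPrimes _ _ hmin
  obtain ⟨_, z, hz⟩ := isAssociatedPrime_iff.mp hass
  obtain ⟨z, rfl⟩ := Ideal.Quotient.mk_surjective z
  refine ⟨z, fun b hb => ?_, fun h => ?_⟩
  · rw [hz, Submodule.mem_colon_singleton, Submodule.mem_bot] at hb
    rw [← Ideal.mem_span_singleton, ← Ideal.Quotient.eq_zero_iff_mem]
    exact hb
  · apply hn.ne_top
    rw [hz, Ideal.eq_top_iff_one, Submodule.mem_colon_singleton, Submodule.mem_bot, one_smul,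
      Ideal.Quotient.eq_zero_iff_mem, Ideal.mem_span_singleton]
    exact h

/-- Elements of the ring which are almost integral over the ideal generated by `x ^ n`. -/
def auxIdeal {A : Type*} [CommRing A] (x : A) (n : ℕ) : Ideal A where
  carrier := {a | ∃ k : ℕ, ∀ r : ℕ, x ^ (n * r) ∣ x ^ k * a ^ r}
  add_mem' := by
    rintro a b ⟨k, hk⟩ ⟨l, hl⟩
    refine ⟨k + l, fun r => ?_⟩
    rw [add_pow, Finset.mul_sum]
    refine Finset.dvd_sum fun i hi => ?_
    have hir : i + (r - i) = r := by
      have := Finset.mem_range.mp hi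
      omega
    have h := mul_dvd_mul (hk i) (hl (r - i))
    rw [← pow_add, ← mul_add, hir] at h
    have e : x ^ (k + l) * (a ^ i * b ^ (r - i) * (r.choose i : A)) =
      x ^ k * a ^ i * (x ^ l * b ^ (r - i)) * (r.choose i : A) := by ring
    rw [e]
    exact h.mul_right _
  zero_mem' := by
    refine ⟨0, fun r => ?_⟩
    cases r with
    | zero => simp
    | succ r => simp
  smul_mem' := by
    rintro c a ⟨k, hk⟩
    refine ⟨k, fun r => ?_⟩
    have e : x ^ k * (c • a) ^ r = c ^ r * (x ^ k * a ^ r) := by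
      rw [smul_eq_mul, mul_pow]; ring
    rw [e]
    exact (hk r).mul_left _

lemma mem_auxIdeal {A : Type*} [CommRing A] (x : A) (n : ℕ) (a : A) :
    a ∈ auxIdeal x n ↔ ∃ k : ℕ, ∀ r : ℕ, x ^ (n * r) ∣ x ^ k * a ^ r := Iff.rfl

section
variable {R : Type*} [CommRing R] [IsNoetherianRing R] [IsLocalRing R]

local notation "Rhat" => AdicCompletion (maximalIdeal R) R
local notation "K" => FractionRing R

lemma aux_rees (hur : IsReduced Rhat)
    (hdim : ringKrullDim R = 1) (x : R) (hx : x ∈ R⁰) (hxm : x ∈ maximalIdeal R) :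
    ∃ N, auxIdeal x N ≤ Ideal.span {x} := by
  by_contra! hcon
  obtain ⟨N, hN⟩ := aux_pow hdim x hx
  obtain ⟨s, hs1, hs2⟩ := aux_chevalley (S := Rhat) x (aux_comp x hxm N hN)
    (fun n => aux_art hdim (x ^ n) (pow_mem hx n)) (aux_inj x N hN) (auxIdeal x)
    (fun m n h a ha => by
      obtain ⟨k, hk⟩ := ha
      exact ⟨k, fun r => (pow_dvd_pow x (Nat.mul_le_mul_right r h)).trans (hk r)⟩) hcon
  have := aux_arthat hdim x hx
  apply hs1
  have : s = 0 := by
    refine aux_zero (algebraMap R Rhat x) s (aux_reg x hx) (aux_haus x hxm) (aux_comp x hxm N hN) ?_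
    intro n
    rw [← mem_auxIdeal]
    obtain ⟨a, ⟨k, hk⟩, c, hc⟩ := hs2 n
    have h1 : algebraMap R Rhat a ∈ auxIdeal (algebraMap R Rhat x) n := by
      refine ⟨k, fun r => ?_⟩
      have := map_dvd (algebraMap R Rhat) (hk r)
      simpa only [map_mul, map_pow] using this
    have h2 : algebraMap R Rhat x ^ n ∈ auxIdeal (algebraMap R Rhat x) n :=
      ⟨0, fun r => by rw [pow_mul]; simp⟩
    have : s = algebraMap R Rhat a + c * algebraMap R Rhat x ^ n := by
      linear_combination hc
    rw [this]
    exact Ideal.add_mem _ h1 (Ideal.mul_mem_left _ _ h2)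
  simp [this]

lemma aux_den (hdim : ringKrullDim R = 1) (x : R) (hxm : x ∈ maximalIdeal R) (t : K) :
    ∃ (n : ℕ) (a : R), algebraMap R K x ^ n * t = algebraMap R K a := by
  obtain ⟨⟨a, d⟩, hd⟩ := IsLocalization.surj R⁰ t
  obtain ⟨N, hN⟩ := aux_pow hdim d d.2
  obtain ⟨e, he⟩ := Ideal.mem_span_singleton.mp (hN (Ideal.pow_mem_pow hxm N))
  refine ⟨N, e * a, ?_⟩
  rw [← map_pow, he, map_mul, map_mul]
  linear_combination algebraMap R K e * hd

lemma aux_den_fg (hdim : ringKrullDim R = 1) (x : R) (hxm : x ∈ maximalIdeal R)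
    (P : Submodule R K) (hP : P.FG) :
    ∃ (n : ℕ), ∀ t ∈ P, ∃ a : R, algebraMap R K x ^ n * t = algebraMap R K a := by
  refine Submodule.fg_induction (motive := fun P _ => ∃ (n : ℕ), ∀ t ∈ P, ∃ a : R,
    algebraMap R K x ^ n * t = algebraMap R K a) ?_ ?_ P hP
  · intro t
    obtain ⟨n, a, h⟩ := aux_den hdim x hxm t
    refine ⟨n, fun u hu => ?_⟩
    obtain ⟨c, rfl⟩ := Submodule.mem_span_singleton.mp hu
    refine ⟨c * a, ?_⟩
    rw [Algebra.smul_def, map_mul]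
    linear_combination algebraMap R K c * h
  · rintro P Q _ _ ⟨n, hn⟩ ⟨m, hm⟩
    refine ⟨n + m, fun u hu => ?_⟩
    obtain ⟨p, hp, q, hq, rfl⟩ := Submodule.mem_sup.mp hu
    obtain ⟨a, ha⟩ := hn p hp
    obtain ⟨b, hb⟩ := hm q hq
    refine ⟨x ^ m * a + x ^ n * b, ?_⟩
    simp only [map_add, map_mul, map_pow]
    rw [pow_add]
    linear_combination algebraMap R K x ^ m * ha + algebraMap R K x ^ n * hb

omit [IsNoetherianRing R] [IsLocalRing R] in
lemma aux_unit (x : R) (hx : x ∈ R⁰) : IsUnit (algebraMap R K x) :=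
  IsLocalization.map_units K (⟨x, hx⟩ : R⁰)

omit [IsNoetherianRing R] [IsLocalRing R] in
lemma aux_injK : Function.Injective (algebraMap R K) := IsFractionRing.injective R K

lemma aux_finite_s5 (hur : IsReduced Rhat)
    (hdim : ringKrullDim R = 1) (x : R) (hx : x ∈ R⁰) (hxm : x ∈ maximalIdeal R) :
    ∃ M : ℕ, ∀ t : K, IsIntegral R t → ∃ a : R, algebraMap R K (x ^ M) * t = algebraMap R K a := by
  obtain ⟨N, hN⟩ := aux_rees hur hdim x hx hxm
  refine ⟨N, fun t ht => ?_⟩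
  rw [map_pow]
  have hmem : ∀ n a, algebraMap R K x ^ n * t = algebraMap R K a → a ∈ auxIdeal x n := by
    intro n a h
    obtain ⟨k, hk⟩ := aux_den_fg hdim x hxm _ ht.fg_adjoin_singleton
    refine ⟨k, fun r => ?_⟩
    obtain ⟨b, hb⟩ := hk (t ^ r) (pow_mem (Algebra.self_mem_adjoin_singleton R t) r)
    refine ⟨b, aux_injK ?_⟩
    simp only [map_mul, map_pow]
    rw [← h, ← hb, mul_pow, pow_mul]
    ring
  have hind : ∀ n a, algebraMap R K x ^ (N + n) * t = algebraMap R K a →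
      ∃ a : R, algebraMap R K x ^ N * t = algebraMap R K a := by
    intro n
    induction n with
    | zero => intro a h; exact ⟨a, h⟩
    | succ n ih =>
      intro a h
      obtain ⟨k, hk⟩ := hmem _ a h
      have h1 : a ∈ auxIdeal x N :=
        ⟨k, fun r => (pow_dvd_pow x (Nat.mul_le_mul_right r (by omega))).trans (hk r)⟩
      obtain ⟨b, rfl⟩ := Ideal.mem_span_singleton.mp (hN h1)
      refine ih b ((aux_unit x hx).mul_left_cancel ?_)
      rw [← map_mul, ← h]
      ring
  obtain ⟨n, a, h⟩ := aux_den hdim x hxm t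
  refine hind n (x ^ N * a) ?_
  rw [map_mul, map_pow, ← h]
  ring

omit [IsLocalRing R] in
lemma aux_fg (c : R) (hc : c ∈ R⁰) (P : Submodule R K)
    (hP : ∀ t ∈ P, ∃ a : R, algebraMap R K c * t = algebraMap R K a) : P.FG := by
  refine Submodule.fg_of_fg_map_injective (LinearMap.mulLeft R (algebraMap R K c)) ?_ ?_
  · intro a b h
    exact (aux_unit c hc).mul_left_cancel h
  · refine Submodule.FG.of_le (T := LinearMap.range (Algebra.linearMap R K)) ?_ ?_
    · rw [LinearMap.range_eq_map]
      exact (Module.Finite.fg_top (R := R) (M := R)).map _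
    · rintro _ ⟨t, ht, rfl⟩
      obtain ⟨a, ha⟩ := hP t ht
      exact ⟨a, ha.symm⟩

omit [IsLocalRing R] in
lemma aux_integral_s5 (P : Submodule R K) (hP : P.FG) (h1 : (1 : K) ∈ P) (w : K)
    (hw : ∀ t ∈ P, w * t ∈ P) : IsIntegral R w := by
  let A : Subalgebra R K :=
    { carrier := {u | ∀ t ∈ P, u * t ∈ P}
      mul_mem' := fun {u v} hu hv t ht => by rw [mul_assoc]; exact hu _ (hv _ ht)
      add_mem' := fun {u v} hu hv t ht => by rw [add_mul]; exact P.add_mem (hu _ ht) (hv _ ht)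
      algebraMap_mem' := fun r t ht => by rw [← Algebra.smul_def]; exact P.smul_mem r ht }
  refine IsIntegral.of_mem_of_fg A (Submodule.FG.of_le hP ?_) w hw
  intro u hu
  have := hu 1 h1
  rwa [mul_one] at this

omit [IsNoetherianRing R] [IsLocalRing R] in
lemma mem_conductorIdeal (c : R) : c ∈ conductorIdeal R ↔
    ∀ t : K, IsIntegral R t → ∃ a : R, algebraMap R K c * t = algebraMap R K a := by
  unfold conductorIdeal
  rw [Submodule.mem_colon]
  simp only [Submodule.mem_one, Algebra.smul_def]
  constructor
  · intro h t ht
    obtain ⟨a, ha⟩ := h t ht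
    exact ⟨a, ha.symm⟩
  · intro h t ht
    obtain ⟨a, ha⟩ := h t ht
    exact ⟨a, ha.symm⟩

omit [IsLocalRing R] in
/-- `R : C` is the integral closure. -/
lemma aux_colon_conductor (d : R) (hd : d ∈ R⁰) (hdC : d ∈ conductorIdeal R) (w : K)
    (hw : ∀ c ∈ conductorIdeal R, ∃ a : R, w * algebraMap R K c = algebraMap R K a) :
    IsIntegral R w := by
  let P : Submodule R K :=
    { carrier := {u | ∃ c ∈ conductorIdeal R, algebraMap R K d * u = algebraMap R K c}
      add_mem' := by
        rintro u v ⟨c, hc, h⟩ ⟨e, he, h'⟩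
        exact ⟨c + e, Ideal.add_mem _ hc he, by rw [mul_add, h, h', map_add]⟩
      zero_mem' := ⟨0, Ideal.zero_mem _, by simp⟩
      smul_mem' := by
        rintro r u ⟨c, hc, h⟩
        refine ⟨r * c, Ideal.mul_mem_left _ _ hc, ?_⟩
        rw [Algebra.smul_def, map_mul, ← h]; ring }
  refine aux_integral_s5 P (aux_fg d hd P ?_) ⟨d, hdC, by simp⟩ w ?_
  · rintro t ⟨c, _, h⟩
    exact ⟨c, h⟩
  · rintro t ⟨c, hc, h⟩
    obtain ⟨a, ha⟩ := hw c hc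
    refine ⟨a, ?_, by rw [← ha, ← h]; ring⟩
    rw [mem_conductorIdeal] at hc ⊢
    intro b hb
    obtain ⟨e, he⟩ := hc b hb
    have heC : e ∈ conductorIdeal R := by
      rw [mem_conductorIdeal]
      intro b' hb'
      obtain ⟨f, hf⟩ := hc (b * b') (hb.mul hb')
      exact ⟨f, by rw [← he, ← hf]; ring⟩
    obtain ⟨f, hf⟩ := hw e heC
    exact ⟨f, by rw [← ha, ← hf, ← he]; ring⟩

local notation "B" => integralClosure R (FractionRing R)

omit [IsLocalRing R] in
lemma aux_finB (d : R) (hd : d ∈ R⁰) (hdC : d ∈ conductorIdeal R) : Module.Finite R B := by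
  have : (Subalgebra.toSubmodule B).FG :=
    aux_fg d hd _ (fun t ht => (mem_conductorIdeal d).mp hdC t ht)
  exact Module.Finite.iff_fg.mpr this

/-- Invertibility of the extension of a regular ideal to the integral closure. -/
lemma aux_invertible (hdim : ringKrullDim R = 1)
    (d : R) (hd : d ∈ R⁰) (hdC : d ∈ conductorIdeal R) (I : Ideal R) (hdI : d ∈ I) :
    Ideal.span {b : B | ∃ i ∈ I, ∃ v : K, (∀ i' ∈ I, IsIntegral R (v * algebraMap R K i')) ∧
      (b : K) = v * algebraMap R K i} = ⊤ := by
  have hfin := aux_finB d hd hdC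
  set P : Ideal B := Ideal.span {b : B | ∃ i ∈ I, ∃ v : K,
    (∀ i' ∈ I, IsIntegral R (v * algebraMap R K i')) ∧ (b : K) = v * algebraMap R K i} with hPdef
  -- anything multiplying `P` into the integral closure is integral
  have hcol : ∀ w : K, (∀ b ∈ P, IsIntegral R (w * (b : K))) → IsIntegral R w := by
    intro w hw
    let H : Submodule R K :=
      { carrier := {v | ∀ i' ∈ I, IsIntegral R (v * algebraMap R K i')}
        add_mem' := fun {u v} hu hv i hi => by rw [add_mul]; exact (hu i hi).add (hv i hi)
        zero_mem' := fun i _ => by rw [zero_mul]; exact isIntegral_zero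
        smul_mem' := fun r v hv i hi => by
          rw [smul_mul_assoc]; exact (hv i hi).smul r }
    refine aux_integral_s5 H (aux_fg (d * d) (mul_mem hd hd) H ?_) ?_ w ?_
    · intro t ht
      obtain ⟨a, ha⟩ := (mem_conductorIdeal d).mp hdC _ (ht d hdI)
      exact ⟨a, by rw [← ha, map_mul]; ring⟩
    · intro i _
      rw [one_mul]; exact isIntegral_algebraMap
    · intro v hv i hi
      have := hw ⟨v * algebraMap R K i, hv i hi⟩ (Ideal.subset_span ⟨i, hi, v, hv, rfl⟩)
      rwa [mul_assoc]
  by_contra hne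
  obtain ⟨n, hn, hPn⟩ := Ideal.exists_le_maximal P hne
  have hdP : algebraMap R B d ∈ P :=
    Ideal.subset_span ⟨d, hdI, 1, fun i _ => by rw [one_mul]; exact isIntegral_algebraMap, by
      rw [one_mul]; rfl⟩
  have hnoeth : IsNoetherianRing B := IsNoetherianRing.of_finite R B
  have hint : Algebra.IsIntegral R B := inferInstance
  have hmin : n ∈ (Ideal.span {algebraMap R B d}).minimalPrimes := by
    refine ⟨⟨hn.isPrime, ?_⟩, ?_⟩
    · rw [Ideal.span_le, Set.singleton_subset_iff]; exact hPn hdP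
    · rintro q ⟨hq, hdq⟩ hqn
      have hc : (q.comap (algebraMap R B)).IsMaximal :=
        aux_max hdim d hd _ (Ideal.IsPrime.comap _) (hdq (Ideal.mem_span_singleton_self _))
      have := Ideal.isMaximal_of_isIntegral_of_isMaximal_comap q hc
      exact (this.eq_of_le hn.ne_top hqn).ge
  obtain ⟨z, hz1, hz2⟩ := aux_assoc _ n hmin
  obtain ⟨u, hu⟩ := aux_unit d hd
  have hw : IsIntegral R ((u⁻¹ : Kˣ) * (z : K)) := by
    apply hcol
    intro b hb
    obtain ⟨c, hc⟩ := hz1 b (hPn hb)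
    have hc' : (b : K) * z = algebraMap R K d * c := congrArg Subtype.val hc
    have : (u⁻¹ : Kˣ) * (z : K) * b = c := by
      rw [mul_assoc, mul_comm (z : K), hc', ← hu, Units.inv_mul_cancel_left]
    rw [this]; exact c.2
  apply hz2
  refine ⟨⟨_, hw⟩, Subtype.ext ?_⟩
  change (z : K) = algebraMap R K d * ((u⁻¹ : Kˣ) * (z : K))
  rw [← hu, Units.mul_inv_cancel_left]

omit [IsNoetherianRing R] in
lemma aux_ic (hfin : Module.Finite R B) (I : Ideal R) (r : R)
    (hr : algebraMap R B r ∈ I.map (algebraMap R B)) : r ∈ idealIntegralClosure I := by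
  obtain ⟨p, hp, -, hcoef, haev⟩ :=
    LinearMap.exists_monic_and_natDegree_eq_and_coeff_mem_pow_and_aeval_eq_zero R
      (algebraMap R (Module.End R B) r) I (by
        rw [Ideal.smul_top_eq_map]
        rintro _ ⟨b, rfl⟩
        rw [Module.algebraMap_end_apply, Algebra.smul_def]
        exact Ideal.mul_mem_right _ _ hr)
  have heval : p.eval r = 0 := by
    rw [Polynomial.aeval_algebraMap_apply] at haev
    have h1 := LinearMap.congr_fun haev (1 : B)
    rw [Module.algebraMap_end_apply, Algebra.smul_def, mul_one, LinearMap.zero_apply] at h1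
    have h2 := congrArg Subtype.val h1
    apply aux_injK
    rw [map_zero]
    exact h2
  have hdeg : 0 < p.natDegree := by
    rw [Nat.pos_iff_ne_zero]
    intro h0
    replace h0 := Polynomial.Monic.natDegree_eq_zero hp |>.mp h0
    rw [h0, Polynomial.eval_one] at heval
    exact one_ne_zero heval
  refine ⟨p.natDegree, hdeg, fun i => p.coeff (p.natDegree - i), ?_, ?_⟩
  · intro i hi
    have := hcoef (p.natDegree - i)
    rw [Finset.mem_Icc] at hi
    rwa [Nat.sub_sub_self hi.2] at this
  · rw [← heval, Polynomial.eval_eq_sum_range, Finset.sum_range_succ, add_comm,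
      hp.coeff_natDegree, one_mul]
    congr 1
    refine Finset.sum_bij' (fun i _ => p.natDegree - i) (fun i _ => p.natDegree - i) ?_ ?_ ?_ ?_ ?_
    all_goals intro i hi
    all_goals simp only [Finset.mem_Icc, Finset.mem_range] at *
    all_goals first | omega | skip

end

theorem integrallyClosed_containing_conductor_reflexive_trace
    (R : Type*) [CommRing R] [IsNoetherianRing R] [IsLocalRing R]
    (hur : IsReduced (AdicCompletion (maximalIdeal R) R))
    (hdim : ringKrullDim R = 1) (hCM : IsCohenMacaulayLocalRing R)
    (hk : Infinite (ResidueField R))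
    (I : Ideal R) (hic : idealIntegralClosure I = (I : Set R))
    (hC : conductorIdeal R ≤ I) :
    Module.IsReflexive R ↥I ∧ traceIdeal R ↥I = I := by
  -- a regular element of the maximal ideal
  obtain ⟨x, hx, hxm⟩ : ∃ x : R, x ∈ R⁰ ∧ x ∈ maximalIdeal R := by
    obtain ⟨rs, hrs, hreg, hlen⟩ := hCM
    rw [hdim] at hlen
    have hl : rs.length = 1 := by exact_mod_cast hlen.symm
    obtain ⟨x, rfl⟩ := List.length_eq_one_iff.mp hl
    refine ⟨x, ?_, hrs x (by simp)⟩
    have h := hreg.toIsWeaklyRegular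
    rw [RingTheory.Sequence.isWeaklyRegular_cons_iff] at h
    have h1 := h.1
    rw [isSMulRegular_iff_right_eq_zero_of_smul] at h1
    rw [mem_nonZeroDivisors_iff_left]
    exact fun y hy => h1 y hy
  obtain ⟨M, hM⟩ := aux_finite_s5 hur hdim x hx hxm
  obtain ⟨d, hd, hdC⟩ : ∃ d : R, d ∈ R⁰ ∧ d ∈ conductorIdeal R :=
    ⟨x ^ M, pow_mem hx M, (mem_conductorIdeal _).mpr hM⟩
  have hdI := hC hdC
  have hfin := aux_finB d hd hdC
  let K := FractionRing R
  let B := integralClosure R (FractionRing R)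
  have hIB : ∀ r : R, algebraMap R B r ∈ I.map (algebraMap R B) → r ∈ I := by
    intro r hr
    have := aux_ic hfin I r hr
    rwa [hic] at this
  obtain ⟨u, hu⟩ := aux_unit d hd
  -- functionals on `I` are multiplications by elements of the integral closure
  have hcomm : ∀ (f : ↥I →ₗ[R] R) (i j : I), (i : R) * f j = (j : R) * f i := by
    intro f i j
    have h1 : (i : R) • j = (j : R) • i := Subtype.ext (mul_comm _ _)
    have := congrArg f h1
    simpa only [map_smul, smul_eq_mul] using this
  have htr : ∀ (f : ↥I →ₗ[R] R) (i : I), f i ∈ I := by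
    intro f i
    let w : K := (u⁻¹ : Kˣ) * algebraMap R K (f ⟨d, hdI⟩)
    have hw : ∀ j : I, w * algebraMap R K j = algebraMap R K (f j) := by
      intro j
      have h1 := congrArg (algebraMap R K) (hcomm f ⟨d, hdI⟩ j)
      rw [map_mul, map_mul] at h1
      rw [mul_assoc, mul_comm (algebraMap R K (f ⟨d, hdI⟩)), ← h1]
      change (u⁻¹ : Kˣ) * (algebraMap R K d * algebraMap R K (f j)) = _
      rw [← hu, Units.inv_mul_cancel_left]
    have hwint : IsIntegral R w :=
      aux_colon_conductor d hd hdC w fun c hc => ⟨f ⟨c, hC hc⟩, hw ⟨c, hC hc⟩⟩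
    apply hIB
    have : algebraMap R B (f i) = (⟨w, hwint⟩ : B) * algebraMap R B i :=
      Subtype.ext (hw i).symm
    rw [this]
    exact Ideal.mul_mem_left _ _ (Ideal.mem_map_of_mem _ i.2)
  refine ⟨⟨?_, ?_⟩, ?_⟩
  · intro i j h
    exact Subtype.ext (LinearMap.congr_fun h I.subtype)
  · intro φ
    have hj : φ I.subtype ∈ I := by
      set j := φ I.subtype with hjdef
      -- `j` lies in `R : (R : I)`
      have hcol : ∀ v : K, (∀ i ∈ I, ∃ a : R, v * algebraMap R K i = algebraMap R K a) →
          ∃ a : R, v * algebraMap R K j = algebraMap R K a := by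
        intro v hv
        choose g hg using fun i : I => hv i i.2
        let f : ↥I →ₗ[R] R :=
          { toFun := g
            map_add' := fun a b => aux_injK (by
              rw [map_add, ← hg, ← hg, ← hg, ← mul_add, ← map_add]; rfl)
            map_smul' := fun r a => aux_injK (by
              rw [RingHom.id_apply, smul_eq_mul, map_mul, ← hg, ← hg]
              change v * algebraMap R K (r * a) = _
              rw [map_mul]; ring) }
        refine ⟨φ f, ?_⟩
        have h1 : d • f = f ⟨d, hdI⟩ • I.subtype := by
          ext i
          exact (hcomm f ⟨d, hdI⟩ i).trans (mul_comm _ _)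
        have h2 := congrArg φ h1
        rw [map_smul, map_smul, smul_eq_mul, smul_eq_mul, ← hjdef] at h2
        have h3 := congrArg (algebraMap R K) h2
        rw [map_mul, map_mul] at h3
        have h4 : algebraMap R K (f ⟨d, hdI⟩) = v * algebraMap R K d := (hg ⟨d, hdI⟩).symm
        rw [h4] at h3
        apply (aux_unit d hd).mul_left_cancel
        rw [h3]; ring
      have hmul : ∀ v : K, (∀ i' ∈ I, IsIntegral R (v * algebraMap R K i')) →
          IsIntegral R (v * algebraMap R K j) := by
        intro v hv
        refine aux_colon_conductor d hd hdC _ fun c hc => ?_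
        obtain ⟨a, ha⟩ := hcol (v * algebraMap R K c) (fun i hi => by
          obtain ⟨a, ha⟩ := (mem_conductorIdeal c).mp hc _ (hv i hi)
          exact ⟨a, by rw [← ha]; ring⟩)
        exact ⟨a, by rw [← ha]; ring⟩
      have hinv := aux_invertible hdim d hd hdC I hdI
      have h1 : (1 : B) ∈ (⊤ : Ideal B) := trivial
      rw [← hinv] at h1
      have hall : ∀ b ∈ Ideal.span {b : B | ∃ i ∈ I, ∃ v : K,
          (∀ i' ∈ I, IsIntegral R (v * algebraMap R K i')) ∧ (b : K) = v * algebraMap R K i},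
          b * algebraMap R B j ∈ I.map (algebraMap R B) := by
        intro b hb
        refine Submodule.span_induction ?_ ?_ ?_ ?_ hb
        · rintro b ⟨i, hi, v, hv, hbv⟩
          have : b * algebraMap R B j = (⟨_, hmul v hv⟩ : B) * algebraMap R B i := by
            apply Subtype.ext
            change (b : K) * algebraMap R K j = v * algebraMap R K j * algebraMap R K i
            rw [hbv]; ring
          rw [this]
          exact Ideal.mul_mem_left _ _ (Ideal.mem_map_of_mem _ hi)
        · rw [zero_mul]; exact Ideal.zero_mem _
        · intro a b _ _ ha hb
          rw [add_mul]; exact Ideal.add_mem _ ha hb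
        · intro a b _ hb
          rw [smul_eq_mul, mul_assoc]; exact Ideal.mul_mem_left _ _ hb
      have := hall 1 h1
      rw [one_mul] at this
      exact hIB j this
    refine ⟨⟨φ I.subtype, hj⟩, ?_⟩
    ext f
    change f ⟨φ I.subtype, hj⟩ = φ f
    have h1 : d • f = f ⟨d, hdI⟩ • I.subtype := by
      ext i
      exact (hcomm f ⟨d, hdI⟩ i).trans (mul_comm _ _)
    have h2 := congrArg φ h1
    rw [map_smul, map_smul, smul_eq_mul, smul_eq_mul] at h2
    have h3 := hcomm f ⟨d, hdI⟩ ⟨φ I.subtype, hj⟩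
    have h4 : d * (f ⟨φ I.subtype, hj⟩ - φ f) = 0 := by
      rw [mul_sub, h2]
      simp only at h3
      rw [h3]; ring
    exact sub_eq_zero.mp ((mem_nonZeroDivisors_iff.mp hd).1 _ h4)
  · apply le_antisymm
    · refine iSup_le fun f => ?_
      rintro _ ⟨i, rfl⟩
      exact htr f i
    · intro i hi
      exact Ideal.mem_iSup_of_mem I.subtype ⟨⟨i, hi⟩, rfl⟩
end

section
/- Let R be an analytically unramified one-dimensional Cohen–Macaulay local ring with infinite residue field, and let J be a regular trace ideal of R. Then the integral closure \bar{J} is a reflexive trace ideal and tr_R(\bar{J}*) = \bar{J}. -/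
open IsLocalRing

lemma aux_length_s6 {R : Type*} [CommRing R] (I : Ideal R) (y : R) (hy : y ∈ nonZeroDivisors R)
    (hI : Module.length R (R ⧸ I) ≠ ⊤) :
    Module.length R (↥I ⧸ (Submodule.comap I.subtype (Ideal.span {y} * I))) =
      Module.length R (R ⧸ Ideal.span {y}) := by
  set K : Ideal R := Ideal.span {y} * I with hK
  have hKI : K ≤ I := Ideal.mul_le_right
  have hKy : K ≤ Ideal.span {y} := Ideal.mul_le_left
  have e1 := Module.length_eq_add_of_exact
    (Submodule.mapQ (Submodule.comap I.subtype K) K I.subtype le_rfl)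
    (Submodule.factor hKI)
    (by
      rw [injective_iff_map_eq_zero]
      intro a
      induction a using Submodule.Quotient.induction_on with
      | _ a =>
      intro h
      rw [Submodule.mapQ_apply, Submodule.Quotient.mk_eq_zero] at h
      rwa [Submodule.Quotient.mk_eq_zero])
    (Submodule.factor_surjective hKI)
    (by
      intro a
      induction a using Submodule.Quotient.induction_on with
      | _ a =>
      constructor
      · intro h
        have h' : a ∈ I := by
          rw [← Submodule.Quotient.mk_eq_zero]; exact h
        exact ⟨Submodule.Quotient.mk ⟨a, h'⟩, rfl⟩
      · rintro ⟨b, hb⟩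
        rw [← hb]
        induction b using Submodule.Quotient.induction_on with
        | _ b =>
        exact (Submodule.Quotient.mk_eq_zero I).2 b.2)
  have hmul : ∀ a, y * a ∈ K ↔ a ∈ I := by
    intro a
    rw [hK, Ideal.mem_span_singleton_mul]
    constructor
    · rintro ⟨z, hz, h⟩
      have : z = a := by
        exact (mul_cancel_left_mem_nonZeroDivisors hy).1 h
      exact this ▸ hz
    · intro h; exact ⟨a, h, rfl⟩
  have hcm : I ≤ Submodule.comap (LinearMap.mulLeft R y) K := fun a ha => (hmul a).2 ha
  have e2 := Module.length_eq_add_of_exact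
    (Submodule.mapQ I K (LinearMap.mulLeft R y) hcm)
    (Submodule.factor hKy)
    (by
      rw [injective_iff_map_eq_zero]
      intro a
      induction a using Submodule.Quotient.induction_on with
      | _ a =>
      intro h
      rw [Submodule.mapQ_apply, Submodule.Quotient.mk_eq_zero] at h
      rw [Submodule.Quotient.mk_eq_zero]
      exact (hmul a).1 h)
    (Submodule.factor_surjective hKy)
    (by
      intro a
      induction a using Submodule.Quotient.induction_on with
      | _ a =>
      constructor
      · intro h
        have h' : a ∈ Ideal.span {y} := by
          rw [← Submodule.Quotient.mk_eq_zero]; exact h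
        obtain ⟨b, rfl⟩ := Ideal.mem_span_singleton.1 h'
        exact ⟨Submodule.Quotient.mk b, rfl⟩
      · rintro ⟨b, hb⟩
        rw [← hb]
        induction b using Submodule.Quotient.induction_on with
        | _ b =>
        exact (Submodule.Quotient.mk_eq_zero _).2
          (Ideal.mul_mem_right _ _ (Ideal.mem_span_singleton_self y)))
  rw [e1, add_comm] at e2
  exact ENat.add_right_injective_of_ne_top hI e2

lemma aux_dep {R : Type*} [CommRing R] [IsNoetherianRing R] [IsLocalRing R] (I : Ideal R) (y : R)
    (hym : y ∈ maximalIdeal R) (N : ℕ)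
    (hN : Module.length R (↥I ⧸ (Submodule.comap I.subtype (Ideal.span {y} * I))) ≤ N)
    (a : Fin (N + 1) → R) (ha : ∀ i, a i ∈ I) :
    ∃ c : Fin (N + 1) → R, ∑ i, c i * a i ∈ maximalIdeal R * I ∧ ∃ i, c i ∉ maximalIdeal R := by
  let _ : Field (R ⧸ maximalIdeal R) := Ideal.Quotient.field _
  let P : Submodule R I := maximalIdeal R • ⊤
  have hP : ∀ w : I, w ∈ P ↔ (w : R) ∈ maximalIdeal R * I := by
    intro w
    have : P.map I.subtype = maximalIdeal R * I := by
      rw [Submodule.map_smul'', Submodule.map_top, Submodule.range_subtype]; rfl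
    rw [← this]
    constructor
    · intro h; exact ⟨w, h, rfl⟩
    · rintro ⟨v, hv, h⟩
      have : v = w := Subtype.ext h
      exact this ▸ hv
  have hle : Submodule.comap I.subtype (Ideal.span {y} * I) ≤ P := by
    intro w hw
    rw [hP]
    exact Ideal.mul_mono_left ((Ideal.span_singleton_le_iff_mem _).2 hym) hw
  have h1 : Module.length R (I ⧸ P) ≤ N :=
    (Module.length_le_of_surjective (Submodule.factor hle) (Submodule.factor_surjective hle)).trans hN
  have h2 : Module.length (R ⧸ maximalIdeal R) (I ⧸ P) ≤ N := by
    rwa [← Module.length_eq_of_surjective (S := R) (R := R ⧸ maximalIdeal R) (M := I ⧸ P)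
      Ideal.Quotient.mk_surjective]
  have : Module.Finite (R ⧸ maximalIdeal R) (I ⧸ P) :=
    Module.Finite.of_restrictScalars_finite R _ _
  rw [Module.length_eq_finrank, Nat.cast_le] at h2
  let v : Fin (N + 1) → I ⧸ P := fun i => Submodule.Quotient.mk ⟨a i, ha i⟩
  have hdep : ¬ LinearIndependent (R ⧸ maximalIdeal R) v := by
    intro h
    have := h.fintype_card_le_finrank
    simp at this
    omega
  rw [Fintype.not_linearIndependent_iff] at hdep
  obtain ⟨g, hg, i, hi⟩ := hdep
  choose c hc using fun i => Ideal.Quotient.mk_surjective (g i)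
  refine ⟨c, ?_, i, ?_⟩
  · have : (∑ i, c i • (⟨a i, ha i⟩ : I)) ∈ P := by
      rw [← Submodule.Quotient.mk_eq_zero, ← hg]
      rw [← Submodule.mkQ_apply, map_sum]
      refine Finset.sum_congr rfl fun i _ => ?_
      rw [← hc i]; rfl
    rw [hP] at this
    simpa using this
  · intro h
    apply hi
    rw [← hc i]
    exact Ideal.Quotient.eq_zero_iff_mem.2 h

lemma aux_finlen {R : Type*} [CommRing R] [IsNoetherianRing R] (hdim : ringKrullDim R = 1)
    (I : Ideal R) (y : R) (hy : y ∈ nonZeroDivisors R) (hyI : y ∈ I) :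
    Module.length R (R ⧸ I) ≠ ⊤ := by
  have h := ringKrullDim_quotient_succ_le_of_nonZeroDivisor hy
  rw [hdim] at h
  have : Ring.KrullDimLE 0 (R ⧸ Ideal.span {y}) := by
    rw [Ring.krullDimLE_iff]
    generalize ringKrullDim (R ⧸ Ideal.span {y}) = d at h
    induction d using WithBot.recBotCoe with
    | bot => exact bot_le
    | coe d =>
      have h' : d + 1 ≤ 0 + 1 := by exact_mod_cast h
      have : d ≤ 0 := (ENat.add_le_add_iff_right (by simp)).1 h'
      exact_mod_cast this
  have : IsArtinianRing (R ⧸ Ideal.span {y}) := isArtinianRing_iff_krullDimLE_zero.2 this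
  have h3 : Module.length R (R ⧸ Ideal.span {y}) ≠ ⊤ := by
    rw [Module.length_eq_of_surjective (R := R ⧸ Ideal.span {y}) Ideal.Quotient.mk_surjective]
    exact Module.length_ne_top
  have hle : Ideal.span {y} ≤ I := (Ideal.span_singleton_le_iff_mem _).2 hyI
  exact ne_top_of_le_ne_top h3
    (Module.length_le_of_surjective (Submodule.factor hle) (Submodule.factor_surjective hle))


lemma aux_Q_sup {R : Type*} [CommRing R] (L J I₁ I₂ : Ideal R) (h₁ : I₁ ≤ J) (h₂ : I₂ ≤ J)
    (q₁ : ∃ n, I₁ ^ (n + 1) ≤ L * J ^ n) (q₂ : ∃ n, I₂ ^ (n + 1) ≤ L * J ^ n) :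
    ∃ n, (I₁ ⊔ I₂) ^ (n + 1) ≤ L * J ^ n := by
  obtain ⟨n, hn⟩ := q₁
  obtain ⟨k, hk⟩ := q₂
  refine ⟨n + k, ?_⟩
  rw [← Submodule.add_eq_sup, add_pow]
  refine Finset.sum_induction _ (fun K : Ideal R => K ≤ L * J ^ (n + k))
    (fun a b ha hb => sup_le ha hb) bot_le ?_
  intro m hm
  have hm' : m ≤ n + k + 1 := by simpa [Nat.lt_succ_iff] using hm
  refine Ideal.mul_le_left.trans ?_
  by_cases hc : n + 1 ≤ m
  · obtain ⟨d, rfl⟩ := Nat.exists_eq_add_of_le hc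
    calc I₁ ^ (n + 1 + d) * I₂ ^ (n + k + 1 - (n + 1 + d))
        = I₁ ^ (n + 1) * (I₁ ^ d * I₂ ^ (n + k + 1 - (n + 1 + d))) := by
          rw [pow_add, mul_assoc]
      _ ≤ (L * J ^ n) * (J ^ d * J ^ (n + k + 1 - (n + 1 + d))) :=
          Ideal.mul_mono hn (Ideal.mul_mono (Ideal.pow_right_mono h₁ _) (Ideal.pow_right_mono h₂ _))
      _ = L * J ^ (n + k) := by
          rw [mul_assoc, ← pow_add, ← pow_add]; congr 2; omega
  · obtain ⟨d, hd⟩ := Nat.exists_eq_add_of_le (show k + 1 ≤ n + k + 1 - m by omega)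
    rw [hd]
    calc I₁ ^ m * I₂ ^ (k + 1 + d)
        = I₂ ^ (k + 1) * (I₁ ^ m * I₂ ^ d) := by ring
      _ ≤ (L * J ^ k) * (J ^ m * J ^ d) :=
          Ideal.mul_mono hk (Ideal.mul_mono (Ideal.pow_right_mono h₁ _) (Ideal.pow_right_mono h₂ _))
      _ = L * J ^ (n + k) := by
          rw [mul_assoc, ← pow_add, ← pow_add]; congr 2; omega

lemma aux_add_pow {R : Type*} [CommRing R] (A B : Ideal R) (k : ℕ) :
    (A ⊔ B) ^ (k + 1) ≤ A ^ (k + 1) ⊔ B * (A ⊔ B) ^ k := by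
  induction k with
  | zero => simp
  | succ k ih =>
    calc (A ⊔ B) ^ (k + 2) = (A ⊔ B) ^ (k + 1) * (A ⊔ B) := pow_succ _ _
      _ = (A ⊔ B) ^ (k + 1) * A ⊔ (A ⊔ B) ^ (k + 1) * B := Ideal.mul_sup _ _ _
      _ ≤ (A ^ (k + 1) ⊔ B * (A ⊔ B) ^ k) * A ⊔ (A ⊔ B) ^ (k + 1) * B :=
          sup_le_sup_right (Ideal.mul_mono_left ih) _
      _ ≤ _ := by
          rw [Ideal.sup_mul]
          refine sup_le (sup_le ?_ ?_) ?_
          · rw [← pow_succ]; exact le_sup_left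
          · refine le_sup_of_le_right ?_
            rw [mul_assoc, pow_succ]
            exact Ideal.mul_mono_right (Ideal.mul_mono_right le_sup_left)
          · rw [mul_comm]; exact le_sup_right

lemma aux_Q_trans {R : Type*} [CommRing R] (m J I : Ideal R) (l l' : R)
    (hl' : Ideal.span {l'} ≤ J)
    (q₁ : ∃ n, I ^ (n + 1) ≤ (Ideal.span {l'} ⊔ m * J) * J ^ n)
    (q₂ : ∃ n, (Ideal.span {l'}) ^ (n + 1) ≤ (Ideal.span {l} ⊔ m * J) * J ^ n) :
    ∃ n, I ^ (n + 1) ≤ (Ideal.span {l} ⊔ m * J) * J ^ n := by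
  obtain ⟨n, hn⟩ := q₁
  obtain ⟨k, hk⟩ := q₂
  refine ⟨(n + 1) * (k + 1) - 1, ?_⟩
  have e1 : (n + 1) * (k + 1) - 1 + 1 = (n + 1) * (k + 1) := Nat.sub_add_cancel (Nat.mul_pos n.succ_pos k.succ_pos)
  have e2 : (n + 1) * (k + 1) - 1 = n * (k + 1) + k := by
    rw [Nat.sub_eq_iff_eq_add (Nat.mul_pos n.succ_pos k.succ_pos), Nat.succ_eq_add_one,
      Nat.succ_eq_add_one]; ring
  rw [e1, e2, pow_mul]
  refine (Ideal.pow_right_mono hn _).trans ?_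
  rw [Ideal.sup_mul]
  refine (aux_add_pow _ _ _).trans (sup_le ?_ ?_)
  · rw [mul_pow]
    refine (Ideal.mul_mono_left hk).trans_eq ?_
    ring
  · have hle : Ideal.span {l'} * J ^ n ⊔ m * J * J ^ n ≤ J ^ (n + 1) := by
      rw [pow_succ']
      exact sup_le (Ideal.mul_mono_left hl') (Ideal.mul_mono_left Ideal.mul_le_right)
    calc m * J * J ^ n * (Ideal.span {l'} * J ^ n ⊔ m * J * J ^ n) ^ k
        ≤ m * J * J ^ n * (J ^ (n + 1)) ^ k := Ideal.mul_mono_right (Ideal.pow_right_mono hle _)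
      _ = m * J * J ^ (n * (k + 1) + k) := by ring
      _ ≤ _ := Ideal.mul_mono_left le_sup_right

lemma aux_two_s6 {R : Type*} [CommRing R] [IsLocalRing R] [Infinite (ResidueField R)]
    (J : Ideal R) (n : ℕ)
    (hdep : ∀ a : Fin (n + 2) → R, (∀ i, a i ∈ J ^ (n + 1)) →
      ∃ c : Fin (n + 2) → R, ∑ i, c i * a i ∈ maximalIdeal R * J ^ (n + 1) ∧
        ∃ i, c i ∉ maximalIdeal R)
    (x y : R) (hx : x ∈ J) (hy : y ∈ J) :
    ∃ t : R, y ^ (n + 1) ∈ (Ideal.span {x + t * y} ⊔ maximalIdeal R * J) * J ^ n := by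
  obtain ⟨c, hc, i₀, hi₀⟩ := hdep (fun i => x ^ (i : ℕ) * y ^ (n + 1 - i)) (fun i => by
    have := Ideal.mul_mem_mul (Ideal.pow_mem_pow hx (i : ℕ)) (Ideal.pow_mem_pow hy (n + 1 - i))
    rwa [← pow_add, Nat.add_sub_cancel' (by have := i.2; omega)] at this)
  -- the polynomial in `t`
  let p : Polynomial (ResidueField R) := ∑ i : Fin (n + 2), Polynomial.monomial (i : ℕ) (residue R (c i))
  have hp : p ≠ 0 := by
    intro h
    have h1 : p.coeff i₀ = residue R (c i₀) := by
      simp only [p, Polynomial.finsetSum_coeff, Polynomial.coeff_monomial, Fin.val_inj]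
      simp
    rw [h, Polynomial.coeff_zero] at h1
    exact hi₀ ((residue_eq_zero_iff _).1 h1.symm)
  obtain ⟨s, hs⟩ : ∃ s, p.eval s ≠ 0 := by
    by_contra! h
    exact hp (Polynomial.funext (by simpa using h))
  obtain ⟨s, rfl⟩ := residue_surjective s
  refine ⟨-s, ?_⟩
  set l := x + -s * y with hl
  have hlJ : l ∈ J := J.add_mem hx (J.mul_mem_left _ hy)
  set u := ∑ i : Fin (n + 2), c i * s ^ (i : ℕ) with hu
  have hunit : IsUnit u := by
    by_contra h
    apply hs
    have : residue R u = 0 := (residue_eq_zero_iff _).2 ((mem_maximalIdeal _).2 h)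
    rw [← this]
    simp [p, hu, Polynomial.eval_finsetSum]
  set T := (Ideal.span {l} ⊔ maximalIdeal R * J) * J ^ n with hT
  have hcT : ∑ i : Fin (n + 2), c i * (x ^ (i : ℕ) * y ^ (n + 1 - i)) ∈ T := by
    refine Ideal.mul_mono_left (le_sup_right (a := Ideal.span {l})) ?_
    rwa [mul_assoc, ← pow_succ']
  have hdiff : ∀ i : ℕ, i ≤ n + 1 → x ^ i * y ^ (n + 1 - i) - s ^ i * y ^ (n + 1) ∈ T := by
    intro i
    induction i with
    | zero => intro _; simp
    | succ i ih =>
      intro hi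
      have ih := ih (by omega)
      have e : x ^ (i + 1) * y ^ (n + 1 - (i + 1)) - s ^ (i + 1) * y ^ (n + 1) =
          l * (x ^ i * y ^ (n - i)) + s * (x ^ i * y ^ (n + 1 - i) - s ^ i * y ^ (n + 1)) := by
        have e1 : n + 1 - (i + 1) = n - i := by omega
        have e2 : n + 1 - i = n - i + 1 := by omega
        rw [e1, e2, hl]; ring
      rw [e]
      refine T.add_mem ?_ (T.mul_mem_left _ ih)
      refine Ideal.mul_mem_mul (Ideal.mem_sup_left (Ideal.mem_span_singleton_self l)) ?_
      have := Ideal.mul_mem_mul (Ideal.pow_mem_pow hx i) (Ideal.pow_mem_pow hy (n - i))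
      rwa [← pow_add, Nat.add_sub_cancel' (by omega)] at this
  have huT : u * y ^ (n + 1) ∈ T := by
    have e : u * y ^ (n + 1) = ∑ i : Fin (n + 2), c i * (x ^ (i : ℕ) * y ^ (n + 1 - i)) -
        ∑ i : Fin (n + 2), c i * (x ^ (i : ℕ) * y ^ (n + 1 - i) - s ^ (i : ℕ) * y ^ (n + 1)) := by
      rw [← Finset.sum_sub_distrib, hu, Finset.sum_mul]
      refine Finset.sum_congr rfl fun i _ => ?_
      ring
    rw [e]
    exact T.sub_mem hcT (T.sum_mem fun i _ => T.mul_mem_left _ (hdiff i (by have := i.2; omega)))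
  exact (Ideal.unit_mul_mem_iff_mem T hunit).1 huT

lemma aux_reduction {R : Type*} [CommRing R] [IsNoetherianRing R] [IsLocalRing R]
    [Infinite (ResidueField R)]
    (J : Ideal R) (n : ℕ)
    (hdep : ∀ a : Fin (n + 2) → R, (∀ i, a i ∈ J ^ (n + 1)) →
      ∃ c : Fin (n + 2) → R, ∑ i, c i * a i ∈ maximalIdeal R * J ^ (n + 1) ∧
        ∃ i, c i ∉ maximalIdeal R) :
    ∃ x ∈ J, ∃ n, J ^ (n + 1) ≤ Ideal.span {x} * J ^ n := by
  have key : ∀ I : Ideal R, I ≤ J → ∃ l ∈ I, ∃ n, I ^ (n + 1) ≤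
      (Ideal.span {l} ⊔ maximalIdeal R * J) * J ^ n := by
    intro I
    have hI : I.FG := IsNoetherian.noetherian I
    induction I, hI using Submodule.fg_induction with
    | singleton x =>
      intro _
      refine ⟨x, Ideal.mem_span_singleton_self x, 0, ?_⟩
      simp
    | sup I₁ I₂ _ _ ih₁ ih₂ =>
      intro hle
      have h₁ : I₁ ≤ J := le_sup_left.trans hle
      have h₂ : I₂ ≤ J := le_sup_right.trans hle
      obtain ⟨x, hx, qx⟩ := ih₁ h₁
      obtain ⟨y, hy, qy⟩ := ih₂ h₂
      obtain ⟨t, ht⟩ := aux_two_s6 J n hdep x y (h₁ hx) (h₂ hy)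
      have hxs : Ideal.span {x} ≤ J := (Ideal.span_singleton_le_iff_mem _).2 (h₁ hx)
      have hys : Ideal.span {y} ≤ J := (Ideal.span_singleton_le_iff_mem _).2 (h₂ hy)
      have hl : x + t * y ∈ I₁ ⊔ I₂ := Ideal.add_mem _ (Ideal.mem_sup_left hx)
        (Ideal.mul_mem_left _ _ (Ideal.mem_sup_right hy))
      have hls : Ideal.span {x + t * y} ≤ J := (Ideal.span_singleton_le_iff_mem _).2 (hle hl)
      refine ⟨x + t * y, hl, ?_⟩
      have Qy : ∃ n, (Ideal.span {y}) ^ (n + 1) ≤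
          (Ideal.span {x + t * y} ⊔ maximalIdeal R * J) * J ^ n := by
        refine ⟨n, ?_⟩
        rw [Ideal.span_singleton_pow, Ideal.span_singleton_le_iff_mem]
        exact ht
      have Ql : ∃ n, (Ideal.span {x + t * y}) ^ (n + 1) ≤
          (Ideal.span {x + t * y} ⊔ maximalIdeal R * J) * J ^ n := ⟨0, by simp⟩
      have Qx : ∃ n, (Ideal.span {x}) ^ (n + 1) ≤
          (Ideal.span {x + t * y} ⊔ maximalIdeal R * J) * J ^ n := by
        obtain ⟨k, hk⟩ := aux_Q_sup _ J _ _ hls hys Ql Qy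
        refine ⟨k, (Ideal.pow_right_mono ?_ _).trans hk⟩
        rw [Ideal.span_singleton_le_iff_mem]
        have : x + t * y - t * y ∈ Ideal.span {x + t * y} ⊔ Ideal.span {y} := Ideal.sub_mem _ (Ideal.mem_sup_left (Ideal.mem_span_singleton_self _))
          (Ideal.mul_mem_left _ _ (Ideal.mem_sup_right (Ideal.mem_span_singleton_self _)))
        rwa [add_sub_cancel_right] at this
      exact aux_Q_sup _ J _ _ h₁ h₂ (aux_Q_trans _ J _ _ x hxs qx Qx)
        (aux_Q_trans _ J _ _ y hys qy Qy)
  obtain ⟨l, hl, k, hk⟩ := key J le_rfl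
  refine ⟨l, hl, k, ?_⟩
  refine Submodule.le_of_le_smul_of_le_jacobson_bot (I := maximalIdeal R)
    (IsNoetherian.noetherian _) (jacobson_eq_maximalIdeal ⊥ bot_ne_top).ge ?_
  rw [Ideal.sup_mul] at hk
  rwa [smul_eq_mul, pow_succ', ← mul_assoc, ← pow_succ']

lemma aux_int {R : Type*} [CommRing R] [IsNoetherianRing R] [Nontrivial R] (J K : Ideal R) (z k : R)
    (hkK : k ∈ K) (hk : k ∈ nonZeroDivisors R) (h : ∀ w ∈ K, z * w ∈ J * K) :
    z ∈ idealIntegralClosure J := by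
  let f : Module.End R K := LinearMap.lsmul R K z
  have hr : LinearMap.range f ≤ J • ⊤ := by
    rintro _ ⟨w, rfl⟩
    have : (J • (⊤ : Submodule R K)).map K.subtype = J * K := by
      rw [Submodule.map_smul'', Submodule.map_top, Submodule.range_subtype]; rfl
    have h1 := h w w.2
    rw [← this] at h1
    obtain ⟨v, hv, hvw⟩ := h1
    have : v = f w := Subtype.ext hvw
    exact this ▸ hv
  obtain ⟨p, hp, -, hc, hz⟩ :=
    LinearMap.exists_monic_and_natDegree_eq_and_coeff_mem_pow_and_aeval_eq_zero R f J hr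
  have hpz : p.eval z = 0 := by
    have h1 : Polynomial.aeval f p = LinearMap.lsmul R K (p.eval z) := by
      have : f = algebraMap R (Module.End R K) z := rfl
      rw [this, Polynomial.aeval_algebraMap_apply_eq_algebraMap_eval]; rfl
    rw [h1] at hz
    have h2 := congrArg (fun g : Module.End R K => ((g ⟨k, hkK⟩ : K) : R)) hz
    have h3 : p.eval z * k = 0 := by simpa using h2
    exact (mul_right_mem_nonZeroDivisors_eq_zero_iff hk).1 h3
  refine ⟨p.natDegree, ?_, fun i => p.coeff (p.natDegree - i), ?_, ?_⟩
  · rw [Nat.pos_iff_ne_zero]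
    intro h0
    rw [hp.natDegree_eq_zero.1 h0] at hpz
    simp at hpz
  · intro i hi
    have := hc (p.natDegree - i)
    rwa [Nat.sub_sub_self (Finset.mem_Icc.1 hi).2] at this
  · rw [Polynomial.eval_eq_sum_range, Finset.sum_range_succ, hp.coeff_natDegree, one_mul,
      add_comm] at hpz
    rw [← hpz]
    congr 1
    refine Finset.sum_nbij' (fun i => p.natDegree - i) (fun i => p.natDegree - i) ?_ ?_ ?_ ?_ ?_
    all_goals intro i hi
    all_goals simp only [Finset.mem_Icc, Finset.mem_range] at hi ⊢
    all_goals omega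

lemma aux_pow_closure {R : Type*} [CommRing R] [IsNoetherianRing R] (J I : Ideal R)
    (hI : (I : Set R) = idealIntegralClosure J) (hJI : J ≤ I) :
    ∃ n, I ^ (n + 1) ≤ J * I ^ n := by
  have key : ∀ K : Ideal R, K ≤ I → ∃ n, K ^ (n + 1) ≤ J * I ^ n := by
    intro K
    have hK : K.FG := IsNoetherian.noetherian K
    induction K, hK using Submodule.fg_induction with
    | singleton x =>
      intro hx
      have hx : x ∈ I := hx (Ideal.mem_span_singleton_self x)
      have hx' : x ∈ idealIntegralClosure J := hI ▸ hx
      obtain ⟨n, hn, a, ha, he⟩ := hx'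
      obtain ⟨n, rfl⟩ := Nat.exists_eq_succ_of_ne_zero hn.ne'
      refine ⟨n, ?_⟩
      change Ideal.span {x} ^ (n + 1) ≤ _
      rw [Ideal.span_singleton_pow, Ideal.span_singleton_le_iff_mem,
        eq_neg_of_add_eq_zero_left he]
      refine neg_mem (Ideal.sum_mem _ fun i hi => ?_)
      have h1 := ha i hi
      rw [Finset.mem_Icc] at hi
      obtain ⟨i, rfl⟩ := Nat.exists_eq_add_of_le' hi.1
      have h2 : J ^ (i + 1) * I ^ (n.succ - (i + 1)) ≤ J * I ^ n := by
        rw [pow_succ', mul_assoc]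
        refine Ideal.mul_mono_right ?_
        refine (Ideal.mul_mono_left (Ideal.pow_right_mono hJI i)).trans_eq ?_
        rw [← pow_add]; congr 1; omega
      exact h2 (Ideal.mul_mem_mul h1 (Ideal.pow_mem_pow hx _))
    | sup I₁ I₂ _ _ ih₁ ih₂ =>
      intro hle
      have h₁ := le_sup_left.trans hle
      have h₂ := le_sup_right.trans hle
      exact aux_Q_sup _ I _ _ h₁ h₂ (ih₁ h₁) (ih₂ h₂)
  exact key I le_rfl

lemma aux_swap {R : Type*} [CommRing R] {I : Ideal R} (f : I →ₗ[R] R) (a b : I) :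
    f a * (b : R) = f b * (a : R) := by
  have h : (b : R) • a = (a : R) • b := Subtype.ext (mul_comm _ _)
  have := congrArg f h
  simp only [map_smul, smul_eq_mul] at this
  linear_combination this

lemma aux_le_closure {R : Type*} [CommRing R] (J : Ideal R) {x : R} (hx : x ∈ J) :
    x ∈ idealIntegralClosure J := by
  refine ⟨1, one_pos, fun _ => -x, ?_, by simp⟩
  intro i hi
  have : i = 1 := by simpa using hi
  subst this
  simpa using hx

lemma aux_mem_trace {R : Type*} [CommRing R] {M : Type*} [AddCommGroup M] [Module R M]
    (f : M →ₗ[R] R) (w : M) : f w ∈ traceIdeal R M :=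
  (le_iSup (fun f : M →ₗ[R] R => LinearMap.range f) f) ⟨w, rfl⟩

lemma aux_trace {R : Type*} [CommRing R] (J I : Ideal R)
    (hreg : ∃ x ∈ J, x ∈ nonZeroDivisors R) (htr : traceIdeal R ↥J = J)
    (hI : (I : Set R) = idealIntegralClosure J) (hJI : J ≤ I) : traceIdeal R ↥I = I := by
  apply le_antisymm
  · refine iSup_le fun f => ?_
    rintro _ ⟨w, rfl⟩
    obtain ⟨y, hyJ, hy⟩ := hreg
    have hw : (w : R) ∈ idealIntegralClosure J := hI ▸ w.2
    suffices f w ∈ idealIntegralClosure J by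
      rw [← hI] at this; exact this
    obtain ⟨n, hn, a, ha, he⟩ := hw
    let q : R := f ⟨y, hJI hyJ⟩
    have hfJ : ∀ b (hb : b ∈ J), f ⟨b, hJI hb⟩ ∈ J := by
      intro b hb
      have := aux_mem_trace (f ∘ₗ Submodule.inclusion hJI) ⟨b, hb⟩
      rw [htr] at this
      exact this
    have hle : Ideal.span {q} * J ≤ Ideal.span {y} * J := by
      rw [Ideal.span_singleton_mul_le_iff]
      intro b hb
      rw [Ideal.mem_span_singleton_mul]
      refine ⟨_, hfJ b hb, ?_⟩
      have := aux_swap f ⟨y, hJI hyJ⟩ ⟨b, hJI hb⟩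
      simp only at this
      rw [this]; ring
    have hb : ∀ i, ∃ b, i ∈ Finset.Icc 1 n → b ∈ J ^ i ∧ y ^ i * b = q ^ i * a i := by
      intro i
      by_cases hi : i ∈ Finset.Icc 1 n
      · have h1 := Ideal.pow_right_mono hle i
        rw [mul_pow, mul_pow, Ideal.span_singleton_pow, Ideal.span_singleton_pow] at h1
        have h2 := h1 (Ideal.mul_mem_mul (Ideal.mem_span_singleton_self _) (ha i hi))
        rw [Ideal.mem_span_singleton_mul] at h2
        obtain ⟨b, hb, e⟩ := h2
        exact ⟨b, fun _ => ⟨hb, e⟩⟩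
      · exact ⟨0, fun h => absurd h hi⟩
    choose b hb using hb
    refine ⟨n, hn, b, fun i hi => (hb i hi).1, ?_⟩
    have hq : y * f w = q * w := by
      have := aux_swap f ⟨y, hJI hyJ⟩ w
      simp only at this
      rw [this]; ring
    have hyn : y ^ n ∈ nonZeroDivisors R := pow_mem hy n
    refine (mul_left_mem_nonZeroDivisors_eq_zero_iff hyn).1 ?_
    rw [mul_add, Finset.mul_sum, ← mul_pow, hq]
    have : q ^ n * ((w : R) ^ n + ∑ i ∈ Finset.Icc 1 n, a i * (w : R) ^ (n - i)) = 0 := by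
      rw [he, mul_zero]
    rw [← this, mul_add, mul_pow, Finset.mul_sum]
    congr 1
    refine Finset.sum_congr rfl fun i hi => ?_
    have hin := (Finset.mem_Icc.1 hi).2
    obtain ⟨d, rfl⟩ := Nat.exists_eq_add_of_le hin
    rw [Nat.add_sub_cancel_left, pow_add, pow_add]
    calc y ^ i * y ^ d * (b i * f w ^ d) = (y ^ i * b i) * (y * f w) ^ d := by ring
      _ = _ := by rw [(hb i hi).2, hq]; ring
  · intro w hw
    exact aux_mem_trace I.subtype ⟨w, hw⟩

lemma aux_conductor {R : Type*} [CommRing R] (I : Ideal R)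
    (x : R) (hxI : x ∈ I) (hx : x ∈ nonZeroDivisors R) (n : ℕ)
    (hred : I ^ (n + 1) ≤ Ideal.span {x} * I ^ n) (z : R)
    (hz : ∀ f : I →ₗ[R] R, x ∣ f ⟨x, hxI⟩ * z) :
    ∃ C : Ideal R, x ^ n ∈ C ∧ ∀ c ∈ C, z * c ∈ I * C := by
  have cancel : ∀ k (a b : R), x ^ k * a = x ^ k * b → a = b := fun k a b h =>
    (mul_cancel_left_mem_nonZeroDivisors (pow_mem hx k)).1 h
  have hdiv : ∀ w ∈ I, ∀ u ∈ I ^ n, ∃ v ∈ I ^ n, w * u = x * v := by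
    intro w hw u hu
    have : w * u ∈ I ^ (n + 1) := by rw [pow_succ']; exact Ideal.mul_mem_mul hw hu
    obtain ⟨v, hv, e⟩ := Ideal.mem_span_singleton_mul.1 (hred this)
    exact ⟨v, hv, e.symm⟩
  have hred2 : ∀ k, I ^ (n + k) ≤ Ideal.span {x ^ k} * I ^ n := by
    intro k
    induction k with
    | zero => simp
    | succ k ih =>
      calc I ^ (n + (k + 1)) = I * I ^ (n + k) := by rw [← pow_succ', add_assoc]
        _ ≤ I * (Ideal.span {x ^ k} * I ^ n) := Ideal.mul_mono_right ih
        _ = Ideal.span {x ^ k} * I ^ (n + 1) := by ring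
        _ ≤ Ideal.span {x ^ k} * (Ideal.span {x} * I ^ n) := Ideal.mul_mono_right hred
        _ = Ideal.span {x ^ (k + 1)} * I ^ n := by
          rw [← mul_assoc, Ideal.span_singleton_mul_span_singleton, pow_succ]
  have hdiv2 : ∀ u ∈ I ^ n, ∀ w ∈ I ^ n, ∃ v ∈ I ^ n, u * w = x ^ n * v := by
    intro u hu w hw
    have : u * w ∈ I ^ (n + n) := by rw [pow_add]; exact Ideal.mul_mem_mul hu hw
    obtain ⟨v, hv, e⟩ := Ideal.mem_span_singleton_mul.1 (hred2 n this)
    exact ⟨v, hv, e.symm⟩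
  let C : Ideal R :=
    { carrier := {c | ∀ u ∈ I ^ n, x ^ n ∣ c * u}
      add_mem' := fun {a b} ha hb u hu => by rw [add_mul]; exact dvd_add (ha u hu) (hb u hu)
      zero_mem' := fun u _ => by simp
      smul_mem' := fun r c hc u hu => by
        rw [smul_eq_mul, mul_assoc]; exact Dvd.dvd.mul_left (hc u hu) r }
  have hCmem : ∀ c, c ∈ C ↔ ∀ u ∈ I ^ n, x ^ n ∣ c * u := fun c => Iff.rfl
  have hCx : ∀ c ∈ C, ∀ w ∈ I, x ∣ c * w := by
    intro c hc w hw
    obtain ⟨v, hv, e⟩ := hdiv w hw (x ^ n) (Ideal.pow_mem_pow hxI n)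
    obtain ⟨d, hd⟩ := hc v hv
    refine ⟨d, cancel n _ _ ?_⟩
    linear_combination c * e + x * hd
  -- multiplication by c / x
  have hzc : ∀ c ∈ C, x ∣ c * z := by
    intro c hc
    choose g hg using fun w : I => hCx c hc w w.2
    let f : I →ₗ[R] R :=
      { toFun := g
        map_add' := fun a b => cancel 1 _ _ (by
          rw [pow_one, ← hg, mul_add, ← hg, ← hg]; simp [mul_add])
        map_smul' := fun r a => cancel 1 _ _ (by
          have h1 := hg a
          have h2 := hg (r • a)
          simp only [Submodule.coe_smul, smul_eq_mul, RingHom.id_apply, pow_one] at h1 h2 ⊢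
          linear_combination r * h1 - h2) }
    have h1 := hz f
    have h2 : f ⟨x, hxI⟩ = c := cancel 1 _ _ (by
      have := hg ⟨x, hxI⟩
      simp only at this
      rw [pow_one]; change x * g _ = _
      rw [← this, mul_comm])
    rwa [h2] at h1
  refine ⟨C, fun u _ => dvd_mul_right _ _, fun c hc => ?_⟩
  obtain ⟨c', hc'⟩ := hzc c hc
  have : z * c = x * c' := by rw [mul_comm, hc']
  rw [this]
  refine Ideal.mul_mem_mul hxI ?_
  intro u hu
  obtain ⟨d, hd⟩ := hc u hu
  have hdC : d ∈ C := by
    intro w hw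
    obtain ⟨v, hv, e⟩ := hdiv2 u hu w hw
    obtain ⟨d', hd'⟩ := hc v hv
    refine ⟨d', cancel n _ _ ?_⟩
    linear_combination c * e + x ^ n * hd' - w * hd
  obtain ⟨e, he⟩ := hzc d hdC
  refine ⟨e, cancel 1 _ _ ?_⟩
  linear_combination x ^ n * he - u * hc' + z * hd

lemma aux_exists_reduction {R : Type*} [CommRing R] [IsNoetherianRing R] [IsLocalRing R]
    (hdim : ringKrullDim R = 1) (hCM : IsCohenMacaulayLocalRing R)
    (hk : Infinite (ResidueField R)) (I : Ideal R) (hreg : ∃ x ∈ I, x ∈ nonZeroDivisors R) :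
    ∃ x ∈ I, ∃ n, I ^ (n + 1) ≤ Ideal.span {x} * I ^ n := by
  obtain ⟨rs, hm, hrs, hlen⟩ := hCM
  obtain ⟨y, hym, hy⟩ : ∃ y ∈ maximalIdeal R, y ∈ nonZeroDivisors R := by
    rw [hdim] at hlen
    have h1 : rs.length = 1 := by exact_mod_cast hlen.symm
    obtain ⟨y, rfl⟩ := List.length_eq_one_iff.1 h1
    refine ⟨y, hm y (by simp), ?_⟩
    have := hrs.toIsWeaklyRegular
    rw [RingTheory.Sequence.isWeaklyRegular_cons_iff] at this
    rw [mem_nonZeroDivisors_iff_right]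
    intro a ha
    refine this.1 ?_
    simp only [smul_eq_mul, mul_zero]
    rw [mul_comm, ha]
  obtain ⟨w, hwI, hw⟩ := hreg
  have hfin := aux_finlen hdim (Ideal.span {y}) y hy (Ideal.mem_span_singleton_self y)
  obtain ⟨N, hN⟩ := ENat.ne_top_iff_exists.1 hfin
  refine aux_reduction I N ?_
  intro a ha
  refine aux_dep (I ^ (N + 1)) y hym (N + 1) ?_ a ha
  rw [aux_length_s6 _ y hy (aux_finlen hdim _ (w ^ (N + 1)) (pow_mem hw _)
    (Ideal.pow_mem_pow hwI _)), ← hN]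
  exact_mod_cast Nat.le_succ N


/-- Let `R` be an analytically unramified one-dimensional Cohen–Macaulay
local ring with infinite residue field, and let `J` be a regular trace ideal of `R`. Then the
integral closure `J̄` is a reflexive trace ideal and `tr_R(J̄*) = J̄`. -/
theorem integralClosure_of_trace_reflexive_trace
    (R : Type*) [CommRing R] [IsNoetherianRing R] [IsLocalRing R]
    (hur : IsReduced (AdicCompletion (maximalIdeal R) R))
    (hdim : ringKrullDim R = 1) (hCM : IsCohenMacaulayLocalRing R)
    (hk : Infinite (ResidueField R))
    (J : Ideal R) (hreg : ∃ x ∈ J, x ∈ nonZeroDivisors R)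
    (htr : traceIdeal R ↥J = J)
    (Jbar : Ideal R) (hJbar : (Jbar : Set R) = idealIntegralClosure J) :
    Module.IsReflexive R ↥Jbar ∧ traceIdeal R ↥Jbar = Jbar ∧
      traceIdeal R (Module.Dual R ↥Jbar) = Jbar := by
  have hJI : J ≤ Jbar := fun x hx => by
    have := aux_le_closure J hx
    rw [← hJbar] at this; exact this
  have htrI : traceIdeal R ↥Jbar = Jbar := aux_trace J Jbar hreg htr hJbar hJI
  obtain ⟨y, hyJ, hy⟩ := hreg
  obtain ⟨x, hxI, n, hred⟩ := aux_exists_reduction hdim hCM hk Jbar ⟨y, hJI hyJ, hy⟩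
  have hx : x ∈ nonZeroDivisors R := by
    have h1 := hred (Ideal.pow_mem_pow (hJI hyJ) (n + 1))
    obtain ⟨v, -, e⟩ := Ideal.mem_span_singleton_mul.1 h1
    have h2 : x * v ∈ nonZeroDivisors R := e ▸ pow_mem hy (n + 1)
    exact (mul_mem_nonZeroDivisors.1 h2).1
  have hsurj : ∀ φ : Module.Dual R (Module.Dual R ↥Jbar), ∃ w : Jbar, ∀ f, φ f = f w := by
    intro φ
    let ι : Module.Dual R ↥Jbar := Jbar.subtype
    have hφ : ∀ f : Module.Dual R ↥Jbar, x * φ f = f ⟨x, hxI⟩ * φ ι := by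
      intro f
      have h1 : x • f = f ⟨x, hxI⟩ • ι := by
        ext w
        have := aux_swap f w ⟨x, hxI⟩
        simp only [LinearMap.smul_apply, smul_eq_mul]
        change x * f w = f ⟨x, hxI⟩ * (w : R)
        rw [← this]; exact mul_comm _ _
      have := congrArg φ h1
      simpa only [map_smul, smul_eq_mul] using this
    have hz : φ ι ∈ Jbar := by
      obtain ⟨C, hCx, hC⟩ := aux_conductor Jbar x hxI hx n hred (φ ι)
        (fun f => ⟨φ f, (hφ f).symm⟩)
      obtain ⟨M, hM⟩ := aux_pow_closure J Jbar hJbar hJI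
      have : φ ι ∈ idealIntegralClosure J := by
        refine aux_int J (Jbar ^ M * C) (φ ι) (x ^ M * x ^ n)
          (Ideal.mul_mem_mul (Ideal.pow_mem_pow hxI M) hCx)
          (mul_mem (pow_mem hx _) (pow_mem hx _)) ?_
        intro w hw
        have h1 : Ideal.span {φ ι} * C ≤ Jbar * C := by
          rw [Ideal.span_singleton_mul_le_iff]; exact hC
        have h2 : Ideal.span {φ ι} * (Jbar ^ M * C) ≤ J * (Jbar ^ M * C) :=
          calc Ideal.span {φ ι} * (Jbar ^ M * C) = Jbar ^ M * (Ideal.span {φ ι} * C) := by ring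
            _ ≤ Jbar ^ M * (Jbar * C) := Ideal.mul_mono_right h1
            _ = Jbar ^ (M + 1) * C := by ring
            _ ≤ J * Jbar ^ M * C := Ideal.mul_mono_left hM
            _ = _ := by ring
        exact h2 (Ideal.mul_mem_mul (Ideal.mem_span_singleton_self _) hw)
      rw [← hJbar] at this; exact this
    refine ⟨⟨φ ι, hz⟩, fun f => ?_⟩
    apply (mul_cancel_left_mem_nonZeroDivisors hx).1
    rw [hφ f]
    have := aux_swap f ⟨x, hxI⟩ ⟨φ ι, hz⟩
    simp only at this
    rw [this, mul_comm]
  refine ⟨⟨⟨?_, ?_⟩⟩, htrI, le_antisymm ?_ ?_⟩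
  · intro a b hab
    have := congrArg (fun φ => φ (Jbar.subtype : Module.Dual R ↥Jbar)) hab
    exact Subtype.ext this
  · intro φ
    obtain ⟨w, hw⟩ := hsurj φ
    exact ⟨w, LinearMap.ext fun f => (hw f).symm⟩
  · refine iSup_le fun φ => ?_
    rintro _ ⟨f, rfl⟩
    obtain ⟨w, hw⟩ := hsurj φ
    rw [hw f]
    have := aux_mem_trace f w
    rwa [htrI] at this
  · intro w hw
    exact aux_mem_trace (Module.Dual.eval R ↥Jbar ⟨w, hw⟩) (Jbar.subtype : Module.Dual R ↥Jbar)
end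

section
/- Let R be an analytically unramified one-dimensional non-regular Cohen–Macaulay local ring with infinite residue field and conductor C = R : \bar{R}. If length(R/C) ≤ 3, then every proper regular trace ideal of R is reflexive. -/
open IsLocalRing

lemma chain_le {R : Type*} [CommRing R] (C : Ideal R)
    (hlen : moduleLength R (R ⧸ C) ≤ 3) (I : Fin 5 → Ideal R) (hC : C ≤ I 0)
    (hI : StrictMono I) : False := by
  have hCi : ∀ i, C ≤ I i := fun i => hC.trans (hI.monotone (Fin.zero_le i))
  let g : Fin 5 → Submodule R (R ⧸ C) := fun i => Submodule.map (Submodule.mkQ C) (I i)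
  have hg : StrictMono g := by
    intro i j hij
    refine lt_of_le_of_ne (Submodule.map_mono (hI hij).le) fun h => ?_
    have := congrArg (Submodule.comap (Submodule.mkQ C)) h
    simp only [g, Submodule.comap_map_mkQ, sup_eq_right.2 (hCi _)] at this
    exact (hI hij).ne this
  have h1 := Order.LTSeries.length_le_krullDim (LTSeries.mk 4 g hg)
  have h2 : ((4 : ℕ) : WithBot ℕ∞) ≤ ((3 : ℕ) : WithBot ℕ∞) := h1.trans hlen
  rw [Nat.cast_le] at h2
  omega

lemma pow_mem_of_len {R : Type*} [CommRing R] [IsLocalRing R] (C : Ideal R)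
    (hlen : moduleLength R (R ⧸ C) ≤ 3) (x : R) (hx : x ∈ maximalIdeal R) : ∃ n, x ^ n ∈ C := by
  by_contra! hn
  have key : ∀ n, C ⊔ Ideal.span {x ^ (n + 1)} < C ⊔ Ideal.span {x ^ n} := by
    intro n
    refine lt_of_le_of_ne (sup_le_sup_left ?_ _) fun h => ?_
    · rw [Ideal.span_singleton_le_span_singleton]; exact pow_dvd_pow _ (Nat.le_succ n)
    · have : x ^ n ∈ C ⊔ Ideal.span {x ^ (n + 1)} := by
        rw [h]; exact Ideal.mem_sup_right (Ideal.mem_span_singleton_self _)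
      obtain ⟨c, hc, d, hd, hcd⟩ := Submodule.mem_sup.1 this
      obtain ⟨e, rfl⟩ := Ideal.mem_span_singleton'.1 hd
      have hu : IsUnit (1 - e * x) := by
        by_contra hu
        have h1 : (1 - e * x) ∈ maximalIdeal R := hu
        have h2 : (1 : R) ∈ maximalIdeal R := by
          have := add_mem h1 (Ideal.mul_mem_left _ e hx)
          simpa using this
        exact (Ideal.ne_top_iff_one _).1 (maximalIdeal.isMaximal R).ne_top h2
      apply hn n
      have : c = x ^ n * (1 - e * x) := by linear_combination hcd
      rw [this] at hc
      exact (Ideal.mul_unit_mem_iff_mem C hu).1 hc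
  refine chain_le C hlen (fun i => C ⊔ Ideal.span {x ^ (4 - (i : ℕ))}) le_sup_left ?_
  apply Fin.strictMono_iff_lt_succ.2
  intro i
  fin_cases i
  · exact key 3
  · exact key 2
  · exact key 1
  · exact key 0

lemma artin_ann {S : Type*} [CommRing S] [IsArtinianRing S] (H : Ideal S) (hH : H ≠ ⊤) :
    ∃ b : S, b ≠ 0 ∧ ∀ h ∈ H, b * h = 0 := by
  have := Ideal.bot_lt_annihilator_of_disjoint_nonZeroDivisors (I := H) (by
    rw [Set.disjoint_left]
    intro a ha h0
    exact hH (Ideal.eq_top_of_isUnit_mem _ ha (IsArtinianRing.isUnit_of_mem_nonZeroDivisors h0)))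
  obtain ⟨b, hb, hb0⟩ := SetLike.exists_of_lt this
  refine ⟨b, hb0, fun h hh => ?_⟩
  have := Module.mem_annihilator.1 hb ⟨h, hh⟩
  simpa using congrArg Subtype.val this

lemma exists_mul_mem {R S : Type*} [CommRing R] [IsNoetherianRing R] [CommRing S] [Algebra R S]
    [Module.Finite R S] (hdim : ringKrullDim R = 1) (x : R) (hx : x ∈ nonZeroDivisors R)
    (H : Ideal S) (hH : H ≠ ⊤) (hxH : algebraMap R S x ∈ H) :
    ∃ b : S, (¬ algebraMap R S x ∣ b) ∧ ∀ h ∈ H, algebraMap R S x ∣ b * h := by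
  have hart : IsArtinianRing (R ⧸ Ideal.span {x}) := by
    rw [isArtinianRing_iff_krullDimLE_zero, Ring.KrullDimLE, Order.krullDimLE_iff,
      ← ENat.WithBot.add_le_add_one_right_iff, Nat.cast_zero, zero_add]
    exact (ringKrullDim_quotient_succ_le_of_nonZeroDivisor hx).trans hdim.le
  let P : Ideal S := (Ideal.span {x}).map (algebraMap R S)
  have hfin : Module.Finite (R ⧸ Ideal.span {x}) (S ⧸ P) :=
    Module.Finite.of_restrictScalars_finite R _ _
  have : IsArtinianRing (S ⧸ P) := IsArtinianRing.of_finite (R ⧸ Ideal.span {x}) (S ⧸ P)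
  have hP : P = Ideal.span {algebraMap R S x} := by
    simp [P, Ideal.map_span]
  have hmem : ∀ s : S, Ideal.Quotient.mk P s = 0 ↔ algebraMap R S x ∣ s := by
    intro s
    rw [Ideal.Quotient.eq_zero_iff_mem, hP, Ideal.mem_span_singleton]
  have hPH : P ≤ H := by
    rw [hP, Ideal.span_singleton_le_iff_mem]; exact hxH
  obtain ⟨b, hb0, hb⟩ := artin_ann (H.map (Ideal.Quotient.mk P)) (by
    intro h
    apply hH
    have := congrArg (Ideal.comap (Ideal.Quotient.mk P)) h
    rwa [Ideal.comap_map_mk hPH, Ideal.comap_top] at this)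
  obtain ⟨b, rfl⟩ := Ideal.Quotient.mk_surjective b
  refine ⟨b, fun h => hb0 ((hmem b).2 h), fun h hh => ?_⟩
  rw [← hmem, map_mul]
  exact hb _ (Ideal.mem_map_of_mem _ hh)

lemma integral_of_stable {R K : Type*} [CommRing R] [CommRing K] [Algebra R K]
    (N : Submodule R K) (hN : N.FG) (u : K) (huN : u ∈ N) (hu : IsUnit u) (f : K)
    (hf : ∀ n ∈ N, f * n ∈ N) : IsIntegral R f := by
  have : Module.Finite R N := Module.Finite.iff_fg.2 hN
  let φ : Module.End R N := (LinearMap.mulLeft R f).restrict hf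
  obtain ⟨p, hp, h0⟩ := LinearMap.exists_monic_and_aeval_eq_zero R φ
  refine ⟨p, hp, ?_⟩
  have hpow : ∀ (k : ℕ) (n : N), ((φ ^ k) n : K) = f ^ k * n := by
    intro k
    induction k with
    | zero => simp
    | succ k ih => intro n; rw [pow_succ, Module.End.mul_apply, ih, pow_succ, mul_assoc]; rfl
  have h1 : ∀ q : Polynomial R, ∀ n : N,
      ((Polynomial.aeval φ q n : N) : K) = Polynomial.aeval f q * n := by
    intro q n
    induction q using Polynomial.induction_on' with
    | add p q hp hq => simp [hp, hq, add_mul]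
    | monomial k a =>
      simp [Polynomial.aeval_monomial, Module.algebraMap_end_apply, hpow, Algebra.smul_def, mul_assoc]
  have h2 := h1 p ⟨u, huN⟩
  rw [h0] at h2
  change Polynomial.aeval f p = 0
  exact (hu.mul_left_eq_zero).1 (by simpa using h2.symm)

lemma fg_of_mul_mem {R K : Type*} [CommRing R] [IsNoetherianRing R] [CommRing K] [Algebra R K]
    (N : Submodule R K) (u : K) (hu : IsUnit u) (h : ∀ n ∈ N, u * n ∈ (1 : Submodule R K)) :
    N.FG := by
  obtain ⟨u, rfl⟩ := hu
  have hle : N ≤ Submodule.span R {((u⁻¹ : Kˣ) : K)} := by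
    intro n hn
    obtain ⟨r, hr⟩ := Submodule.mem_one.1 (h n hn)
    rw [Submodule.mem_span_singleton]
    refine ⟨r, ?_⟩
    rw [Algebra.smul_def, hr, mul_comm, Units.inv_mul_cancel_left]
  exact Submodule.FG.of_le (Submodule.fg_span_singleton _) hle

/-- reflexivity from the fractional statement -/
lemma reflexive_of_div {R : Type*} [CommRing R] (K : Type*) [CommRing K] [Algebra R K]
    [IsFractionRing R K] (J : Ideal R) (x : R) (hxJ : x ∈ J) (hx : x ∈ nonZeroDivisors R)
    (h : ∀ j : R, (∀ d : K, (∀ y ∈ J, d * algebraMap R K y ∈ (1 : Submodule R K)) →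
      algebraMap R K j * d ∈ (1 : Submodule R K)) → j ∈ J) :
    Module.IsReflexive R J := by
  have hinj : Function.Injective (algebraMap R K) := IsFractionRing.injective R K
  have hcomm : ∀ (g : J →ₗ[R] R) (a : R) (ha : a ∈ J) (b : R) (hb : b ∈ J),
      a * g ⟨b, hb⟩ = b * g ⟨a, ha⟩ := by
    intro g a ha b hb
    rw [← smul_eq_mul, ← smul_eq_mul, ← map_smul, ← map_smul]
    congr 1
    ext
    simp [mul_comm]
  refine ⟨⟨?_, ?_⟩⟩
  · intro a b hab
    have := congrArg (fun φ => φ (Submodule.subtype J)) hab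
    ext
    simpa using this
  · intro φ
    have hφ : ∀ g : J →ₗ[R] R, x * φ g = g ⟨x, hxJ⟩ * φ (Submodule.subtype J) := by
      intro g
      rw [← smul_eq_mul, ← smul_eq_mul, ← map_smul, ← map_smul]
      congr 1
      ext ⟨b, hb⟩
      simp only [LinearMap.smul_apply, smul_eq_mul, Submodule.subtype_apply]
      rw [hcomm g x hxJ b hb, mul_comm]
    have hj : φ (Submodule.subtype J) ∈ J := by
      apply h
      intro d hd
      have hd' : ∀ y : J, ∃ r : R, algebraMap R K r = d * algebraMap R K y := fun y =>
        Submodule.mem_one.1 (hd y y.2)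
      choose g hg using hd'
      let G : J →ₗ[R] R :=
        { toFun := g
          map_add' := fun a b => hinj (by simp [hg, mul_add])
          map_smul' := fun a b => hinj (by simp [hg]; ring) }
      rw [Submodule.mem_one]
      refine ⟨φ G, ?_⟩
      have h1 := congrArg (algebraMap R K) (hφ G)
      rw [map_mul, map_mul] at h1
      have h2 : algebraMap R K (G ⟨x, hxJ⟩) = d * algebraMap R K x := hg _
      rw [h2] at h1
      have hu := IsLocalization.map_units K (⟨x, hx⟩ : nonZeroDivisors R)
      apply hu.mul_left_cancel
      simp only
      linear_combination h1
    refine ⟨⟨_, hj⟩, ?_⟩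
    ext g
    have h1 := hφ g
    have h2 := hcomm g x hxJ _ hj
    rw [mul_comm (g _), ← h2] at h1
    exact ((mul_cancel_left_mem_nonZeroDivisors hx).1 h1).symm

/-- The extension of a regular ideal to the integral closure is invertible. -/
lemma one_mem_inv_mul {R : Type*} [CommRing R] [IsNoetherianRing R] (K : Type*) [CommRing K]
    [Algebra R K] [IsFractionRing R K] (hdim : ringKrullDim R = 1)
    (J : Ideal R) (x : R) (hxJ : x ∈ J) (hx : x ∈ nonZeroDivisors R)
    (c : R) (hc : c ∈ nonZeroDivisors R)
    (hcA : ∀ a ∈ integralClosure R K, algebraMap R K c * a ∈ (1 : Submodule R K))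
    (A I : Submodule R K) (hA : A = Subalgebra.toSubmodule (integralClosure R K))
    (hI : I = Submodule.map (Algebra.linearMap R K) J * A) :
    (1 : K) ∈ (A / I) * I := by
  by_contra h1
  have hAA : A * A = A := by rw [hA]; exact Subalgebra.isIdempotentElem_toSubmodule _
  have h1A : (1 : Submodule R K) ≤ A := by
    rw [hA, Submodule.one_le]; exact one_mem (integralClosure R K)
  have hJ1 : Submodule.map (Algebra.linearMap R K) J ≤ 1 := by
    rintro _ ⟨y, -, rfl⟩
    exact Submodule.mem_one.2 ⟨y, rfl⟩
  have hIA : I ≤ A := by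
    rw [hI]; calc _ ≤ 1 * A := by gcongr
      _ = A := one_mul _
  have hxI : algebraMap R K x ∈ I := by
    rw [hI, ← mul_one (algebraMap R K x)]
    exact Submodule.mul_mem_mul ⟨x, hxJ, rfl⟩ (h1A (Submodule.one_le.1 le_rfl))
  have hHA : (A / I) * I ≤ A := Submodule.le_div_iff_mul_le.1 le_rfl
  have hAH : A * ((A / I) * I) ≤ (A / I) * I := by
    have : A * I = I := by rw [hI, mul_left_comm, hAA]
    rw [mul_left_comm, this]
  have h1inv : (1 : K) ∈ A / I := by
    rw [Submodule.mem_div_iff_forall_mul_mem]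
    intro y hy; rw [one_mul]; exact hIA hy
  have hux := IsLocalization.map_units K (⟨x, hx⟩ : nonZeroDivisors R)
  have huc := IsLocalization.map_units K (⟨c, hc⟩ : nonZeroDivisors R)
  simp only at hux huc
  let S := integralClosure R K
  have hSmem : ∀ a : K, a ∈ A ↔ a ∈ S := by intro a; rw [hA]; rfl
  have hSfin : Module.Finite R S := by
    have : A.FG := fg_of_mul_mem A _ huc fun n hn => hcA n ((hSmem n).1 hn)
    rw [hA] at this
    exact Module.Finite.iff_fg.2 this
  let H : Ideal S :=
    { carrier := {s | (s : K) ∈ (A / I) * I}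
      add_mem' := fun {a b} ha hb => by
        simp only [Set.mem_ofPred_eq] at ha hb ⊢
        exact add_mem ha hb
      zero_mem' := by simp
      smul_mem' := fun a b hb => by
        simp only [Set.mem_ofPred_eq] at hb ⊢
        exact hAH (Submodule.mul_mem_mul ((hSmem _).2 a.2) hb) }
  have hH : H ≠ ⊤ := by
    rw [Ideal.ne_top_iff_one]
    exact h1
  have hxH : algebraMap R S x ∈ H := by
    change algebraMap R K x ∈ (A / I) * I
    rw [← one_mul (algebraMap R K x)]
    exact Submodule.mul_mem_mul h1inv hxI
  obtain ⟨b, hb, hbH⟩ := exists_mul_mem hdim x hx H hH hxH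
  obtain ⟨u, hu⟩ := hux
  let f : K := (u⁻¹ : Kˣ) * (b : K)
  have hfH : ∀ h ∈ (A / I) * I, f * h ∈ A := by
    intro h hh
    obtain ⟨s, hs⟩ := hbH ⟨h, (hSmem _).1 (hHA hh)⟩ hh
    have hs' : (b : K) * h = algebraMap R K x * s := congrArg Subtype.val hs
    have : f * h = s := by
      simp only [f]
      rw [mul_assoc, hs', ← hu, Units.inv_mul_cancel_left]
    rw [this]; exact (hSmem _).2 s.2
  have hfinv : ∀ n ∈ A / I, f * n ∈ A / I := by
    intro n hn
    rw [Submodule.mem_div_iff_forall_mul_mem]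
    intro y hy
    rw [mul_assoc]
    exact hfH _ (Submodule.mul_mem_mul hn hy)
  have hfg : (A / I).FG := by
    refine fg_of_mul_mem _ (algebraMap R K c * u) (huc.mul u.isUnit) fun n hn => ?_
    rw [mul_assoc, hu, mul_comm _ n]
    exact hcA _ ((hSmem _).1 (Submodule.mem_div_iff_forall_mul_mem.1 hn _ hxI))
  have hfint : IsIntegral R f := integral_of_stable _ hfg 1 h1inv isUnit_one f hfinv
  apply hb
  refine ⟨⟨f, hfint⟩, ?_⟩
  ext
  change (b : K) = algebraMap R K x * f
  simp only [f]
  rw [← hu, Units.mul_inv_cancel_left]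

/-- Let `R` be an analytically unramified one-dimensional non-regular
Cohen–Macaulay local ring with infinite residue field and conductor `C = R : R̄`. If
`length(R/C) ≤ 3`, then every proper regular trace ideal of `R` is reflexive. -/
theorem trace_reflexive_of_colength_le_three
    (R : Type*) [CommRing R] [IsNoetherianRing R] [IsLocalRing R]
    (hur : IsReduced (AdicCompletion (maximalIdeal R) R))
    (hdim : ringKrullDim R = 1) (hCM : IsCohenMacaulayLocalRing R)
    (hnonreg : ¬ (maximalIdeal R).IsPrincipal) (hk : Infinite (ResidueField R))
    (hlen : moduleLength R (R ⧸ conductorIdeal R) ≤ 3)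
    (J : Ideal R) (hproper : J ≠ ⊤) (hreg : ∃ x ∈ J, x ∈ nonZeroDivisors R)
    (htr : traceIdeal R ↥J = J) :
    Module.IsReflexive R ↥J := by
  obtain ⟨x, hxJ, hx⟩ := hreg
  let K := FractionRing R
  let F : R →+* K := algebraMap R K
  have hFinj : Function.Injective F := IsFractionRing.injective R K
  have hJm : J ≤ maximalIdeal R := IsLocalRing.le_maximalIdeal hproper
  obtain ⟨n, hn⟩ := pow_mem_of_len _ hlen x (hJm hxJ)
  obtain ⟨c, hcdef⟩ : ∃ c, c = x ^ n := ⟨_, rfl⟩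
  have hc : c ∈ nonZeroDivisors R := hcdef ▸ pow_mem hx n
  rw [← hcdef] at hn
  let A : Submodule R K := Subalgebra.toSubmodule (integralClosure R K)
  have hAmem : ∀ a : K, a ∈ A ↔ IsIntegral R a := fun a => Iff.rfl
  have hAA : A * A = A := Subalgebra.isIdempotentElem_toSubmodule _
  have h1A : (1 : K) ∈ A := one_mem (integralClosure R K)
  -- the conductor
  let C : Submodule R K := 1 / A
  have hCmem : ∀ r : R, r ∈ conductorIdeal R ↔ F r ∈ C := by
    intro r
    rw [conductorIdeal, Submodule.mem_colon, Submodule.mem_div_iff_forall_mul_mem]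
    simp only [Algebra.smul_def]
    rfl
  have hC1 : C ≤ 1 := by
    intro y hy
    have := Submodule.mem_div_iff_forall_mul_mem.1 hy 1 h1A
    rwa [mul_one] at this
  have hCA : C * A ≤ C := by
    rw [Submodule.le_div_iff_mul_le, mul_assoc, hAA]
    exact Submodule.le_div_iff_mul_le.1 le_rfl
  have hcC : F c ∈ C := (hCmem c).1 hn
  have huc := IsLocalization.map_units K (⟨c, hc⟩ : nonZeroDivisors R)
  have hux := IsLocalization.map_units K (⟨x, hx⟩ : nonZeroDivisors R)
  have hCC : ∀ f : K, (∀ y ∈ C, f * y ∈ C) → f ∈ A := by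
    intro f hf
    refine integral_of_stable C ?_ _ hcC huc f hf
    refine fg_of_mul_mem C 1 isUnit_one fun n hn => ?_
    rw [one_mul]; exact hC1 hn
  let J' : Submodule R K := Submodule.map (Algebra.linearMap R K) J
  have hJ'mem : ∀ y ∈ J, F y ∈ J' := fun y hy => ⟨y, hy, rfl⟩
  have hJ'mem' : ∀ y : R, F y ∈ J' → y ∈ J := by
    rintro y ⟨z, hz, hzy⟩
    rwa [← hFinj hzy]
  let I : Submodule R K := J' * A
  have hinv : (1 : K) ∈ (A / I) * I :=
    one_mem_inv_mul K hdim J x hxJ hx c hc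
      (fun a ha => Submodule.mem_div_iff_forall_mul_mem.1 hcC a ha) A I rfl rfl
  have hIA : A * I = I := by simp only [I]; rw [mul_left_comm, hAA]
  have hCI : C * (A / I) * I ≤ C := by
    rw [mul_assoc]
    calc _ ≤ C * A := by
          gcongr
          exact Submodule.le_div_iff_mul_le.1 le_rfl
      _ ≤ C := hCA
  let D : Submodule R K := 1 / J'
  have hJ'I : J' ≤ I := by
    intro y hy
    rw [← mul_one y]; exact Submodule.mul_mem_mul hy h1A
  have hCID : C * (A / I) ≤ D := by
    rw [Submodule.le_div_iff_mul_le]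
    calc _ ≤ C * (A / I) * I := by gcongr
      _ ≤ 1 := hCI.trans hC1
  have htrD : D * J' ≤ J' := by
    rw [Submodule.mul_le]
    rintro d hd _ ⟨y, hy, rfl⟩
    have hd' : ∀ y : J, ∃ r : R, F r = d * F y := fun y =>
      Submodule.mem_one.1 (Submodule.mem_div_iff_forall_mul_mem.1 hd _ (hJ'mem y y.2))
    choose g hg using hd'
    let G : J →ₗ[R] R :=
      { toFun := g
        map_add' := fun a b => hFinj (by simp [hg, mul_add])
        map_smul' := fun a b => hFinj (by simp [hg]; ring) }
    have h1 : g ⟨y, hy⟩ ∈ J := by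
      have h2 : G ⟨y, hy⟩ ∈ traceIdeal R J :=
        Submodule.mem_iSup_of_mem G (LinearMap.mem_range_self G _)
      rw [htr] at h2
      exact h2
    change d * F y ∈ J'
    rw [← hg ⟨y, hy⟩]
    exact hJ'mem _ h1
  have hCJ' : C ≤ J' := by
    intro y hy
    have h1 : y * 1 ∈ C * ((A / I) * I) := Submodule.mul_mem_mul hy hinv
    have h2 : C * ((A / I) * I) ≤ J' := by
      calc C * ((A / I) * I) = (C * A * (A / I)) * J' := by simp only [I]; ring
        _ ≤ (C * (A / I)) * J' := by gcongr
        _ ≤ D * J' := by gcongr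
        _ ≤ J' := htrD
    rw [mul_one] at h1
    exact h2 h1
  have hCJ : conductorIdeal R ≤ J := fun r hr => hJ'mem' r (hCJ' ((hCmem r).1 hr))
  -- the double dual
  let E : Ideal R :=
    { carrier := {j | ∀ d ∈ D, F j * d ∈ (1 : Submodule R K)}
      add_mem' := fun {a b} ha hb d hd => by
        rw [map_add, add_mul]; exact add_mem (ha d hd) (hb d hd)
      zero_mem' := fun d hd => by rw [map_zero, zero_mul]; exact zero_mem _
      smul_mem' := fun r a ha d hd => by
        rw [smul_eq_mul, map_mul, mul_assoc, ← Algebra.smul_def]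
        exact Submodule.smul_mem _ _ (ha d hd) }
  have hEmem : ∀ j : R, j ∈ E ↔ ∀ d ∈ D, F j * d ∈ (1 : Submodule R K) := fun j => Iff.rfl
  have hDmem : ∀ d : K, d ∈ D ↔ ∀ y ∈ J, d * F y ∈ (1 : Submodule R K) := by
    intro d
    rw [Submodule.mem_div_iff_forall_mul_mem]
    constructor
    · intro h y hy; exact h _ (hJ'mem y hy)
    · rintro h _ ⟨y, hy, rfl⟩; exact h y hy
  have hJE : J ≤ E := by
    intro y hy d hd
    rw [mul_comm]; exact (hDmem d).1 hd y hy
  have hEm : E ≤ maximalIdeal R := by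
    apply IsLocalRing.le_maximalIdeal
    rw [Ideal.ne_top_iff_one]
    intro h1
    obtain ⟨b, hb, hbJ⟩ := exists_mul_mem (S := R) hdim x hx J hproper hxJ
    obtain ⟨u, hu⟩ := hux
    have hu' : F x = (u : K) := hu.symm
    have hbD : ((u⁻¹ : Kˣ) : K) * F b ∈ D := by
      rw [hDmem]
      intro y hy
      obtain ⟨s, hs⟩ := hbJ y hy
      have hs' : b * y = x * s := hs
      rw [mul_assoc, ← map_mul, hs', map_mul, hu', Units.inv_mul_cancel_left]
      exact Submodule.mem_one.2 ⟨s, rfl⟩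
    have h2 := h1 _ hbD
    rw [map_one, one_mul] at h2
    obtain ⟨s, hs⟩ := Submodule.mem_one.1 h2
    apply hb
    refine ⟨s, hFinj ?_⟩
    have hs' : F s = ((u⁻¹ : Kˣ) : K) * F b := hs
    change F b = F (x * s)
    rw [map_mul, hs', hu', Units.mul_inv_cancel_left]
  refine reflexive_of_div K J x hxJ hx fun j hj => ?_
  have hjE : j ∈ E := fun d hd => hj d ((hDmem d).1 hd)
  by_contra hjJ
  have hJltE : J < E := lt_of_le_of_ne hJE fun h => hjJ (h ▸ hjE)
  -- the conductor is reflexive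
  have hCltJ : conductorIdeal R < J := by
    refine lt_of_le_of_ne hCJ fun h => hjJ ?_
    rw [← h, hCmem, Submodule.mem_div_iff_forall_mul_mem]
    intro a ha
    apply hjE
    rw [hDmem]
    intro y hy
    rw [← h, hCmem] at hy
    rw [mul_comm]
    exact Submodule.mem_div_iff_forall_mul_mem.1 hy a ha
  have hmtop : maximalIdeal R < ⊤ := lt_top_iff_ne_top.2 (maximalIdeal.isMaximal R).ne_top
  obtain ⟨w, hwJ, hwC⟩ := SetLike.exists_of_lt hCltJ
  have hJw : conductorIdeal R ⊔ Ideal.span {w} = J := by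
    have hle : conductorIdeal R ⊔ Ideal.span {w} ≤ J :=
      sup_le hCJ ((Ideal.span_singleton_le_iff_mem _).2 hwJ)
    by_contra hne
    have hlt := lt_of_le_of_ne hle hne
    have hlt0 : conductorIdeal R < conductorIdeal R ⊔ Ideal.span {w} := by
      refine lt_of_le_of_ne le_sup_left fun h => hwC ?_
      rw [h]; exact Ideal.mem_sup_right (Ideal.mem_span_singleton_self _)
    refine chain_le _ hlen ![conductorIdeal R, conductorIdeal R ⊔ Ideal.span {w}, J, E, ⊤] le_rfl ?_
    apply Fin.strictMono_iff_lt_succ.2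
    intro i
    fin_cases i
    exacts [hlt0, hlt, hJltE, hEm.trans_lt hmtop]
  -- the double dual is contained in `J * A`
  have hzI : F j ∈ I := by
    have h1 : ∀ g ∈ A / I, F j * g ∈ A := by
      intro g hg
      apply hCC
      intro y hy
      rw [Submodule.mem_div_iff_forall_mul_mem]
      intro a ha
      have h2 : y * a * g ∈ D := hCID (Submodule.mul_mem_mul (hCA (Submodule.mul_mem_mul hy ha)) hg)
      have h3 := hjE _ h2
      convert h3 using 1
      ring
    have h2 : ∀ h ∈ (A / I) * I, F j * h ∈ I := by
      intro h hh
      induction hh using Submodule.mul_induction_on' with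
      | mem_mul_mem g hg i hi =>
        rw [← mul_assoc, ← hIA]
        exact Submodule.mul_mem_mul (h1 g hg) hi
      | add a _ b _ ha hb => rw [mul_add]; exact add_mem ha hb
    simpa using h2 1 hinv
  have hIdec : ∀ z ∈ I, ∃ a ∈ A, ∃ y ∈ C, z = F w * a + y := by
    intro z hz
    induction hz using Submodule.mul_induction_on' with
    | mem_mul_mem s hs a ha =>
      obtain ⟨y, hy, rfl⟩ := hs
      have hy' : y ∈ J := hy
      rw [← hJw] at hy'
      obtain ⟨e, he, q, hq, rfl⟩ := Submodule.mem_sup.1 hy'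
      obtain ⟨r, rfl⟩ := Ideal.mem_span_singleton'.1 hq
      refine ⟨r • a, Submodule.smul_mem _ _ ha, F e * a,
        hCA (Submodule.mul_mem_mul ((hCmem e).1 he) ha), ?_⟩
      change F (e + r * w) * a = _
      rw [Algebra.smul_def, map_add, map_mul]
      change _ = F w * (F r * a) + _
      ring
    | add s _ t _ hs ht =>
      obtain ⟨a, ha, y, hy, rfl⟩ := hs
      obtain ⟨b, hb, z, hz, rfl⟩ := ht
      exact ⟨a + b, add_mem ha hb, y + z, add_mem hy hz, by ring⟩
  obtain ⟨a, ha, y, hy, hjay⟩ := hIdec _ hzI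
  have haD : a ∈ D := by
    rw [hDmem]
    intro t ht
    rw [← hJw] at ht
    obtain ⟨e, he, q, hq, rfl⟩ := Submodule.mem_sup.1 ht
    obtain ⟨r, rfl⟩ := Ideal.mem_span_singleton'.1 hq
    have h1 : a * F (e + r * w) = F e * a + r • (F j - y) := by
      rw [hjay, Algebra.smul_def, map_add, map_mul]
      change _ = _ + F r * _
      ring
    rw [h1]
    refine add_mem (hC1 (hCA (Submodule.mul_mem_mul ((hCmem e).1 he) ha))) ?_
    exact Submodule.smul_mem _ _ (sub_mem (Submodule.mem_one.2 ⟨j, rfl⟩) (hC1 hy))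
  apply hjJ
  apply hJ'mem'
  rw [hjay]
  refine add_mem ?_ (hCJ' hy)
  rw [mul_comm]
  exact htrD (Submodule.mul_mem_mul haD (hJ'mem w hwJ))
end

section
/- Let R be an analytically unramified one-dimensional non-regular Cohen–Macaulay local ring with infinite residue field, conductor C, length(R/C) = 4, and minimal multiplicity. Then every proper regular trace ideal of R is reflexive. -/
open IsLocalRing

lemma aux_artin_quot {R : Type*} [CommRing R] [IsNoetherianRing R] (hdim : ringKrullDim R = 1)
    {t : R} (ht : t ∈ nonZeroDivisors R) : IsArtinianRing (R ⧸ Ideal.span {t}) := by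
  rw [isArtinianRing_iff_krullDimLE_zero, Ring.krullDimLE_iff]
  have h := ringKrullDim_quotient_succ_le_of_nonZeroDivisor ht
  rw [hdim] at h
  have h2 : ringKrullDim (R ⧸ Ideal.span {t}) + 1 ≤ 0 + 1 := by simpa using h
  generalize ringKrullDim (R ⧸ Ideal.span {t}) = d at *
  induction d with
  | bot => simp
  | coe d =>
    induction d with
    | top => 
      exfalso
      revert h2
      decide
    | coe n =>
      norm_cast at *
      omega

lemma aux_artin_quot' {R T : Type*} [CommRing R] [CommRing T] [Algebra R T] [Module.Finite R T]
    {t : R} [IsArtinianRing (R ⧸ Ideal.span {t})] :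
    IsArtinianRing (T ⧸ Ideal.span {algebraMap R T t}) := by
  have e : Ideal.span {algebraMap R T t} = (Ideal.span {t}).map (algebraMap R T) := by
    rw [Ideal.map_span, Set.image_singleton]
  rw [e]
  have : Module.Finite (R ⧸ Ideal.span {t}) (T ⧸ (Ideal.span {t}).map (algebraMap R T)) :=
    Module.Finite.of_restrictScalars_finite R _ _
  exact IsArtinianRing.of_finite (R ⧸ Ideal.span {t}) _

lemma aux_socle {T : Type*} [CommRing T] (t : T) [IsArtinianRing (T ⧸ Ideal.span {t})]
    (P : Ideal T) (hP : P.IsMaximal) (htP : t ∈ P) :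
    ∃ z, z ∉ Ideal.span {t} ∧ ∀ p ∈ P, z * p ∈ Ideal.span {t} := by
  set I := Ideal.span {t} with hI
  have hIP : I ≤ P := by rw [hI, Ideal.span_le]; simpa using htP
  set Q := P.map (Ideal.Quotient.mk I) with hQ
  have hcom : Q.comap (Ideal.Quotient.mk I) = P := by
    rw [hQ, Ideal.comap_map_of_surjective _ Ideal.Quotient.mk_surjective]
    simpa [← RingHom.ker_eq_comap_bot] using hIP
  have hQp : Q.IsPrime := by
    have := hP.isPrime
    exact Ideal.map_isPrime_of_surjective Ideal.Quotient.mk_surjective (by simpa using hIP)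
  have hmin : Q ∈ (Module.annihilator (T ⧸ I) (T ⧸ I)).minimalPrimes := by
    rw [Ring.KrullDimLE.mem_minimalPrimes_iff]
    refine ⟨hQp, ?_⟩
    intro a ha
    rw [Module.mem_annihilator] at ha
    have := ha 1
    simp at this
    simp [this]
  have hass := Module.associatedPrimes.minimalPrimes_annihilator_subset_associatedPrimes _ _ hmin
  obtain ⟨-, z, hz⟩ := isAssociatedPrime_iff.mp (AssociatedPrimes.mem_iff.mp hass)
  obtain ⟨z, rfl⟩ := Ideal.Quotient.mk_surjective z
  refine ⟨z, ?_, ?_⟩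
  · intro hzI
    rw [Ideal.Quotient.eq_zero_iff_mem.mpr hzI] at hz
    apply hQp.ne_top
    rw [hz, Ideal.eq_top_iff_one, Submodule.mem_colon_singleton]
    simp
  · intro p hp
    have h1 : Ideal.Quotient.mk I p ∈ Q := Ideal.mem_map_of_mem _ hp
    rw [hz, Submodule.mem_colon_singleton, smul_eq_mul, Submodule.mem_bot, ← map_mul,
      Ideal.Quotient.eq_zero_iff_mem] at h1
    rwa [mul_comm]

lemma aux_integral_s9 {R K : Type*} [CommRing R] [CommRing K] [Algebra R K]
    (N : Submodule R K) (hN : N.FG) (f : K) (hf : ∀ n ∈ N, f * n ∈ N)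
    {t : K} (ht : t ∈ N) (htr : t ∈ nonZeroDivisors K) : IsIntegral R f := by
  have : Module.Finite R N := Module.Finite.iff_fg.mpr hN
  let g : Module.End R N := (LinearMap.mulLeft R f).restrict hf
  obtain ⟨p, hp, hpg⟩ := (Module.End.isIntegral (R := R) (M := N)).isIntegral g
  refine ⟨p, hp, ?_⟩
  have key : ∀ q : Polynomial R, ∀ n : N, ((Polynomial.aeval g q n : N) : K) = Polynomial.aeval f q * n := by
    intro q
    induction q using Polynomial.induction_on' with
    | add p q hp hq => intro n; simp [hp, hq, add_mul]
    | monomial k a =>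
      intro n
      have : ∀ n : N, (((g ^ k) n : N) : K) = f ^ k * n := by
        induction k with
        | zero => simp
        | succ k ih =>
          intro n
          rw [pow_succ, Module.End.mul_apply, ih]
          rw [pow_succ, mul_assoc]; rfl
      simp [Polynomial.aeval_monomial, this, Algebra.smul_def, mul_assoc]
  have h := key p ⟨t, ht⟩
  have h0 : Polynomial.aeval g p = 0 := hpg
  rw [h0] at h
  simp at h
  exact (mem_nonZeroDivisors_iff.mp htr).2 _ h.symm

lemma aux_avoid {R : Type*} [CommRing R] [IsLocalRing R] (hk : Infinite (ResidueField R))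
    {ι : Type*} (s : Finset ι) {M : Type*} [AddCommGroup M] [Module R M] (N : ι → Submodule R M)
    (J : Submodule R M) (h : ∀ i ∈ s, ¬ J ≤ N i) : ∃ j ∈ J, ∀ i ∈ s, j ∉ N i := by
  classical
  induction s using Finset.induction_on with
  | empty => exact ⟨0, J.zero_mem, by simp⟩
  | insert i s his ih =>
    obtain ⟨z, hzJ, hz⟩ := ih (fun k hk => h k (Finset.mem_insert_of_mem hk))
    obtain ⟨y, hyJ, hy⟩ := SetLike.not_le_iff_exists.mp (h i (Finset.mem_insert_self _ _))
    by_contra! hcon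
    have : Nonempty ι := ⟨i⟩
    choose! g hg1 hg2 using hcon
    obtain ⟨lift, hlift⟩ := (residue_surjective (R := R)).hasRightInverse
    let F : ResidueField R → (insert i s : Finset ι) := fun c =>
      ⟨g (z + lift c • y), hg1 _ (J.add_mem hzJ (J.smul_mem _ hyJ))⟩
    have : Finite (insert i s : Finset ι) := inferInstance
    obtain ⟨c, d, hcd, hF⟩ := Finite.exists_ne_map_eq_of_infinite F
    have hc := hg2 _ (J.add_mem hzJ (J.smul_mem (lift c) hyJ))
    have hd := hg2 _ (J.add_mem hzJ (J.smul_mem (lift d) hyJ))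
    have hFi : g (z + lift c • y) = g (z + lift d • y) := congrArg Subtype.val hF
    have hmem := hg1 _ (J.add_mem hzJ (J.smul_mem (lift d) hyJ))
    rw [hFi] at hc
    set k := g (z + lift d • y)
    have hu : IsUnit (lift c - lift d) := by
      rw [← residue_ne_zero_iff_isUnit, map_sub, hlift, hlift]
      exact sub_ne_zero.mpr hcd
    have hyk : y ∈ N k := by
      have := (N k).sub_mem hc hd
      have e : z + lift c • y - (z + lift d • y) = (lift c - lift d) • y := by
        rw [sub_smul]; abel
      rw [e] at this
      obtain ⟨u, hu⟩ := hu
      rw [← hu] at this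
      have := (N k).smul_mem (↑u⁻¹ : R) this
      rwa [smul_smul, Units.inv_mul, one_smul] at this
    rcases Finset.mem_insert.mp hmem with h1 | h1
    · rw [h1] at hyk; exact hy hyk
    · refine hz k h1 ?_
      have := (N k).sub_mem hd ((N k).smul_mem (lift d) hyk)
      simpa using this

lemma aux_reflexive {R K : Type*} [CommRing R] [CommRing K] [Algebra R K] [IsFractionRing R K]
    (J : Ideal R) {a : R} (haJ : a ∈ J) (ha : a ∈ nonZeroDivisors R)
    (h : ∀ z : R, (∀ q : K, (∀ y ∈ J, ∃ r, q * algebraMap R K y = algebraMap R K r) →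
      ∃ r, q * algebraMap R K z = algebraMap R K r) → z ∈ J) : Module.IsReflexive R J := by
  have inj := IsFractionRing.injective R K
  refine ⟨⟨?_, ?_⟩⟩
  · rw [injective_iff_map_eq_zero]
    intro y hy
    have := congrArg (fun F => F J.subtype) hy
    exact Subtype.ext (by simpa using this)
  · intro φ
    have hf : ∀ (f : Module.Dual R J) (y : J), a * f y = y * f ⟨a, haJ⟩ := by
      intro f y
      rw [← smul_eq_mul, ← smul_eq_mul, ← map_smul, ← map_smul]
      congr 1
      ext
      simp [mul_comm]
    have hφ : ∀ f : Module.Dual R J, a * φ f = f ⟨a, haJ⟩ * φ J.subtype := by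
      intro f
      rw [← smul_eq_mul, ← smul_eq_mul, ← map_smul, ← map_smul]
      congr 1
      ext y
      simp [hf, mul_comm]
    have hz : φ J.subtype ∈ J := by
      apply h
      intro q hq
      choose! F hF using hq
      let f : Module.Dual R J :=
        { toFun := fun y => F y
          map_add' := by
            intro x y
            apply inj
            rw [map_add, ← hF _ x.2, ← hF _ y.2, ← hF _ (x + y).2]
            simp [mul_add]
          map_smul' := by
            intro r y
            apply inj
            simp only [RingHom.id_apply, smul_eq_mul, map_mul]
            rw [← hF _ y.2, ← hF _ (r • y).2]
            simp; ring }
      refine ⟨φ f, ?_⟩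
      have h1 := hφ f
      have h2 : q * algebraMap R K a = algebraMap R K (f ⟨a, haJ⟩) := hF a haJ
      have hau : IsUnit (algebraMap R K a) := IsLocalization.map_units K ⟨a, ha⟩
      apply hau.mul_left_cancel
      rw [← map_mul, h1, map_mul, ← h2]; ring
    refine ⟨⟨_, hz⟩, ?_⟩
    ext f
    have h1 := hφ f
    have h2 := hf f ⟨_, hz⟩
    rw [Module.Dual.eval_apply]
    have h3 : a * f ⟨φ J.subtype, hz⟩ = a * φ f := by rw [h2, h1]; simp [mul_comm]
    exact (mul_cancel_left_mem_nonZeroDivisors ha).mp h3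

lemma aux_T {R K : Type*} [CommRing R] [CommRing K] [Algebra R K] [IsFractionRing R K]
    (T : Subalgebra R K) [Module.Finite R T] {t : R} (ht : t ∈ nonZeroDivisors R)
    [IsArtinianRing (R ⧸ Ideal.span {t})] (P : Ideal T) (hP : P.IsMaximal)
    (htP : algebraMap R T t ∈ P) : ∃ f : K, f ∉ T ∧ ∀ p ∈ P, f * (p : K) ∈ T := by
  have := aux_artin_quot' (R := R) (T := T) (t := t)
  obtain ⟨z, hz, hzP⟩ := aux_socle _ P hP htP
  obtain ⟨u, hu⟩ := IsLocalization.map_units K (⟨t, ht⟩ : nonZeroDivisors R)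
  have hu' : (u : K) = algebraMap R K t := hu
  refine ⟨z * (↑u⁻¹ : K), ?_, ?_⟩
  · intro hf
    apply hz
    rw [Ideal.mem_span_singleton]
    refine ⟨⟨_, hf⟩, ?_⟩
    ext
    change (z : K) = algebraMap R K t * (z * (↑u⁻¹ : K))
    rw [← hu', mul_left_comm, Units.mul_inv, mul_one]
  · intro p hp
    obtain ⟨w, hw⟩ := Ideal.mem_span_singleton.mp (hzP p hp)
    have hw' : (z : K) * p = algebraMap R K t * w := congrArg Subtype.val hw
    have : (z : K) * (↑u⁻¹ : K) * p = w := by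
      rw [mul_right_comm, hw', ← hu', mul_right_comm, Units.mul_inv, one_mul]
    rw [this]; exact w.2

open IsLocalization in
lemma aux_unit_s9 {R K : Type*} [CommRing R] [CommRing K] [Algebra R K] [IsFractionRing R K]
    [IsNoetherianRing R]
    (S : Subalgebra R K) (hS : ∀ f, IsIntegral R f → f ∈ S) [Module.Finite R S] {t : R} (ht : t ∈ nonZeroDivisors R)
    [IsArtinianRing (R ⧸ Ideal.span {t})] (I : Ideal S)
    (htI : algebraMap R S t ∈ I) :
    IsUnit (coeSubmodule K I : Submodule S K) := by
  have hnoeth : IsNoetherianRing S := IsNoetherianRing.of_finite R S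
  have inj : Function.Injective (algebraMap S K) := Subtype.val_injective
  have hle1 : ∀ I : Ideal S, (coeSubmodule K I : Submodule S K) ≤ 1 := by
    intro I
    rw [← coeSubmodule_top]
    exact coeSubmodule_mono _ le_top
  have hcoe : ∀ N : Submodule S K, N ≤ 1 → ∃ I : Ideal S, coeSubmodule K I = N := by
    intro N hN
    refine ⟨N.comap (Algebra.linearMap S K), ?_⟩
    rw [coeSubmodule, Submodule.map_comap_eq, inf_eq_right, ← Submodule.one_eq_range]
    exact hN
  have htK : algebraMap R K t ∈ nonZeroDivisors K :=
    IsUnit.mem_nonZeroDivisors (IsLocalization.map_units K (⟨t, ht⟩ : nonZeroDivisors R))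
  have hstab : ∀ I : Ideal S, algebraMap R S t ∈ I → ∀ f : K,
      (∀ n ∈ (coeSubmodule K I : Submodule S K), f * n ∈ (coeSubmodule K I : Submodule S K)) →
      f ∈ (1 : Submodule S K) := by
    intro I hI f hf
    have hfg : ((coeSubmodule K I : Submodule S K).restrictScalars R).FG := by
      have h1 : (coeSubmodule K I : Submodule S K).FG :=
        Submodule.FG.map _ (IsNoetherian.noetherian I)
      have : Module.Finite S (coeSubmodule K I : Submodule S K) := Module.Finite.iff_fg.mpr h1
      have : Module.Finite R (coeSubmodule K I : Submodule S K) := Module.Finite.trans S _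
      exact Module.Finite.iff_fg.mp this
    have h2 := aux_integral_s9 _ hfg f hf (t := algebraMap R K t) ⟨_, hI, rfl⟩ htK
    rw [Submodule.mem_one]
    exact ⟨⟨f, hS f h2⟩, rfl⟩
  have hmax : ∀ P : Ideal S, P.IsMaximal → algebraMap R S t ∈ P →
      (coeSubmodule K P : Submodule S K) * (1 / coeSubmodule K P) = 1 := by
    intro P hP htP
    obtain ⟨Q, hQ⟩ := hcoe _ (Submodule.mul_one_div_le_one (I := (coeSubmodule K P : Submodule S K)))
    have hPQ : P ≤ Q := by
      have h := Submodule.le_self_mul_one_div (hle1 P)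
      rw [← hQ] at h
      intro x hx
      obtain ⟨y, hy, hyx⟩ := h ⟨x, hx, rfl⟩
      rw [← inj hyx]; exact hy
    rw [← hQ]
    by_cases h : Q = ⊤
    · rw [h, coeSubmodule_top]
    · exfalso
      have h := hP.eq_of_le h hPQ
      rw [← h] at hQ
      obtain ⟨f, hf, hfP⟩ := aux_T S ht P hP htP
      have hf1 : f ∈ 1 / (coeSubmodule K P : Submodule S K) := by
        rw [Submodule.mem_div_iff_forall_mul_mem]
        rintro _ ⟨p, hp, rfl⟩
        rw [Submodule.mem_one]
        exact ⟨⟨_, hfP p hp⟩, rfl⟩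
      have := hstab P htP f (by
        intro n hn
        rw [hQ, mul_comm f n]
        exact Submodule.mul_mem_mul hn hf1)
      rw [Submodule.mem_one] at this
      obtain ⟨w, hw⟩ := this
      exact hf (hw ▸ w.2)
  revert htI
  induction I using IsNoetherian.induction with
  | hgt I ih =>
    intro htI
    by_cases hI : I = ⊤
    · rw [hI, coeSubmodule_top]; exact isUnit_one
    obtain ⟨P, hP, hIP⟩ := Ideal.exists_le_maximal I hI
    have h1 := hmax P hP (hIP htI)
    set Q : Submodule S K := 1 / coeSubmodule K P with hQ
    have hQ1 : 1 ≤ Q := Submodule.one_le_one_div.mpr (hle1 P)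
    have hNQ : (coeSubmodule K I : Submodule S K) * Q ≤ 1 := by
      rw [← h1]; exact mul_le_mul_left (coeSubmodule_mono _ hIP) _
    obtain ⟨I2, hI2⟩ := hcoe _ hNQ
    have hle : I ≤ I2 := by
      have h : (coeSubmodule K I : Submodule S K) ≤ coeSubmodule K I2 := by
        rw [hI2]
        calc (coeSubmodule K I : Submodule S K) = coeSubmodule K I * 1 := (mul_one _).symm
          _ ≤ _ := mul_le_mul_right hQ1 _
      intro x hx
      obtain ⟨y, hy, hyx⟩ := h ⟨x, hx, rfl⟩
      rw [← inj hyx]; exact hy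
    have hne : I ≠ I2 := by
      intro he
      rw [← he] at hI2
      have hQle : Q ≤ 1 := by
        intro f hf
        refine hstab I htI f ?_
        intro n hn
        rw [hI2, mul_comm f n]
        exact Submodule.mul_mem_mul hn hf
      have hQe : Q = 1 := le_antisymm hQle hQ1
      rw [hQe, mul_one] at h1
      have : (1 : K) ∈ (coeSubmodule K P : Submodule S K) := by rw [h1]; exact Submodule.one_le.mp le_rfl
      obtain ⟨y, hy, hyx⟩ := this
      have : y = 1 := inj (hyx.trans (map_one _).symm)
      rw [this] at hy
      exact hP.ne_top ((Ideal.eq_top_iff_one _).mpr hy)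
    have hu := ih I2 (lt_of_le_of_ne hle hne) (hle htI)
    have e : (coeSubmodule K I : Submodule S K) = coeSubmodule K I2 * coeSubmodule K P := by
      rw [hI2, mul_assoc, mul_comm Q, h1, mul_one]
    rw [e]
    exact hu.mul (IsUnit.of_mul_eq_one _ h1)

lemma aux_finmax {S : Type*} [CommRing S] (t : S) [IsArtinianRing (S ⧸ Ideal.span {t})] :
    {P : Ideal S | P.IsMaximal ∧ t ∈ P}.Finite := by
  have h1 : (Set.range (fun M : MaximalSpectrum (S ⧸ Ideal.span {t}) =>
    M.asIdeal.comap (Ideal.Quotient.mk (Ideal.span {t})))).Finite :=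
    Set.finite_range _
  refine h1.subset ?_
  rintro P ⟨hP, htP⟩
  have hIP : Ideal.span {t} ≤ P := by
    rw [Ideal.span_le]; simpa using htP
  have hcom : (P.map (Ideal.Quotient.mk (Ideal.span {t}))).comap
      (Ideal.Quotient.mk (Ideal.span {t})) = P := by
    rw [Ideal.comap_map_of_surjective _ Ideal.Quotient.mk_surjective]
    simpa [← RingHom.ker_eq_comap_bot] using hIP
  refine ⟨⟨P.map (Ideal.Quotient.mk _), ?_⟩, hcom⟩
  have := hP.isPrime
  have := Ideal.map_isPrime_of_surjective
    (f := Ideal.Quotient.mk (Ideal.span {t}))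
    Ideal.Quotient.mk_surjective (I := P) (by simpa using hIP)
  infer_instance

open IsLocalization in
lemma aux_red {R K : Type*} [CommRing R] [CommRing K] [Algebra R K] [IsFractionRing R K]
    [IsNoetherianRing R] [IsLocalRing R] (hk : Infinite (ResidueField R))
    (S : Subalgebra R K) (hS : ∀ f, IsIntegral R f → f ∈ S) [Module.Finite R S]
    (J : Ideal R) {t : R} (ht : t ∈ nonZeroDivisors R) (htJ : t ∈ J) (htm : t ∈ maximalIdeal R)
    [IsArtinianRing (R ⧸ Ideal.span {t})] :
    ∃ j ∈ J, j ∈ nonZeroDivisors R ∧ ∀ y ∈ J, ∃ s ∈ S, algebraMap R K y = s * algebraMap R K j := by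
  have inj : Function.Injective (algebraMap S K) := Subtype.val_injective
  have := aux_artin_quot' (R := R) (T := S) (t := t)
  have htmax : ∀ P : Ideal S, P.IsMaximal → algebraMap R S t ∈ P := by
    intro P hP
    have : (P.comap (algebraMap R S)).IsMaximal :=
      Ideal.isMaximal_comap_of_isIntegral_of_isMaximal P
    have h := IsLocalRing.eq_maximalIdeal this
    have h2 : t ∈ P.comap (algebraMap R S) := by rw [h]; exact htm
    exact h2
  have hfin : {P : Ideal S | P.IsMaximal}.Finite :=
    (aux_finmax (algebraMap R S t)).subset fun P hP => ⟨hP, htmax P hP⟩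
  set I : Ideal S := J.map (algebraMap R S) with hI
  set N : Submodule S K := coeSubmodule K I with hN
  have hu : IsUnit N := aux_unit_s9 S hS ht I (Ideal.mem_map_of_mem _ htJ)
  obtain ⟨N', hN'⟩ := hu.exists_right_inv
  have hP1 : ∀ P : Ideal S, P.IsMaximal → ∀ L : Submodule S K, 1 ≤ L → ¬ L ≤ coeSubmodule K P := by
    intro P hP L h1 h2
    obtain ⟨y, hy, hyx⟩ := h2 (Submodule.one_le.mp h1)
    have : y = 1 := inj (hyx.trans (map_one _).symm)
    rw [this] at hy
    exact hP.ne_top ((Ideal.eq_top_iff_one _).mpr hy)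
  let F : Ideal S → Submodule R R := fun P =>
    (((coeSubmodule K P : Submodule S K) * N).restrictScalars R).comap (Algebra.linearMap R K)
  obtain ⟨j, hjJ, hj⟩ := aux_avoid hk hfin.toFinset F J (by
    intro P hP hle
    have hP : P.IsMaximal := by simpa using hP
    have h1 : N ≤ coeSubmodule K P * N := by
      rw [hN, coeSubmodule, Submodule.map_le_iff_le_comap, hI, Ideal.map_le_iff_le_comap]
      intro y hy
      exact hle hy
    have h2 : N * N' ≤ coeSubmodule K P * N * N' := mul_le_mul_left h1 _
    rw [mul_assoc, hN', mul_one] at h2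
    exact hP1 P hP 1 le_rfl h2)
  have hjN : algebraMap R K j ∈ N := ⟨algebraMap R S j, Ideal.mem_map_of_mem _ hjJ, rfl⟩
  set X : Submodule S K := Submodule.span S {algebraMap R K j} with hX
  have hXN : X ≤ N := by
    rw [hX, Submodule.span_le]; simpa using hjN
  have hXN1 : X * N' = 1 := by
    have hle : X * N' ≤ 1 := by rw [← hN']; exact mul_le_mul_left hXN _
    by_contra hne
    set Q : Ideal S := (X * N').comap (Algebra.linearMap S K) with hQ
    have hQt : Q ≠ ⊤ := by
      intro h
      apply hne
      refine le_antisymm hle ?_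
      rw [Submodule.one_le]
      have : (1 : S) ∈ Q := by rw [h]; trivial
      simpa [hQ] using this
    obtain ⟨P, hP, hQP⟩ := Ideal.exists_le_maximal Q hQt
    have hXP : X * N' ≤ coeSubmodule K P := by
      intro q hq
      obtain ⟨w, rfl⟩ := Submodule.mem_one.mp (hle hq)
      exact ⟨w, hQP hq, rfl⟩
    have h2 : X * N' * N ≤ coeSubmodule K P * N := mul_le_mul_left hXP _
    rw [mul_assoc, mul_comm N', hN', mul_one] at h2
    exact hj P (by simpa using hP) (h2 (Submodule.mem_span_singleton_self _))
  have hNX : N = X := by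
    calc N = X * N' * N := by rw [hXN1, one_mul]
      _ = X := by rw [mul_assoc, mul_comm N', hN', mul_one]
  have hall : ∀ y ∈ J, ∃ s ∈ S, algebraMap R K y = s * algebraMap R K j := by
    intro y hy
    have : algebraMap R K y ∈ X := by
      rw [← hNX]; exact ⟨algebraMap R S y, Ideal.mem_map_of_mem _ hy, rfl⟩
    obtain ⟨s, hs⟩ := Submodule.mem_span_singleton.mp this
    exact ⟨s, s.2, hs.symm⟩
  refine ⟨j, hjJ, ?_, hall⟩
  obtain ⟨s, -, hs⟩ := hall t htJ
  have htu : IsUnit (algebraMap R K t) := IsLocalization.map_units K (⟨t, ht⟩ : nonZeroDivisors R)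
  rw [hs] at htu
  have hju : IsUnit (algebraMap R K j) := isUnit_of_mul_isUnit_right htu
  exact mem_nonZeroDivisors_of_injective (IsFractionRing.injective R K) hju.mem_nonZeroDivisors

lemma aux_fin_s9 {R K : Type*} [CommRing R] [CommRing K] [Algebra R K] [IsFractionRing R K]
    [IsNoetherianRing R] (T : Subalgebra R K) {c : R} (hc : c ∈ nonZeroDivisors R)
    (h : ∀ s ∈ T, ∃ r, algebraMap R K c * s = algebraMap R K r) : Module.Finite R T := by
  have hfin : Module.Finite R (LinearMap.range (Algebra.linearMap R K)) := inferInstance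
  have hn : IsNoetherian R (LinearMap.range (Algebra.linearMap R K)) :=
    isNoetherian_of_isNoetherianRing_of_finite _ _
  let f : T →ₗ[R] LinearMap.range (Algebra.linearMap R K) :=
    ((LinearMap.mulLeft R (algebraMap R K c)).comp T.toSubmodule.subtype).codRestrict _ (by
      intro s
      obtain ⟨r, hr⟩ := h s.1 s.2
      exact ⟨r, hr.symm⟩)
  refine Module.Finite.of_injective f ?_
  intro s s' hss
  have h1 : algebraMap R K c * s = algebraMap R K c * s' := congrArg Subtype.val hss
  have hcu : IsUnit (algebraMap R K c) := IsLocalization.map_units K (⟨c, hc⟩ : nonZeroDivisors R)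
  exact Subtype.ext (hcu.mul_left_cancel h1)

/-- The endomorphism ring `m : m` inside the total ring of fractions. -/
def auxEnd {R : Type*} (K : Type*) [CommRing R] [CommRing K] [Algebra R K] (m : Ideal R) :
    Subalgebra R K where
  carrier := {b | ∀ y ∈ m, ∃ r ∈ m, b * algebraMap R K y = algebraMap R K r}
  mul_mem' := by
    intro a b ha hb y hy
    obtain ⟨r, hr, h1⟩ := hb y hy
    obtain ⟨r', hr', h2⟩ := ha r hr
    exact ⟨r', hr', by rw [mul_assoc, h1, h2]⟩
  add_mem' := by
    intro a b ha hb y hy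
    obtain ⟨r, hr, h1⟩ := hb y hy
    obtain ⟨r', hr', h2⟩ := ha y hy
    exact ⟨r' + r, m.add_mem hr' hr, by rw [add_mul, h1, h2, map_add]⟩
  algebraMap_mem' := by
    intro r y hy
    exact ⟨r * y, m.mul_mem_left _ hy, by rw [map_mul]⟩

lemma aux_case2 {R K : Type*} [CommRing R] [CommRing K] [Algebra R K] [IsFractionRing R K]
    [IsNoetherianRing R] [IsLocalRing R] (hnonreg : ¬ (maximalIdeal R).IsPrincipal)
    {x : R} (hxm : x ∈ maximalIdeal R) (hx : x ∈ nonZeroDivisors R)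
    [IsArtinianRing (R ⧸ Ideal.span {x})]
    (hmm : maximalIdeal R ^ 2 = Ideal.span {x} * maximalIdeal R)
    (J : Ideal R) (hcov : J ⋖ maximalIdeal R)
    (htr : ∀ q : K, (∀ y ∈ J, ∃ r, q * algebraMap R K y = algebraMap R K r) →
      ∀ y ∈ J, ∃ r ∈ J, q * algebraMap R K y = algebraMap R K r)
    (z : R) (hzm : z ∈ maximalIdeal R)
    (hz : ∀ q : K, (∀ y ∈ J, ∃ r, q * algebraMap R K y = algebraMap R K r) →
      ∃ r, q * algebraMap R K z = algebraMap R K r) : z ∈ J := by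
  set m := maximalIdeal R with hm
  by_contra hzJ
  have inj := IsFractionRing.injective R K
  obtain ⟨u, hu⟩ := IsLocalization.map_units K (⟨x, hx⟩ : nonZeroDivisors R)
  have hu' : algebraMap R K x = u := hu.symm
  set B := auxEnd K m with hB
  have hfin : Module.Finite R B := by
    refine aux_fin_s9 B hx ?_
    intro s hs
    obtain ⟨r, -, hr⟩ := hs x hxm
    exact ⟨r, by rw [mul_comm, hr]⟩
  -- products in m
  have hprod : ∀ y ∈ m, ∀ w ∈ m, ∃ v ∈ m, y * w = x * v := by
    intro y hy w hw
    have : y * w ∈ Ideal.span {x} * m := by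
      rw [← hmm, sq]; exact Ideal.mul_mem_mul hy hw
    obtain ⟨v, hv, h⟩ := Ideal.mem_span_singleton_mul.mp this
    exact ⟨v, hv, h.symm⟩
  have hdivB : ∀ y ∈ m, algebraMap R K y * (↑u⁻¹ : K) ∈ B := by
    intro y hy w hw
    obtain ⟨v, hv, h⟩ := hprod y hy w hw
    refine ⟨v, hv, ?_⟩
    rw [mul_right_comm, ← map_mul, h, map_mul, hu', mul_right_comm, Units.mul_inv, one_mul]
  have hJB : ∀ b ∈ B, ∀ y ∈ J, ∃ r ∈ J, b * algebraMap R K y = algebraMap R K r := by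
    intro b hb
    apply htr
    intro y hy
    obtain ⟨r, -, h⟩ := hb y (hcov.le hy)
    exact ⟨r, h⟩
  let n : Ideal B :=
    { carrier := {b | ∃ r ∈ J, algebraMap R K x * (b : K) = algebraMap R K r}
      add_mem' := by
        rintro a b ⟨r, hr, h⟩ ⟨r', hr', h'⟩
        exact ⟨r + r', J.add_mem hr hr', by simp [mul_add, h, h']⟩
      zero_mem' := ⟨0, J.zero_mem, by simp⟩
      smul_mem' := by
        rintro c b ⟨r, hr, h⟩
        obtain ⟨r', hr', h'⟩ := hJB c c.2 r hr
        refine ⟨r', hr', ?_⟩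
        rw [← h', ← h]
        simp only [smul_eq_mul, MulMemClass.coe_mul]
        ring }
  have hn1 : ∀ b : B, b ∈ n ↔ ∃ r ∈ J, algebraMap R K x * (b : K) = algebraMap R K r :=
    fun b => Iff.rfl
  -- m = J + R z
  have hsup : J ⊔ Ideal.span {z} = m := by
    have h1 : J < J ⊔ Ideal.span {z} := by
      refine lt_of_le_of_ne le_sup_left ?_
      intro h
      apply hzJ
      rw [h]
      exact Ideal.mem_sup_right (Ideal.mem_span_singleton_self z)
    have h2 : J ⊔ Ideal.span {z} ≤ m := sup_le hcov.le (by
      rw [Ideal.span_le]; simpa using hzm)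
    exact (hcov.eq_or_eq h1.le h2).resolve_left h1.ne'
  have hnmax : n.IsMaximal := by
    rw [Ideal.isMaximal_iff]
    constructor
    · rintro ⟨r, hr, h⟩
      have hrx : x = r := inj (by simpa using h)
      -- then x ∈ J, hence m ⊆ J
      apply hzJ
      obtain ⟨r', hr', h'⟩ := hJB _ (hdivB z hzm) x (hrx ▸ hr)
      have : z = r' := inj (by
        rw [← h', mul_assoc, hu', Units.inv_mul, mul_one])
      rw [this]; exact hr'
    · intro I b hnI hbn hbI
      -- the image of I in m
      let I' : Ideal R :=
        { carrier := {r | ∃ b ∈ I, algebraMap R K x * (b : K) = algebraMap R K r}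
          add_mem' := by
            rintro r r' ⟨b, hb, h⟩ ⟨b', hb', h'⟩
            exact ⟨b + b', I.add_mem hb hb', by simp [mul_add, h, h']⟩
          zero_mem' := ⟨0, I.zero_mem, by simp⟩
          smul_mem' := by
            rintro c r ⟨b, hb, h⟩
            refine ⟨algebraMap R B c * b, I.mul_mem_left _ hb, ?_⟩
            rw [smul_eq_mul, map_mul, ← h]
            change algebraMap R K x * (algebraMap R K c * (b : K)) = _
            ring }
      have hI'm : I' ≤ m := by
        rintro r ⟨b, hb, h⟩
        obtain ⟨r', hr', h'⟩ := b.2 x hxm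
        have : r = r' := inj (by rw [← h, ← h', mul_comm])
        rw [this]; exact hr'
      have hJI' : J ≤ I' := by
        intro r hr
        have e : algebraMap R K x * (algebraMap R K r * (↑u⁻¹ : K)) = algebraMap R K r := by
          rw [hu', mul_left_comm, Units.mul_inv, mul_one]
        exact ⟨⟨_, hdivB r (hcov.le hr)⟩, hnI ⟨r, hr, e⟩, e⟩
      have hne : I' ≠ J := by
        intro h
        apply hbn
        obtain ⟨r', hr', h'⟩ := b.2 x hxm
        have : r' ∈ I' := ⟨b, hbI, by rw [← h', mul_comm]⟩
        rw [h] at this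
        exact ⟨r', this, by rw [← h', mul_comm]⟩
      have hI' : I' = m := (hcov.eq_or_eq hJI' hI'm).resolve_left hne
      have hxI : x ∈ I' := by rw [hI']; exact hxm
      obtain ⟨b', hb', h⟩ := hxI
      have : b' = 1 := by
        ext
        have h2 : (u : K) * b' = u * 1 := by rw [← hu', h, mul_one]
        exact u.isUnit.mul_left_cancel h2
      rwa [this] at hb'
  have hxn : algebraMap R B x ∈ n := by
    have hxx : x * x ∈ J := by
      -- m * m ⊆ J: otherwise use Nakayama
      by_contra hcon
      have hsup2 : J ⊔ Ideal.span {x * x} = m := by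
        have h1 : J < J ⊔ Ideal.span {x * x} := by
          refine lt_of_le_of_ne le_sup_left ?_
          intro h
          apply hcon
          rw [h]
          exact Ideal.mem_sup_right (Ideal.mem_span_singleton_self _)
        have h2 : J ⊔ Ideal.span {x * x} ≤ m := sup_le hcov.le (by
          rw [Ideal.span_le]; simpa using m.mul_mem_left x hxm)
        exact (hcov.eq_or_eq h1.le h2).resolve_left h1.ne'
      have hx2 : x ∈ J ⊔ Ideal.span {x * x} := by rw [hsup2]; exact hxm
      obtain ⟨a, ha, b, hb, hab⟩ := Submodule.mem_sup.mp hx2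
      obtain ⟨c, rfl⟩ := Ideal.mem_span_singleton'.mp hb
      have h3 : (1 - c * x) * x ∈ J := by
        have : (1 - c * x) * x = a := by linear_combination -hab
        rw [this]; exact ha
      have hunit : IsUnit (1 - c * x) := by
        by_contra hnu
        have h4 : 1 - c * x ∈ m := (mem_maximalIdeal _).mpr hnu
        have h5 : (1 : R) ∈ m := by
          have := m.add_mem h4 (m.mul_mem_left c hxm)
          simpa using this
        exact (maximalIdeal.isMaximal R).ne_top ((Ideal.eq_top_iff_one _).mpr h5)
      have hxJ : x ∈ J := (Ideal.unit_mul_mem_iff_mem J hunit).mp h3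
      exact hcon (J.mul_mem_left _ hxJ)
    exact ⟨x * x, hxx, by rw [map_mul]; rfl⟩
  obtain ⟨f, hfB, hf⟩ := aux_T B hx n hnmax hxn
  have hfJ : ∀ y ∈ J, ∃ r ∈ m, f * algebraMap R K y = algebraMap R K r := by
    intro y hy
    have e : algebraMap R K x * (algebraMap R K y * (↑u⁻¹ : K)) = algebraMap R K y := by
      rw [hu', mul_left_comm, Units.mul_inv, mul_one]
    obtain ⟨r, hr, h⟩ := hf ⟨_, hdivB y (hcov.le hy)⟩ ⟨y, hy, e⟩ x hxm
    refine ⟨r, hr, ?_⟩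
    rw [← h, mul_assoc, mul_comm _ (algebraMap R K x), e]
  obtain ⟨r, hr⟩ := hz f (fun y hy => (hfJ y hy).imp fun _ h => h.2)
  have hdecomp : ∀ y ∈ m, ∃ a ∈ J, ∃ c, y = a + c * z := by
    intro y hy
    rw [← hsup] at hy
    obtain ⟨a, ha, b, hb, hab⟩ := Submodule.mem_sup.mp hy
    obtain ⟨c, rfl⟩ := Ideal.mem_span_singleton'.mp hb
    exact ⟨a, ha, c, hab.symm⟩
  by_cases hrm : r ∈ m
  · apply hfB
    intro y hy
    obtain ⟨a, ha, c, rfl⟩ := hdecomp y hy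
    obtain ⟨r', hr', h'⟩ := hfJ a ha
    refine ⟨r' + c * r, m.add_mem hr' (m.mul_mem_left _ hrm), ?_⟩
    rw [map_add, map_mul, mul_add, h', mul_left_comm, hr, map_add, map_mul]
  · have hru : IsUnit r := by
      by_contra h
      exact hrm ((mem_maximalIdeal _).mpr h)
    have hfu : IsUnit f := by
      have := hru.map (algebraMap R K)
      rw [← hr] at this
      exact isUnit_of_mul_isUnit_left this
    apply hnonreg
    refine ⟨z, le_antisymm ?_ ?_⟩
    · intro y hy
      obtain ⟨a, ha, c, rfl⟩ := hdecomp y hy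
      obtain ⟨r', hr', h'⟩ := hfJ a ha
      obtain ⟨v, rfl⟩ := hru
      have : a = r' * (↑v⁻¹ : R) * z := by
        apply inj
        apply hfu.mul_left_cancel
        rw [h', map_mul, mul_left_comm, hr, ← map_mul, mul_assoc, Units.inv_mul, mul_one]
      refine Ideal.mem_span_singleton'.mpr ⟨r' * (↑v⁻¹ : R) + c, ?_⟩
      rw [add_mul, ← this]
    · rw [Submodule.span_le]; simpa using hzm

/-- Let `R` be an analytically unramified one-dimensional non-regular
Cohen–Macaulay local ring with infinite residue field, conductor `C`, `length(R/C) = 4`, and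
minimal multiplicity. Then every proper regular trace ideal of `R` is reflexive. -/
theorem trace_reflexive_of_colength_four_minimalMultiplicity
    (R : Type*) [CommRing R] [IsNoetherianRing R] [IsLocalRing R]
    (hur : IsReduced (AdicCompletion (maximalIdeal R) R))
    (hdim : ringKrullDim R = 1) (hCM : IsCohenMacaulayLocalRing R)
    (hnonreg : ¬ (maximalIdeal R).IsPrincipal) (hk : Infinite (ResidueField R))
    (hlen : moduleLength R (R ⧸ conductorIdeal R) = 4)
    (hmm : HasMinimalMultiplicity R)
    (J : Ideal R) (hproper : J ≠ ⊤) (hreg : ∃ x ∈ J, x ∈ nonZeroDivisors R)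
    (htr : traceIdeal R ↥J = J) :
    Module.IsReflexive R ↥J := by
  obtain ⟨a, haJ, ha⟩ := hreg
  obtain ⟨x, ⟨hxm, -⟩, hmm⟩ := hmm
  have hJm : J ≤ maximalIdeal R := le_maximalIdeal hproper
  have inj := IsFractionRing.injective R (FractionRing R)
  have hx : x ∈ nonZeroDivisors R := by
    have h1 : a * a ∈ Ideal.span {x} * maximalIdeal R := by
      rw [← hmm, sq]; exact Ideal.mul_mem_mul (hJm haJ) (hJm haJ)
    obtain ⟨v, hv, h⟩ := Ideal.mem_span_singleton_mul.mp h1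
    have h2 : x * v ∈ nonZeroDivisors R := by rw [h]; exact mul_mem ha ha
    exact (mul_mem_nonZeroDivisors.mp h2).1
  have hart := aux_artin_quot hdim ha
  have hartx := aux_artin_quot hdim hx
  have htr' : ∀ q : FractionRing R,
      (∀ y ∈ J, ∃ r, q * algebraMap R (FractionRing R) y = algebraMap R (FractionRing R) r) →
      ∀ y ∈ J, ∃ r ∈ J, q * algebraMap R (FractionRing R) y = algebraMap R (FractionRing R) r := by
    intro q hq y hy
    choose! F hF using hq
    let f : J →ₗ[R] R :=
      { toFun := fun y => F y
        map_add' := by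
          intro x y
          apply inj
          rw [map_add, ← hF _ x.2, ← hF _ y.2, ← hF _ (x + y).2]
          simp [mul_add]
        map_smul' := by
          intro r y
          apply inj
          simp only [RingHom.id_apply, smul_eq_mul, map_mul]
          rw [← hF _ y.2, ← hF _ (r • y).2]
          simp; ring }
    refine ⟨F y, ?_, hF y hy⟩
    rw [← htr, traceIdeal]
    exact (le_iSup (fun f : J →ₗ[R] R => LinearMap.range f) f) ⟨⟨y, hy⟩, rfl⟩
  set C := conductorIdeal R with hCdef
  have hC : ∀ r, r ∈ C ↔ ∀ s ∈ integralClosure R (FractionRing R),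
      ∃ r', algebraMap R (FractionRing R) r * s = algebraMap R (FractionRing R) r' := by
    intro r
    rw [hCdef, conductorIdeal, Submodule.mem_colon]
    refine forall_congr' fun s => ?_
    refine imp_congr Iff.rfl ?_
    rw [Submodule.mem_one, Algebra.smul_def]
    exact ⟨fun ⟨y, h⟩ => ⟨y, h.symm⟩, fun ⟨y, h⟩ => ⟨y, h.symm⟩⟩
  have hlen' : Order.krullDim (Submodule R (R ⧸ C)) = 4 := hlen
  obtain ⟨c, hcC, hc⟩ : ∃ c ∈ C, c ∈ nonZeroDivisors R := by
    have h1 : Module.length R (R ⧸ C) ≠ ⊤ := by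
      intro h
      have h2 := Module.coe_length R (R ⧸ C)
      rw [h, hlen'] at h2
      exact absurd h2 (by decide)
    have := (isFiniteLength_iff_isNoetherian_isArtinian.mp (Module.length_ne_top_iff.mp h1)).2
    obtain ⟨n, y, hy⟩ := IsArtinian.exists_pow_succ_smul_dvd a (Ideal.Quotient.mk C 1)
    obtain ⟨y, rfl⟩ := Ideal.Quotient.mk_surjective y
    refine ⟨a ^ n, ?_, pow_mem ha n⟩
    have h3 : a ^ n * (1 - a * y) ∈ C := by
      have h4 : Ideal.Quotient.mk C (a ^ (n + 1) * y) = Ideal.Quotient.mk C (a ^ n * 1) := hy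
      have h5 := Ideal.Quotient.eq.mp h4.symm
      have e : a ^ n * (1 - a * y) = a ^ n * 1 - a ^ (n + 1) * y := by ring
      rw [e]; exact h5
    have hunit : IsUnit (1 - a * y) := by
      by_contra hnu
      have h4 : 1 - a * y ∈ maximalIdeal R := (mem_maximalIdeal _).mpr hnu
      have h5 : (1 : R) ∈ maximalIdeal R := by
        have := (maximalIdeal R).add_mem h4 ((maximalIdeal R).mul_mem_right y (hJm haJ))
        simpa using this
      exact (maximalIdeal.isMaximal R).ne_top ((Ideal.eq_top_iff_one _).mpr h5)
    exact (Ideal.mul_unit_mem_iff_mem C hunit).mp h3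
  have hfin : Module.Finite R (integralClosure R (FractionRing R)) :=
    aux_fin_s9 _ hc ((hC c).mp hcC)
  obtain ⟨j, hjJ, hj, hred⟩ := aux_red hk (integralClosure R (FractionRing R)) (fun f hf => hf) J
    ha haJ (hJm haJ)
  obtain ⟨u, hu⟩ := IsLocalization.map_units (FractionRing R) (⟨j, hj⟩ : nonZeroDivisors R)
  have hu' : algebraMap R (FractionRing R) j = u := hu.symm
  -- c / j lies in R : J
  have hcj : ∀ c ∈ C, ∀ y ∈ J, ∃ r, (algebraMap R (FractionRing R) c * (↑u⁻¹ : FractionRing R)) *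
      algebraMap R (FractionRing R) y = algebraMap R (FractionRing R) r := by
    intro c hc y hy
    obtain ⟨s, hs, h⟩ := hred y hy
    obtain ⟨r, hr⟩ := (hC c).mp hc s hs
    refine ⟨r, ?_⟩
    rw [h, hu', ← hr, mul_comm s, mul_assoc, Units.inv_mul_cancel_left]
  have hCJ : C ≤ J := by
    intro c hc
    obtain ⟨r, hr, h⟩ := htr' _ (hcj c hc) j hjJ
    have : c = r := inj (by rw [← h, hu', mul_assoc, Units.inv_mul, mul_one])
    rw [this]; exact hr
  have hcases : J = maximalIdeal R ∨ J ⋖ maximalIdeal R ∨ J = C ∨ C ⋖ J := by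
    by_contra! hcon
    obtain ⟨h1, h2, h3, h4⟩ := hcon
    have hlt1 : J < maximalIdeal R := lt_of_le_of_ne hJm h1
    have hlt2 : C < J := lt_of_le_of_ne hCJ (Ne.symm h3)
    obtain ⟨D, hD1, hD2⟩ := (not_covBy_iff hlt1).mp h2
    obtain ⟨E, hE1, hE2⟩ := (not_covBy_iff hlt2).mp h4
    have hmt : maximalIdeal R < ⊤ := lt_top_iff_ne_top.mpr (maximalIdeal.isMaximal R).ne_top
    have hmap : ∀ A B : Ideal R, C ≤ A → A < B →
        Submodule.map C.mkQ A < Submodule.map C.mkQ B := by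
      intro A B hA hAB
      refine lt_of_le_of_ne (Submodule.map_mono hAB.le) ?_
      intro h
      have h' := congrArg (Submodule.comap C.mkQ) h
      rw [Submodule.comap_map_mkQ, Submodule.comap_map_mkQ, sup_eq_right.mpr hA,
        sup_eq_right.mpr (hA.trans hAB.le)] at h'
      exact hAB.ne h'
    have hCE := hE1.le
    have hCJ := hlt2.le
    have hCD := hCJ.trans hD1.le
    let s : LTSeries (Submodule R (R ⧸ C)) :=
      { length := 5
        toFun := ![Submodule.map C.mkQ C, Submodule.map C.mkQ E, Submodule.map C.mkQ J,
          Submodule.map C.mkQ D, Submodule.map C.mkQ (maximalIdeal R), Submodule.map C.mkQ ⊤]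
        step := by
          intro i
          fin_cases i
          · exact hmap _ _ le_rfl hE1
          · exact hmap _ _ hCE hE2
          · exact hmap _ _ hCJ hD1
          · exact hmap _ _ hCD hD2
          · exact hmap _ _ (hCD.trans hD2.le) hmt }
    have h5 := Order.LTSeries.length_le_krullDim s
    rw [hlen'] at h5
    have h6 : ((5 : ℕ) : WithBot ℕ∞) ≤ 4 := h5
    exact absurd h6 (by decide)
  apply aux_reflexive (K := FractionRing R) J haJ ha
  intro z hz
  -- z is not a unit
  have hzm : z ∈ maximalIdeal R := by
    by_contra hzm
    have hzu : IsUnit z := by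
      by_contra h
      exact hzm ((mem_maximalIdeal _).mpr h)
    obtain ⟨v, hv⟩ := IsLocalization.map_units (FractionRing R) (⟨x, hx⟩ : nonZeroDivisors R)
    have hv' : algebraMap R (FractionRing R) x = v := hv.symm
    apply hnonreg
    refine ⟨x, le_antisymm ?_ ?_⟩
    · intro y hy
      obtain ⟨r, hr⟩ := hz (algebraMap R (FractionRing R) y * (↑v⁻¹ : FractionRing R)) (by
        intro w hw
        have : y * w ∈ Ideal.span {x} * maximalIdeal R := by
          rw [← hmm, sq]; exact Ideal.mul_mem_mul hy (hJm hw)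
        obtain ⟨t, ht, h⟩ := Ideal.mem_span_singleton_mul.mp this
        refine ⟨t, ?_⟩
        rw [mul_right_comm, ← map_mul, ← h, map_mul, hv', mul_right_comm, Units.mul_inv, one_mul])
      have h1 : y * z = r * x := by
        apply inj
        rw [map_mul, map_mul, ← hr, hv', mul_right_comm, mul_assoc _ (↑v⁻¹ : FractionRing R),
          Units.inv_mul, mul_one]
      have h2 : y * z ∈ Ideal.span {x} := Ideal.mem_span_singleton'.mpr ⟨r, h1.symm⟩
      exact (Ideal.mul_unit_mem_iff_mem _ hzu).mp h2
    · rw [Submodule.span_le]; simpa using hxm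
  rcases hcases with h | h | h | h
  · rw [h]; exact hzm
  · exact aux_case2 hnonreg hxm hx hmm J h htr' z hzm hz
  · rw [h, hC]
    intro s hs
    obtain ⟨r, hr⟩ := hz s (by
      intro y hy
      rw [h, hC] at hy
      obtain ⟨r, hr⟩ := hy s hs
      exact ⟨r, by rw [mul_comm, hr]⟩)
    exact ⟨r, by rw [mul_comm, hr]⟩
  · have hjC : j ∉ C := by
      intro hjC
      apply h.lt.not_ge
      intro y hy
      rw [hC]
      intro s hs
      obtain ⟨s', hs', h'⟩ := hred y hy
      obtain ⟨r, hr⟩ := (hC j).mp hjC (s' * s) (mul_mem hs' hs)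
      exact ⟨r, by rw [← hr, h']; ring⟩
    have hsup : C ⊔ Ideal.span {j} = J := by
      have h1 : C < C ⊔ Ideal.span {j} := by
        refine lt_of_le_of_ne le_sup_left ?_
        intro h
        apply hjC
        rw [h]
        exact Ideal.mem_sup_right (Ideal.mem_span_singleton_self j)
      have h2 : C ⊔ Ideal.span {j} ≤ J := sup_le h.le (by
        rw [Ideal.span_le]; simpa using hjJ)
      exact (h.eq_or_eq h1.le h2).resolve_left h1.ne'
    have hyj : ∀ y ∈ J, ∀ w ∈ J, ∃ r,
        (algebraMap R (FractionRing R) y * (↑u⁻¹ : FractionRing R)) *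
          algebraMap R (FractionRing R) w = algebraMap R (FractionRing R) r := by
      intro y hy w hw
      rw [← hsup] at hy
      obtain ⟨c, hc, b, hb, rfl⟩ := Submodule.mem_sup.mp hy
      obtain ⟨d, rfl⟩ := Ideal.mem_span_singleton'.mp hb
      obtain ⟨r, hr⟩ := hcj c hc w hw
      refine ⟨r + d * w, ?_⟩
      rw [map_add, map_mul, add_mul, add_mul, hr, hu', mul_assoc _ (u : FractionRing R),
        Units.mul_inv, mul_one, map_add, map_mul]
    obtain ⟨r, hr, h'⟩ := htr' (algebraMap R (FractionRing R) z * (↑u⁻¹ : FractionRing R)) (by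
      intro y hy
      obtain ⟨r, hr⟩ := hz _ (hyj y hy)
      exact ⟨r, by rw [← hr]; ring⟩) j hjJ
    have : z = r := inj (by rw [← h', hu', mul_assoc, Units.inv_mul, mul_one])
    rw [this]; exact hr
end

section
/- Let R be a reduced local Cohen–Macaulay ring and S a finite birational extension of R (R ⊆ S ⊆ Q, S module-finite over R). Then tr_R(S) = tr_R(S*) = tr_R(S**) = S*, where S* = Hom_R(S,R) is identified with the conductor R : S. -/
open IsLocalRing

def FracEndo (R : Type*) [CommRing R] (S : Subalgebra R (FractionRing R)) (M : Type*)
    [AddCommGroup M] [Module R M] : Prop :=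
  ∀ s ∈ S, ∃ T : M →ₗ[R] M, ∀ a b : R,
    algebraMap R (FractionRing R) b * s = algebraMap R (FractionRing R) a →
      ∀ m, b • T m = a • m

theorem FracEndo.self (R : Type*) [CommRing R] (S : Subalgebra R (FractionRing R)) :
    FracEndo R S ↥S := by
  intro s hs
  refine ⟨LinearMap.mulLeft R (⟨s, hs⟩ : S), fun a b h m => ?_⟩
  apply Subtype.ext
  simp only [LinearMap.mulLeft_apply, Subalgebra.coe_smul, Subalgebra.coe_mul]
  rw [Algebra.smul_def, Algebra.smul_def]
  rw [← mul_assoc, h]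

theorem FracEndo.dual {R : Type*} [CommRing R] {S : Subalgebra R (FractionRing R)} {M : Type*}
    [AddCommGroup M] [Module R M] (h : FracEndo R S M) : FracEndo R S (Module.Dual R M) := by
  intro s hs
  obtain ⟨T, hT⟩ := h s hs
  refine ⟨T.dualMap, fun a b hab f => ?_⟩
  ext m
  simp only [LinearMap.smul_apply, LinearMap.dualMap_apply, ← map_smul, hT a b hab m]

theorem FracEndo.trace_le {R : Type*} [CommRing R] {S : Subalgebra R (FractionRing R)} {M : Type*}
    [AddCommGroup M] [Module R M] (h : FracEndo R S M) :
    traceIdeal R M ≤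
      Submodule.colon (1 : Submodule R (FractionRing R)) (Subalgebra.toSubmodule S) := by
  refine iSup_le fun g => ?_
  rintro _ ⟨m, rfl⟩
  rw [Submodule.mem_colon]
  intro s hs
  obtain ⟨T, hT⟩ := h s hs
  obtain ⟨⟨a, b⟩, hab⟩ := IsLocalization.surj (nonZeroDivisors R) s
  have hab' : algebraMap R (FractionRing R) b * s = algebraMap R (FractionRing R) a := by
    rw [mul_comm]; exact hab
  have h1 : (b : R) * g (T m) = a * g m := by
    simpa using congrArg g (hT a b hab' m)
  rw [Submodule.mem_one]
  refine ⟨g (T m), ?_⟩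
  have hu := IsLocalization.map_units (FractionRing R) b
  apply hu.mul_left_cancel
  rw [← map_mul, h1, map_mul, ← hab', Algebra.smul_def]
  ring

theorem traceIdeal_le_dual (R : Type*) [CommRing R] (M : Type*)
    [AddCommGroup M] [Module R M] : traceIdeal R M ≤ traceIdeal R (Module.Dual R M) := by
  refine iSup_le fun g => ?_
  rintro _ ⟨m, rfl⟩
  exact Submodule.mem_iSup_of_mem (Module.Dual.eval R M m) ⟨g, rfl⟩

theorem colon_le_trace (R : Type*) [CommRing R] (S : Subalgebra R (FractionRing R)) :
    Submodule.colon (1 : Submodule R (FractionRing R)) (Subalgebra.toSubmodule S) ≤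
      traceIdeal R ↥S := by
  intro c hc
  rw [Submodule.mem_colon] at hc
  have hc' : ∀ s : S, ∃ r : R, algebraMap R (FractionRing R) r = c • (s : FractionRing R) :=
    fun s => Submodule.mem_one.1 (hc s s.2)
  choose f hf using hc'
  have inj := IsFractionRing.injective R (FractionRing R)
  let F : S →ₗ[R] R :=
    { toFun := f
      map_add' := fun x y => inj (by simp [hf])
      map_smul' := fun r x => inj (by
        simp only [hf, map_mul, smul_eq_mul, RingHom.id_apply, Subalgebra.coe_smul]
        simp only [Algebra.smul_def]
        ring) }
  refine Submodule.mem_iSup_of_mem F ⟨1, inj ?_⟩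
  change algebraMap R (FractionRing R) (f 1) = _
  rw [hf, Algebra.smul_def]
  simp

set_option synthInstance.maxHeartbeats 800000 in
/-- Let `R` be a reduced local Cohen–Macaulay ring and `S` a finite
birational extension of `R` (`R ⊆ S ⊆ Q`, `S` module-finite over `R`).  Then
`tr_R(S) = tr_R(S*) = tr_R(S**) = S*`, where `S* = Hom_R(S,R)` is identified with the
conductor `R : S = {r ∈ R | rS ⊆ R}`. -/
theorem trace_of_birational_extension
    (R : Type*) [CommRing R] [IsNoetherianRing R] [IsLocalRing R] [IsReduced R]
    (hCM : IsCohenMacaulayLocalRing R)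
    (S : Subalgebra R (FractionRing R)) (hfin : Module.Finite R ↥S) :
    traceIdeal R ↥S =
        Submodule.colon (1 : Submodule R (FractionRing R)) (Subalgebra.toSubmodule S) ∧
      traceIdeal R (Module.Dual R ↥S) = traceIdeal R ↥S ∧
      traceIdeal R (Module.Dual R (Module.Dual R ↥S)) = traceIdeal R ↥S := by
  have e := FracEndo.self R S
  have h0 := colon_le_trace R S
  have h1 := traceIdeal_le_dual R ↥S
  have h2 := traceIdeal_le_dual R (Module.Dual R ↥S)
  exact ⟨le_antisymm e.trace_le h0, le_antisymm (e.dual.trace_le.trans h0) h1,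
    le_antisymm (e.dual.dual.trace_le.trans h0) (h1.trans h2)⟩
end
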